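/- There exist absolute constants C > 0 and c ≥ 0 such that the following holds. Let p be an odd prime, let g₁, h₁, g₂, h₂ : 𝔽_p* → 𝔽_p* be arbitrary functions, and define f₁(x,y) = g₁(x)(h₁(x)+y) and f₂(x,y) = g₂(x)(h₂(x)+y) on 𝔽_p* × 𝔽_p*. Suppose m = μ(g₁) = μ(g₂). Then for all nonempty finite subsets A, B, C, D ⊆ 𝔽_p* with |A| ≤ |B| ≤ p^{3/5} and |D| ≤ |C| ≤ p^{3/5}, one has max{|f₁(A,B)|, |f₂(D,C)|, |B+C|} ≥ C · (log(2|B|))^{−c} · |C|^{5/18} |B|^{13/18} |A|^{1/6} |D|^{1/18} / m^{8/9}. -/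

import Mathlib

/-!
Suppose that `S = f₁(A, B)`, `T = f₂(D, C)` and `B + C` all have at most `M` elements. After passing
to large subsets of `A` and `D` on which `g₁` and `g₂` are injective, the relation
`g₁ a * (h₁ a + b) ∈ S` provides many affine maps sending `S` to translates of `B`, and many sending
the differences of `B` to `S`. Coincidences between values of such maps are incidences between two
families of lines of 3-space, each parallel to a coordinate plane, after replacing the field by
`F(X)` to put the lines in general position.

These incidences are counted by the polynomial method: a polynomial of low degree vanishes on the
lines of one family, and its irreducible factors are treated one at a time. Restricting a factor to
a line on which it vanishes shows that a bordered Hessian vanishes there too, so either few lines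
lie on the factor or the factor divides both of its bordered Hessians. In the latter case, in
characteristic larger than the degree, the surface is a graph whose second derivatives in each
variable are zero, that is, a bilinear quadric, on which all lines of one family meet all those of
the other.

The outcome is a bound for the additive energies `E[B, X]` and for the fourth moments of the
numbers of representations as a difference of two elements of `B`, and likewise for `C`. The two
are linked by popular sums. For popular `P ⊆ B + C`, almost every `c` has `b + c ∈ P` for most
`b`, so a difference of elements of `C` is shifted by most `b` to a difference of elements of
`P`. Energies bound the number of the latter, and Hölder's inequality compares with the mixed
fourth moment of the differences of `B` and `C`. This loses nothing more than logarithms if `C`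
is replaced by a subset on which the weak `L^{4/3}` norm of the difference counts is stable
under removing few elements.
-/

open Finset Pointwise

/-- `mu g` is `max_{t ∈ 𝔽_p*} |{x ∈ 𝔽_p* : g x = t}|`. -/
def mu {p : ℕ} [NeZero p] (g : ZMod p → ZMod p) : ℕ :=
  Finset.sup (Finset.univ.filter fun t : ZMod p => t ≠ 0)
    (fun t => (Finset.univ.filter fun x : ZMod p => x ≠ 0 ∧ g x = t).card)

namespace TwoFunctionSum

/-! ### Polynomials: derivatives, vanishing, elimination -/

section Polynomials

open MvPolynomial
open scoped Polynomial

section CommSemiring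

variable {R σ A : Type*} [CommSemiring R]

theorem derivation_aeval [CommSemiring A] [Algebra R A] [Fintype σ] (D : Derivation R A A)
    (f : σ → A) (F : MvPolynomial σ R) :
    D (aeval f F) = ∑ k, aeval f (pderiv k F) * D (f k) := by
  classical
  induction F using MvPolynomial.induction_on with
  | C a => simp
  | add P Q hP hQ => simp [hP, hQ, add_mul, sum_add_distrib]
  | mul_X P n hP =>
    have hX : ∑ k, aeval f P * Pi.single (M := fun _ => A) k 1 n * D (f k) =
        aeval f P * D (f n) := by
      simp [Pi.single_apply, Finset.sum_ite_eq]
    simp only [map_mul, aeval_X, Derivation.leibniz, hP, smul_eq_mul, pderiv_X, map_add, add_mul,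
      sum_add_distrib, mul_sum, Pi.single_apply, apply_ite (aeval f), map_one, map_zero] at hX ⊢
    rw [hX]
    exact congrArg _ (sum_congr rfl fun k _ => by ring)

theorem totalDegree_pderiv_le (k : σ) (F : MvPolynomial σ R) :
    (pderiv k F).totalDegree ≤ F.totalDegree := by
  classical
  conv_lhs => rw [F.as_sum, map_sum]
  refine totalDegree_finsetSum_le fun d hd => ?_
  rw [pderiv_monomial]
  exact (totalDegree_monomial_le _ _).trans
    ((Finsupp.degree_mono tsub_le_self).trans (le_totalDegree hd))

theorem aeval_cons [CommSemiring A] [Algebra R A] {n : ℕ} (a : A) (f : Fin n → A)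
    (F : MvPolynomial (Fin (n + 1)) R) :
    aeval (Fin.cons a f : Fin (n + 1) → A) F =
      Polynomial.eval₂ (aeval (R := R) f).toRingHom a (finSuccEquiv R n F) := by
  induction F using MvPolynomial.induction_on with
  | C r => simp [finSuccEquiv_apply]
  | add P Q hP hQ => simp only [map_add, hP, hQ, Polynomial.eval₂_add]
  | mul_X P k hP =>
    rw [map_mul, hP, map_mul, Polynomial.eval₂_mul, aeval_X]
    congr 1
    cases k using Fin.cases with
    | zero => simp [finSuccEquiv_X_zero]
    | succ k => simp [finSuccEquiv_X_succ]

theorem finSuccEquiv_pderiv_zero {n : ℕ} (F : MvPolynomial (Fin (n + 1)) R) :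
    finSuccEquiv R n (pderiv 0 F) = Polynomial.derivative (finSuccEquiv R n F) := by
  induction F using MvPolynomial.induction_on with
  | C a => simp [finSuccEquiv_apply]
  | add P Q hP hQ => simp [hP, hQ]
  | mul_X P k hP =>
    rw [Derivation.leibniz, map_add, smul_eq_mul, smul_eq_mul, map_mul, map_mul, hP, map_mul,
      Polynomial.derivative_mul]
    cases k using Fin.cases with
    | zero => simp [finSuccEquiv_X_zero]; ring
    | succ k => simp [finSuccEquiv_X_succ, pderiv_X_of_ne (Fin.succ_ne_zero k)]; ring

end CommSemiring

section CommRing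

variable {R σ : Type*} [CommRing R]

theorem pderiv_pderiv_comm (i j : σ) (F : MvPolynomial σ R) :
    pderiv i (pderiv j F) = pderiv j (pderiv i F) := by
  classical
  have h : ⁅pderiv (R := R) i, pderiv j⁆ = 0 := derivation_ext fun k => by
    rw [Derivation.commutator_apply, pderiv_X, pderiv_X, Pi.single_apply, Pi.single_apply]
    split_ifs <;> simp
  exact sub_eq_zero.1 (congrArg (fun D => D F) h)

/-- The bordered Hessian (up to sign) of `F` in the variables `i`, `j`: the second derivative of `F`
along the tangent of its level curve in the `(i, j)`-plane. It vanishes along lines of that plane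
contained in the zero set of `F`. -/
noncomputable def borderedHessian (i j : σ) (F : MvPolynomial σ R) : MvPolynomial σ R :=
  pderiv j (pderiv j F) * pderiv i F ^ 2 - 2 * pderiv i (pderiv j F) * pderiv j F * pderiv i F +
    pderiv i (pderiv i F) * pderiv j F ^ 2

theorem totalDegree_borderedHessian_le (i j : σ) (F : MvPolynomial σ R) :
    (borderedHessian i j F).totalDegree ≤ 3 * F.totalDegree := by
  have mul_le {P Q : MvPolynomial σ R} {s t : ℕ} (hP : P.totalDegree ≤ s)
      (hQ : Q.totalDegree ≤ t) : (P * Q).totalDegree ≤ s + t :=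
    (totalDegree_mul _ _).trans (Nat.add_le_add hP hQ)
  have first (k : σ) := totalDegree_pderiv_le k F
  have second (k l : σ) : (pderiv k (pderiv l F)).totalDegree ≤ F.totalDegree :=
    (totalDegree_pderiv_le _ _).trans (totalDegree_pderiv_le _ _)
  have square (k : σ) : (pderiv k F ^ 2).totalDegree ≤ F.totalDegree + F.totalDegree := by
    rw [sq]; exact mul_le (first k) (first k)
  have two : (2 : MvPolynomial σ R).totalDegree ≤ 0 := by
    rw [← map_ofNat C 2, totalDegree_C]
  refine (totalDegree_add _ _).trans (max_le ((totalDegree_sub _ _).trans (max_le ?_ ?_)) ?_)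
  · exact (mul_le (second _ _) (square _)).trans (by omega)
  · exact (mul_le (mul_le (mul_le two (second _ _)) (first _)) (first _)).trans (by omega)
  · exact (mul_le (second _ _) (square _)).trans (by omega)

theorem totalDegree_resultant_le (P Q : Polynomial (MvPolynomial σ R)) (m n d e : ℕ)
    (hP : ∀ i, (P.coeff i).totalDegree ≤ d) (hQ : ∀ i, (Q.coeff i).totalDegree ≤ e) :
    (Polynomial.resultant P Q m n).totalDegree ≤ n * d + m * e := by
  rw [Polynomial.resultant, Matrix.det_apply]
  refine totalDegree_finsetSum_le fun s _ => ?_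
  have sign_smul (T : MvPolynomial σ R) :
      (Equiv.Perm.sign s • T).totalDegree = T.totalDegree := by
    rcases Int.units_eq_one_or (Equiv.Perm.sign s) with h | h <;> simp [h]
  rw [sign_smul]
  refine (totalDegree_finsetProd _ _).trans ?_
  rw [Fin.sum_univ_add, add_comm]
  refine Nat.add_le_add ((sum_le_card_nsmul _ _ d fun i _ => ?_).trans (by simp))
    ((sum_le_card_nsmul _ _ e fun i _ => ?_).trans (by simp))
  · simp only [Polynomial.sylvester, Matrix.of_apply, Fin.addCases_right]
    split_ifs <;> simp [hP]
  · simp only [Polynomial.sylvester, Matrix.of_apply, Fin.addCases_left]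
    split_ifs <;> simp [hQ]

end CommRing

section Field

variable {K : Type*} [Field K]

theorem exists_ne_zero_of_finrank_lt_card {σ W : Type*} [AddCommGroup W] [Module K W]
    [FiniteDimensional K W] (E : Finset (σ →₀ ℕ)) (ψ : MvPolynomial σ K →ₗ[K] W)
    (h : Module.finrank K W < #E) : ∃ F ≠ 0, F.support ⊆ E ∧ ψ F = 0 := by
  classical
  let b := basisRestrictSupport K (E : Set (σ →₀ ℕ))
  have : FiniteDimensional K (restrictSupport K (E : Set (σ →₀ ℕ))) := b.finiteDimensional_of_finite
  have hker : LinearMap.ker (ψ.domRestrict (restrictSupport K (E : Set (σ →₀ ℕ)))) ≠ ⊥ := by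
    apply LinearMap.ker_ne_bot_of_finrank_lt
    simpa [Module.finrank_eq_card_basis b] using h
  obtain ⟨F, hF, hF0⟩ := (Submodule.ne_bot_iff _).1 hker
  refine ⟨F, fun h0 => hF0 (Subtype.ext h0), ?_, hF⟩
  exact_mod_cast (mem_restrictSupport_iff K).1 F.2

theorem card_le_totalDegree_of_aeval_cons_eq_zero {A : Type*} [CommRing A] [Algebra K A] {n : ℕ}
    {f : Fin n → A} (hf : AlgebraicIndependent K f) {F : MvPolynomial (Fin (n + 1)) K} (hF : F ≠ 0)
    (Y : Finset K) (h : ∀ y ∈ Y, aeval (Fin.cons (algebraMap K A y) f : Fin (n + 1) → A) F = 0) :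
    #Y ≤ F.totalDegree := by
  classical
  have hF' : finSuccEquiv K n F ≠ 0 := by simpa using hF
  have hroot (y : K) (hy : y ∈ Y) : (finSuccEquiv K n F).eval (C y) = 0 := by
    have hy' := h y hy
    rw [aeval_cons, ← algHom_C (aeval f), ← AlgHom.coe_toRingHom,
      ← AlgHom.toRingHom_eq_coe, Polynomial.eval₂_at_apply] at hy'
    exact (map_eq_zero_iff _ hf).1 hy'
  have hsub : Y.image C ⊆ (finSuccEquiv K n F).roots.toFinset := by
    intro c hc
    obtain ⟨y, hy, rfl⟩ := mem_image.1 hc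
    exact Multiset.mem_toFinset.2 ((Polynomial.mem_roots hF').2 (hroot y hy))
  calc #Y = #(Y.image (C : K → MvPolynomial (Fin n) K)) :=
        (card_image_of_injective _ (C_injective _ _)).symm
    _ ≤ #(finSuccEquiv K n F).roots.toFinset := card_le_card hsub
    _ ≤ (finSuccEquiv K n F).natDegree :=
        (Multiset.toFinset_card_le _).trans (Polynomial.card_roots' _)
    _ ≤ F.totalDegree := by
        rw [natDegree_finSuccEquiv]
        exact degreeOf_le_totalDegree F 0

theorem resultant_finSuccEquiv_ne_zero {n : ℕ} {F G : MvPolynomial (Fin (n + 1)) K}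
    (hF : Irreducible F) (hdeg : (finSuccEquiv K n F).natDegree ≠ 0) (hFG : ¬ F ∣ G) :
    Polynomial.resultant (finSuccEquiv K n F) (finSuccEquiv K n G) ≠ 0 := by
  let : NormalizedGCDMonoid (MvPolynomial (Fin n) K) := Classical.choice inferInstance
  set P := finSuccEquiv K n F
  set Q := finSuccEquiv K n G
  let ι := algebraMap (MvPolynomial (Fin n) K) (FractionRing (MvPolynomial (Fin n) K))
  have hι : Function.Injective ι := IsFractionRing.injective _ _
  have hP : Irreducible P := (MulEquiv.irreducible_iff (finSuccEquiv K n)).2 hF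
  have hprim : P.IsPrimitive := hP.isPrimitive hdeg
  have hPQ : ¬ P.map ι ∣ Q.map ι := fun hd =>
    hFG ((map_dvd_iff (finSuccEquiv K n)).1 (hprim.dvd_of_fraction_map_dvd_fraction_map hd))
  have hcop : IsCoprime (P.map ι) (Q.map ι) :=
    (hprim.irreducible_iff_irreducible_map_fraction_map.1 hP).coprime_iff_not_dvd.2 hPQ
  have hres := Polynomial.resultant_ne_zero _ _ hcop
  rw [Polynomial.natDegree_map_eq_of_injective hι, Polynomial.natDegree_map_eq_of_injective hι,
    Polynomial.resultant_map_map] at hres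
  exact ne_zero_of_map hres

theorem totalDegree_resultant_finSuccEquiv_le {n : ℕ} (F G : MvPolynomial (Fin (n + 1)) K) :
    (Polynomial.resultant (finSuccEquiv K n F) (finSuccEquiv K n G)).totalDegree ≤
      2 * F.totalDegree * G.totalDegree := by
  have coeff_le (P : MvPolynomial (Fin (n + 1)) K) (i : ℕ) :
      ((finSuccEquiv K n P).coeff i).totalDegree ≤ P.totalDegree := by
    by_cases hi : (finSuccEquiv K n P).coeff i = 0
    · simp [hi]
    · exact (Nat.le_add_right _ _).trans (totalDegree_coeff_finSuccEquiv_add_le P i hi)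
  have natDegree_le (P : MvPolynomial (Fin (n + 1)) K) :
      (finSuccEquiv K n P).natDegree ≤ P.totalDegree := by
    rw [natDegree_finSuccEquiv]
    exact degreeOf_le_totalDegree _ _
  refine (totalDegree_resultant_le _ _ _ _ _ _ (coeff_le F) (coeff_le G)).trans ?_
  have := Nat.mul_le_mul_right G.totalDegree (natDegree_le F)
  have := Nat.mul_le_mul_right F.totalDegree (natDegree_le G)
  linarith

theorem aeval_resultant_eq_zero {A : Type*} [CommRing A] [Algebra K A] {n : ℕ}
    {F G : MvPolynomial (Fin (n + 1)) K} (hdeg : (finSuccEquiv K n F).natDegree ≠ 0)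
    {a : A} {f : Fin n → A} (hF : aeval (Fin.cons a f : Fin (n + 1) → A) F = 0)
    (hG : aeval (Fin.cons a f : Fin (n + 1) → A) G = 0) :
    aeval f (Polynomial.resultant (finSuccEquiv K n F) (finSuccEquiv K n G)) = 0 := by
  obtain ⟨P, Q, -, -, hPQ⟩ := Polynomial.exists_mul_add_mul_eq_C_resultant
    (finSuccEquiv K n F) (finSuccEquiv K n G) le_rfl le_rfl (Or.inl hdeg)
  rw [aeval_cons] at hF hG
  have h := congrArg (Polynomial.eval₂ (aeval (R := K) f).toRingHom a) hPQ
  rw [Polynomial.eval₂_add, Polynomial.eval₂_mul, Polynomial.eval₂_mul, hF, hG,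
    Polynomial.eval₂_C] at h
  simpa using h.symm

theorem not_dvd_pderiv_zero (p : ℕ) [CharP K p] {n : ℕ} {F : MvPolynomial (Fin (n + 1)) K}
    (hdeg : (finSuccEquiv K n F).natDegree ≠ 0) (hp : F.totalDegree < p) : ¬ F ∣ pderiv 0 F := by
  rw [← map_dvd_iff (finSuccEquiv K n), finSuccEquiv_pderiv_zero]
  set P := finSuccEquiv K n F
  intro hdvd
  have hlt : P.natDegree < p := by
    rw [natDegree_finSuccEquiv]
    exact (degreeOf_le_totalDegree _ _).trans_lt hp
  have hderiv : Polynomial.derivative P ≠ 0 := by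
    obtain ⟨m, hm⟩ := Nat.exists_eq_add_one_of_ne_zero hdeg
    intro h0
    have hcoeff := Polynomial.coeff_derivative P m
    rw [h0, Polynomial.coeff_zero, ← Nat.cast_add_one, ← hm, Polynomial.coeff_natDegree, eq_comm,
      mul_eq_zero, Polynomial.leadingCoeff_eq_zero, CharP.cast_eq_zero_iff _ p] at hcoeff
    rcases hcoeff with h | h
    · simp [h] at hdeg
    · exact absurd (Nat.le_of_dvd (Nat.pos_of_ne_zero hdeg) h) hlt.not_ge
  exact absurd (Polynomial.natDegree_le_of_dvd hdvd hderiv)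
    (Polynomial.natDegree_derivative_lt hdeg).not_ge

end Field

end Polynomials

/-! ### Lines in coordinate planes -/

section Lines

open MvPolynomial
open scoped Polynomial

variable {K : Type*}

/-- A line of 3-space with coordinates `(z, x₀, x₁)`. In the direction `k : Fin 2` it is the graph
`z = slope * xₖ + intercept` in the plane where the other one of `x₀`, `x₁` equals `base`. -/
structure Line (K : Type*) where
  base : K
  slope : K
  intercept : K
  deriving DecidableEq

namespace Line

variable [Field K]

/-- `ℓ.Meets m` says that the line `ℓ` in direction `0` and the line `m` in direction `1` have a
common point. -/
def Meets (ℓ m : Line K) : Prop :=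
  m.slope * ℓ.base + m.intercept = ℓ.slope * m.base + ℓ.intercept

instance [DecidableEq K] (ℓ m : Line K) : Decidable (ℓ.Meets m) :=
  inferInstanceAs (Decidable (_ = _))

/-- The coordinates of the points of the line `ℓ` in direction `k`, as polynomials in `xₖ`. -/
noncomputable def coords (k : Fin 2) (ℓ : Line K) : Fin 3 → K[X] :=
  Fin.cons (Polynomial.C ℓ.slope * Polynomial.X + Polynomial.C ℓ.intercept)
    (Function.update (fun _ => Polynomial.C ℓ.base) k Polynomial.X)

/-- Restriction of polynomial functions on 3-space to the line `ℓ` in direction `k`. -/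
noncomputable def restrict (k : Fin 2) (ℓ : Line K) : MvPolynomial (Fin 3) K →ₐ[K] K[X] :=
  aeval (ℓ.coords k)

theorem eval_restrict (k : Fin 2) (ℓ : Line K) (F : MvPolynomial (Fin 3) K) (t : K) :
    (ℓ.restrict k F).eval t =
      eval (Fin.cons (ℓ.slope * t + ℓ.intercept) (Function.update (fun _ => ℓ.base) k t) :
        Fin 3 → K) F := by
  have h : (Polynomial.aeval t).comp (ℓ.restrict k) =
      aeval (Fin.cons (ℓ.slope * t + ℓ.intercept) (Function.update (fun _ => ℓ.base) k t)) :=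
    algHom_ext fun i => by
      cases i using Fin.cases with
      | zero => simp [restrict, coords, -Fin.cons_update]
      | succ i => rcases eq_or_ne i k with rfl | hi <;> simp [restrict, coords, *]
  exact DFunLike.congr_fun h F

theorem Meets.eval_restrict_eq {ℓ m : Line K} (h : ℓ.Meets m) (F : MvPolynomial (Fin 3) K) :
    (ℓ.restrict 0 F).eval m.base = (m.restrict 1 F).eval ℓ.base := by
  rw [eval_restrict, eval_restrict, show _ = _ from h]
  congr 2
  funext i
  fin_cases i <;> rfl

theorem natDegree_restrict_le (k : Fin 2) (ℓ : Line K) (F : MvPolynomial (Fin 3) K) :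
    (ℓ.restrict k F).natDegree ≤ F.totalDegree := by
  rw [← mul_one F.totalDegree]
  refine aeval_natDegree_le F le_rfl _ fun i => ?_
  cases i using Fin.cases with
  | zero => exact Polynomial.natDegree_linear_le
  | succ i =>
    rw [coords, Fin.cons_succ, Function.update_apply]
    split_ifs <;> simp

theorem derivative_restrict (k : Fin 2) (ℓ : Line K) (F : MvPolynomial (Fin 3) K) :
    Polynomial.derivative (ℓ.restrict k F) =
      ℓ.restrict k (pderiv 0 F) * Polynomial.C ℓ.slope + ℓ.restrict k (pderiv k.succ F) := by
  have h := derivation_aeval (R := K) Polynomial.derivative' (ℓ.coords k) F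
  rw [Fin.sum_univ_succ, Fintype.sum_eq_single k fun i hi => by simp [coords, hi]] at h
  simpa [restrict, coords, Polynomial.derivative', -Fin.cons_update] using h

theorem restrict_borderedHessian_eq_zero {k : Fin 2} {ℓ : Line K} {F : MvPolynomial (Fin 3) K}
    (h : ℓ.restrict k F = 0) : ℓ.restrict k (borderedHessian 0 k.succ F) = 0 := by
  have first : ℓ.restrict k (pderiv k.succ F) =
      -(ℓ.restrict k (pderiv 0 F) * Polynomial.C ℓ.slope) := by
    have h₁ := derivative_restrict k ℓ F
    rw [h, map_zero] at h₁
    linear_combination -h₁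
  have second := derivative_restrict k ℓ (pderiv k.succ F)
  rw [first, Polynomial.derivative_neg, Polynomial.derivative_mul, Polynomial.derivative_C,
    derivative_restrict, pderiv_pderiv_comm k.succ 0] at second
  simp only [borderedHessian, map_add, map_sub, map_mul, map_pow, map_ofNat, first]
  linear_combination -(ℓ.restrict k (pderiv 0 F)) ^ 2 * second

theorem Meets.eval_restrict_borderedHessian_eq_zero {F : MvPolynomial (Fin 3) K} {ℓ m : Line K}
    (h : ℓ.Meets m) (hℓ : ℓ.restrict 0 F = 0) (hm : m.restrict 1 F = 0) (k : Fin 2) :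
    (m.restrict 1 (borderedHessian 0 k.succ F)).eval ℓ.base = 0 := by
  fin_cases k
  · rw [← h.eval_restrict_eq]
    exact congrArg (Polynomial.eval m.base) (restrict_borderedHessian_eq_zero hℓ) |>.trans
      Polynomial.eval_zero
  · exact congrArg (Polynomial.eval ℓ.base) (restrict_borderedHessian_eq_zero hm) |>.trans
      Polynomial.eval_zero

theorem exists_ne_zero_restrict_eq_zero (k : Fin 2) (I : Finset (Line K)) (d : ℕ)
    (hd : 3 * #I ≤ (d + 1) ^ 2) :
    ∃ F : MvPolynomial (Fin 3) K, F ≠ 0 ∧ F.totalDegree ≤ 3 * d ∧ ∀ ℓ ∈ I, ℓ.restrict k F = 0 := by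
  let box : Finset (Fin 3 →₀ ℕ) := Iic (Finsupp.equivFunOnFinite.symm fun _ => d)
  let ψ : MvPolynomial (Fin 3) K →ₗ[K] I × Fin (3 * d + 1) → K :=
    LinearMap.pi fun q => Polynomial.lcoeff K q.2 ∘ₗ (q.1.1.restrict k).toLinearMap
  have hbox : #box = (d + 1) ^ 3 := by
    rw [Finsupp.card_Iic, prod_subset (subset_univ _)]
    · simp
    · intro i _ hi
      simp_all
  obtain ⟨F, hF, hsupp, hψ⟩ := exists_ne_zero_of_finrank_lt_card box ψ (by
    rw [Module.finrank_fintype_fun_eq_card, Fintype.card_prod, Fintype.card_coe, Fintype.card_fin,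
      hbox]
    nlinarith)
  have hdeg : F.totalDegree ≤ 3 * d := by
    refine Finset.sup_le fun s hs => ?_
    have hs' := mem_Iic.1 (hsupp hs)
    calc s.sum (fun _ => id) = ∑ i, s i := s.sum_fintype _ fun _ => rfl
      _ ≤ ∑ _i : Fin 3, d := sum_le_sum fun i _ => hs' i
      _ = 3 * d := by simp
  refine ⟨F, hF, hdeg, fun ℓ hℓ => Polynomial.ext fun n => ?_⟩
  by_cases hn : n < 3 * d + 1
  · exact congrFun hψ (⟨ℓ, hℓ⟩, ⟨n, hn⟩)
  · rw [Polynomial.coeff_zero]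
    exact Polynomial.coeff_eq_zero_of_natDegree_lt
      ((natDegree_restrict_le k ℓ F).trans_lt (by omega))

theorem card_le_totalDegree_of_aeval_update_eq_zero {P : MvPolynomial (Fin 2) K} (hP : P ≠ 0)
    {J : Finset (Line K)} (hJ : Set.InjOn base (J : Set (Line K)))
    (h : ∀ ℓ ∈ J, aeval (Function.update (fun _ => Polynomial.C ℓ.base) 1 Polynomial.X) P = 0) :
    #J ≤ P.totalDegree := by
  classical
  have hX : AlgebraicIndependent K fun _ : Fin 1 => (Polynomial.X : K[X]) :=
    algebraicIndependent_unique_type_iff.2 (Polynomial.transcendental_X K)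
  rw [← card_image_of_injOn hJ]
  refine card_le_totalDegree_of_aeval_cons_eq_zero hX hP _ fun y hy => ?_
  obtain ⟨ℓ, hℓ, rfl⟩ := mem_image.1 hy
  rw [← h ℓ hℓ]
  congr 2
  funext i
  fin_cases i <;> rfl

theorem card_le_of_restrict_eq_zero {F G : MvPolynomial (Fin 3) K} (hF : Irreducible F)
    (hdeg : (finSuccEquiv K 2 F).natDegree ≠ 0) (hFG : ¬ F ∣ G) {J : Finset (Line K)}
    (hJ : Set.InjOn base (J : Set (Line K))) (hJF : ∀ ℓ ∈ J, ℓ.restrict 1 F = 0)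
    (hJG : ∀ ℓ ∈ J, ℓ.restrict 1 G = 0) : #J ≤ 2 * F.totalDegree * G.totalDegree :=
  (card_le_totalDegree_of_aeval_update_eq_zero (resultant_finSuccEquiv_ne_zero hF hdeg hFG) hJ
    fun ℓ hℓ => aeval_resultant_eq_zero hdeg (hJF ℓ hℓ) (hJG ℓ hℓ)).trans
      (totalDegree_resultant_finSuccEquiv_le F G)

theorem card_le_of_natDegree_eq_zero {F : MvPolynomial (Fin 3) K} (hF : F ≠ 0)
    (hdeg : (finSuccEquiv K 2 F).natDegree = 0) {J : Finset (Line K)}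
    (hJ : Set.InjOn base (J : Set (Line K))) (hJF : ∀ ℓ ∈ J, ℓ.restrict 1 F = 0) :
    #J ≤ F.totalDegree := by
  have hC := Polynomial.eq_C_of_natDegree_eq_zero hdeg
  have hc : (finSuccEquiv K 2 F).coeff 0 ≠ 0 := fun h0 => hF (by simpa [h0] using hC)
  refine (card_le_totalDegree_of_aeval_update_eq_zero hc hJ fun ℓ hℓ => ?_).trans
    ((Nat.le_add_right _ 0).trans (totalDegree_coeff_finSuccEquiv_add_le F 0 hc))
  have h := hJF ℓ hℓ
  rw [restrict, coords, aeval_cons, hC, Polynomial.eval₂_C] at h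
  exact h

theorem card_le_of_eval_restrict_eq_zero {k : Fin 2} {m : Line K} {F : MvPolynomial (Fin 3) K}
    (hF : m.restrict k F ≠ 0) {I : Finset (Line K)} (hI : Set.InjOn base (I : Set (Line K)))
    (h : ∀ ℓ ∈ I, (m.restrict k F).eval ℓ.base = 0) : #I ≤ F.totalDegree := by
  classical
  rw [← card_image_of_injOn hI]
  refine (Polynomial.card_le_degree_of_subset_roots fun x hx => ?_).trans
    (natDegree_restrict_le k m F)
  obtain ⟨ℓ, hℓ, rfl⟩ := mem_image.1 hx
  exact (Polynomial.mem_roots hF).2 (h ℓ hℓ)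

end Line

end Lines

/-! ### Surfaces ruled in both directions in characteristic `p` -/

section DoublyRuled

open MvPolynomial

variable {K : Type*} [Field K]

/-- The ideal `(Xₖ ^ p)ₖ`: modulo it, in characteristic `p`, a power series and its derivatives are
known below degree `p` in each variable. -/
noncomputable def truncationIdeal (K σ : Type*) [Field K] (p : ℕ) : Ideal (MvPolynomial σ K) :=
  Ideal.span ((fun s => monomial s (1 : K)) '' Set.range fun k => Finsupp.single k p)

section Truncation

variable {σ : Type*} {p : ℕ}

theorem mem_truncationIdeal {f : MvPolynomial σ K} :
    f ∈ truncationIdeal K σ p ↔ ∀ d : σ →₀ ℕ, (∀ k, d k < p) → coeff d f = 0 := by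
  rw [truncationIdeal, mem_ideal_span_monomial_image]
  simp only [Set.exists_range_iff, Finsupp.single_le_iff, mem_support_iff]
  refine forall_congr' fun d => ?_
  rw [← not_imp_not, not_not]
  push Not
  rfl

theorem pderiv_mem_truncationIdeal [CharP K p] (k : σ) {f : MvPolynomial σ K}
    (hf : f ∈ truncationIdeal K σ p) : pderiv k f ∈ truncationIdeal K σ p := by
  classical
  rw [mem_truncationIdeal] at *
  intro d hd
  rw [coeff_pderiv]
  by_cases h : d k + 1 = p
  · have hp : ((d k : K) + 1) = 0 := by exact_mod_cast (congrArg _ h).trans (CharP.cast_eq_zero K p)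
    rw [hp, mul_zero]
  · rw [hf, zero_mul]
    intro l
    have := hd l
    rcases eq_or_ne k l with rfl | hkl
    · simp; omega
    · simpa [hkl] using this

theorem isNilpotent_mk_sub_C_eval (f : MvPolynomial σ K) :
    IsNilpotent (Ideal.Quotient.mk (truncationIdeal K σ p) (f - C (eval 0 f))) := by
  induction f using MvPolynomial.induction_on with
  | C a => simp
  | add f g hf hg =>
    rw [map_add, map_add, add_sub_add_comm, map_add]
    exact (Commute.all _ _).isNilpotent_add hf hg
  | mul_X f k _ =>
    have hX : IsNilpotent (Ideal.Quotient.mk (truncationIdeal K σ p) (X k)) := by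
      refine ⟨p, ?_⟩
      rw [← map_pow, Ideal.Quotient.eq_zero_iff_mem]
      exact Ideal.subset_span ⟨_, ⟨k, rfl⟩, (X_pow_eq_monomial ..).symm⟩
    simpa using (Commute.all _ _).isNilpotent_mul_left hX

theorem isUnit_mk_of_eval_ne_zero {f : MvPolynomial σ K} (h : eval 0 f ≠ 0) :
    IsUnit (Ideal.Quotient.mk (truncationIdeal K σ p) f) := by
  have hC : IsUnit (Ideal.Quotient.mk (truncationIdeal K σ p) (C (eval 0 f))) :=
    (((isUnit_iff_ne_zero.2 h).map C).map _)
  have hadd := (isNilpotent_mk_sub_C_eval f).isUnit_add_left_of_commute hC (Commute.all _ _)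
  rwa [← map_add, add_sub_cancel] at hadd

theorem coeff_eq_zero_of_pderiv_pderiv_mem [CharP K p] (k : σ) {f : MvPolynomial σ K}
    (h : pderiv k (pderiv k f) ∈ truncationIdeal K σ p) {d : σ →₀ ℕ} (hd : ∀ l, d l < p)
    (hk : 2 ≤ d k) : coeff d f = 0 := by
  classical
  obtain ⟨e, rfl⟩ : ∃ e, d = e + Finsupp.single k 2 :=
    ⟨_, (tsub_add_cancel_of_le (Finsupp.single_le_iff.2 hk)).symm⟩
  have hek : e k + 2 < p := by simpa using hd k
  have : Fact p.Prime := ⟨(CharP.char_is_prime_or_zero K p).resolve_right (by omega)⟩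
  have cast_ne_zero (n : ℕ) (h₀ : 0 < n) (hn : n < p) : (n : K) ≠ 0 := fun h0 =>
    absurd (Nat.le_of_dvd h₀ ((CharP.cast_eq_zero_iff K p n).1 h0)) hn.not_ge
  have hcoeff := mem_truncationIdeal.1 h e fun l => (Nat.le_add_right _ _).trans_lt (hd l)
  rw [coeff_pderiv, coeff_pderiv, add_assoc, ← Finsupp.single_add] at hcoeff
  have h₁ := cast_ne_zero (e k + 1) (by omega) (by omega)
  have h₂ := cast_ne_zero (e k + 2) (by omega) hek
  push_cast at h₁ h₂
  simpa [h₁, h₂, add_assoc, one_add_one_eq_two] using hcoeff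

theorem eq_zero_of_mem_truncationIdeal {f : MvPolynomial σ K} (hf : f ∈ truncationIdeal K σ p)
    (hdeg : ∀ k, degreeOf k f < p) : f = 0 := by
  ext d
  by_contra hd
  exact hd (mem_truncationIdeal.1 hf d fun k =>
    (monomial_le_degreeOf k (mem_support_iff.2 hd)).trans_lt (hdeg k))

end Truncation

theorem degreeOf_aeval_le {σ τ : Type*} (l : σ) {f : τ → MvPolynomial σ K}
    (hf : ∀ k, degreeOf l (f k) ≤ 1) (F : MvPolynomial τ K) :
    degreeOf l (aeval f F) ≤ F.totalDegree := by
  classical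
  rw [aeval_def, eval₂_eq]
  refine (degreeOf_sum_le _ _ _).trans (Finset.sup_le fun d hd => ?_)
  rw [algebraMap_eq]
  refine (degreeOf_C_mul_le _ _ _).trans ((degreeOf_prod_le _ _ _).trans ?_)
  refine (sum_le_sum fun k _ => ?_).trans (le_totalDegree hd)
  exact (degreeOf_pow_le _ _ _).trans ((Nat.mul_le_mul_left _ (hf k)).trans (mul_one _).le)

variable {n : ℕ}

/-- Restriction of polynomial functions to the graph `z = Φ` near `c`, in coordinates centred at
`c`. -/
noncomputable def graphSubst (c : Fin n → K) (Φ : MvPolynomial (Fin n) K) :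
    MvPolynomial (Fin (n + 1)) K →ₐ[K] MvPolynomial (Fin n) K :=
  aeval (Fin.cons Φ fun k => X k + C (c k))

theorem eval_graphSubst (c : Fin n → K) (Φ : MvPolynomial (Fin n) K)
    (F : MvPolynomial (Fin (n + 1)) K) :
    eval 0 (graphSubst c Φ F) = eval (Fin.cons (eval 0 Φ) c : Fin (n + 1) → K) F := by
  have h : (aeval (0 : Fin n → K)).comp (graphSubst c Φ) =
      aeval (Fin.cons (eval 0 Φ) c : Fin (n + 1) → K) :=
    algHom_ext fun i => by cases i using Fin.cases <;> simp [graphSubst]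
  exact DFunLike.congr_fun h F

theorem pderiv_graphSubst (c : Fin n → K) (Φ : MvPolynomial (Fin n) K) (k : Fin n)
    (F : MvPolynomial (Fin (n + 1)) K) :
    pderiv k (graphSubst c Φ F) =
      graphSubst c Φ (pderiv 0 F) * pderiv k Φ + graphSubst c Φ (pderiv k.succ F) := by
  have h := derivation_aeval (R := K) (pderiv k) (Fin.cons Φ fun k => X k + C (c k)) F
  rw [Fin.sum_univ_succ, Fintype.sum_eq_single k fun i hi => by
    simp [pderiv_X_of_ne hi]] at h
  simpa [graphSubst] using h

theorem mk_graphSubst (I : Ideal (MvPolynomial (Fin n) K)) (c : Fin n → K)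
    (Φ : MvPolynomial (Fin n) K) (F : MvPolynomial (Fin (n + 1)) K) :
    Ideal.Quotient.mk I (graphSubst c Φ F) =
      ((finSuccEquiv K n F).map
        (aeval (R := K) fun k => Ideal.Quotient.mk I (X k + C (c k))).toRingHom).eval
          (Ideal.Quotient.mk I Φ) := by
  have h : (Ideal.Quotient.mkₐ K I).comp (graphSubst c Φ) = aeval (Fin.cons (Ideal.Quotient.mk I Φ)
      fun k => Ideal.Quotient.mk I (X k + C (c k))) :=
    algHom_ext fun i => by cases i using Fin.cases <;> simp [graphSubst]
  rw [Polynomial.eval_map, ← aeval_cons]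
  exact DFunLike.congr_fun h F

theorem graphSubst_sub_mem {I : Ideal (MvPolynomial (Fin n) K)} (c : Fin n → K)
    {Φ Ψ : MvPolynomial (Fin n) K} (h : Φ - Ψ ∈ I) (F : MvPolynomial (Fin (n + 1)) K) :
    graphSubst c Φ F - graphSubst c Ψ F ∈ I := by
  rw [← Ideal.Quotient.mk_eq_mk_iff_sub_mem] at h ⊢
  rw [mk_graphSubst, mk_graphSubst, h]

theorem exists_graphSubst_mem_truncationIdeal {p : ℕ} (hp : p ≠ 0) {z : K} {c : Fin n → K}
    {F : MvPolynomial (Fin (n + 1)) K} (hF : eval (Fin.cons z c : Fin (n + 1) → K) F = 0)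
    (hF' : eval (Fin.cons z c : Fin (n + 1) → K) (pderiv 0 F) ≠ 0) :
    ∃ Φ, eval 0 Φ = z ∧ graphSubst c Φ F ∈ truncationIdeal K (Fin n) p := by
  set I := truncationIdeal K (Fin n) p
  set P := (finSuccEquiv K n F).map
    (aeval (R := K) fun k => Ideal.Quotient.mk I (X k + C (c k))).toRingHom with hP
  have hnil : IsNilpotent (Polynomial.aeval (Ideal.Quotient.mk I (C z)) P) := by
    rw [Polynomial.coe_aeval_eq_eval, ← mk_graphSubst]
    have h := isNilpotent_mk_sub_C_eval (p := p) (graphSubst c (C z) F)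
    rwa [eval_graphSubst, eval_C, hF, C_0, sub_zero] at h
  have hunit : IsUnit (Polynomial.aeval (Ideal.Quotient.mk I (C z)) (Polynomial.derivative P)) := by
    rw [Polynomial.coe_aeval_eq_eval, hP, Polynomial.derivative_map, ← finSuccEquiv_pderiv_zero,
      ← mk_graphSubst]
    exact isUnit_mk_of_eval_ne_zero (by rwa [eval_graphSubst, eval_C])
  obtain ⟨r, ⟨⟨m, hm⟩, hr⟩, -⟩ := Polynomial.existsUnique_nilpotent_sub_and_aeval_eq_zero hnil hunit
  obtain ⟨Φ, rfl⟩ := Ideal.Quotient.mk_surjective r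
  refine ⟨Φ, ?_, ?_⟩
  · rw [← map_sub, ← map_pow, Ideal.Quotient.eq_zero_iff_mem] at hm
    have h₀ := mem_truncationIdeal.1 hm 0 fun _ => Nat.pos_of_ne_zero hp
    rw [← constantCoeff_eq, map_pow] at h₀
    have h₁ := eq_zero_of_pow_eq_zero h₀
    rw [map_sub, constantCoeff_C, sub_eq_zero] at h₁
    rw [eval_zero, h₁]
  · rw [← Ideal.Quotient.eq_zero_iff_mem, mk_graphSubst, ← Polynomial.coe_aeval_eq_eval]
    exact hr

theorem algHom_X_zero_eq_of_aeval_cons_X_eq_zero {F : MvPolynomial (Fin (n + 1)) K}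
    (hF : Irreducible F) {W : MvPolynomial (Fin n) K}
    (hW : aeval (Fin.cons W X : Fin (n + 1) → MvPolynomial (Fin n) K) F = 0) {A : Type*}
    [CommRing A] [Algebra K A] {φ : MvPolynomial (Fin (n + 1)) K →ₐ[K] A} (hφ : φ F = 0) :
    φ (X 0) = φ (rename Fin.succ W) := by
  have hrename : finSuccEquiv K n (rename Fin.succ W) = Polynomial.C W := by
    have h : (finSuccEquiv K n).toAlgHom.comp (rename Fin.succ) = Polynomial.CAlgHom :=
      algHom_ext fun k => by simp [finSuccEquiv_X_succ]
    exact DFunLike.congr_fun h W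
  have hdvd : X 0 - rename Fin.succ W ∣ F := by
    rw [← map_dvd_iff (finSuccEquiv K n), map_sub, finSuccEquiv_X_zero, hrename,
      Polynomial.dvd_iff_isRoot, Polynomial.IsRoot, ← hW, aeval_cons, aeval_X_left]
    rfl
  obtain ⟨u, hu⟩ := hdvd
  have hnot : ¬ IsUnit (X 0 - rename Fin.succ W) := fun h => by
    have := h.map (finSuccEquiv K n)
    rw [map_sub, finSuccEquiv_X_zero, hrename] at this
    exact Polynomial.not_isUnit_X_sub_C W this
  have hunit : IsUnit u := (hF.isUnit_or_isUnit hu).resolve_left hnot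
  rwa [hu, map_mul, (hunit.map φ).mul_left_eq_zero, map_sub, sub_eq_zero] at hφ

variable {p : ℕ} [CharP K p]

theorem pderiv_pderiv_mem_of_dvd_borderedHessian {k : Fin n} {F : MvPolynomial (Fin (n + 1)) K}
    {Φ : MvPolynomial (Fin n) K} {c : Fin n → K}
    (hF : graphSubst c Φ F ∈ truncationIdeal K (Fin n) p) (hdvd : F ∣ borderedHessian 0 k.succ F)
    (hne : eval 0 (graphSubst c Φ (pderiv 0 F)) ≠ 0) :
    pderiv k (pderiv k Φ) ∈ truncationIdeal K (Fin n) p := by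
  set φ := graphSubst c Φ with hφ
  have first := pderiv_mem_truncationIdeal k hF
  rw [hφ, pderiv_graphSubst, ← hφ] at first
  have second := pderiv_mem_truncationIdeal k first
  rw [map_add, hφ, pderiv_graphSubst, Derivation.leibniz, pderiv_graphSubst, ← hφ,
    pderiv_pderiv_comm k.succ 0, smul_eq_mul, smul_eq_mul] at second
  have hessian : φ (borderedHessian 0 k.succ F) ∈ truncationIdeal K (Fin n) p := by
    obtain ⟨G, hG⟩ := hdvd
    rw [hG, map_mul]
    exact Ideal.mul_mem_right _ _ hF
  simp only [borderedHessian, map_add, map_sub, map_mul, map_pow, map_ofNat] at hessian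
  have cube : φ (pderiv 0 F) ^ 3 * pderiv k (pderiv k Φ) ∈ truncationIdeal K (Fin n) p := by
    convert Ideal.sub_mem _ (Ideal.sub_mem _ (Ideal.mul_mem_left _ (φ (pderiv 0 F) ^ 2) second)
      hessian) (Ideal.mul_mem_left _ (φ (pderiv 0 (pderiv 0 F)) *
        (φ (pderiv 0 F) * pderiv k Φ - φ (pderiv k.succ F)) +
        2 * φ (pderiv 0 (pderiv k.succ F)) * φ (pderiv 0 F)) first) using 1
    ring
  rw [← Ideal.Quotient.eq_zero_iff_mem, map_mul, map_pow] at cube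
  exact Ideal.Quotient.eq_zero_iff_mem.1
    (((isUnit_mk_of_eval_ne_zero hne).pow 3).mul_right_eq_zero.1 cube)

theorem exists_degreeOf_le_one_sub_mem {Φ : MvPolynomial (Fin n) K}
    (h : ∀ k, pderiv k (pderiv k Φ) ∈ truncationIdeal K (Fin n) p) :
    ∃ W, (∀ k, degreeOf k W ≤ 1) ∧ Φ - W ∈ truncationIdeal K (Fin n) p := by
  classical
  refine ⟨∑ d ∈ Φ.support with ∀ k, d k ≤ 1, monomial d (coeff d Φ), fun k => ?_, ?_⟩
  · refine (degreeOf_sum_le _ _ _).trans (Finset.sup_le fun d hd => ?_)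
    obtain ⟨hd, hd1⟩ := mem_filter.1 hd
    rw [degreeOf_monomial_eq _ _ (mem_support_iff.1 hd)]
    exact hd1 k
  · refine mem_truncationIdeal.2 fun d hd => ?_
    rw [coeff_sub, coeff_sum]
    simp only [coeff_monomial, Finset.sum_ite_eq', mem_filter, mem_support_iff]
    by_cases hd1 : ∀ k, d k ≤ 1
    · simp only [hd1, implies_true, and_true, ite_not]
      split_ifs with h0 <;> simp [h0]
    · push Not at hd1
      obtain ⟨k, hk⟩ := hd1
      simp [coeff_eq_zero_of_pderiv_pderiv_mem k (h k) hd hk]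

theorem exists_aeval_cons_X_eq_zero {F : MvPolynomial (Fin (n + 1)) K} (hp : F.totalDegree < p)
    (hdvd : ∀ k : Fin n, F ∣ borderedHessian 0 k.succ F) {z : K} {c : Fin n → K}
    (hF : eval (Fin.cons z c : Fin (n + 1) → K) F = 0)
    (hF' : eval (Fin.cons z c : Fin (n + 1) → K) (pderiv 0 F) ≠ 0) :
    ∃ W : MvPolynomial (Fin n) K,
      aeval (Fin.cons W X : Fin (n + 1) → MvPolynomial (Fin n) K) F = 0 := by
  obtain ⟨Φ, hz, hΦ⟩ := exists_graphSubst_mem_truncationIdeal (p := p) (by omega) hF hF'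
  obtain ⟨W, hW, hΦW⟩ := exists_degreeOf_le_one_sub_mem fun k =>
    pderiv_pderiv_mem_of_dvd_borderedHessian hΦ (hdvd k) (by rwa [eval_graphSubst, hz])
  have hmem : graphSubst c W F ∈ truncationIdeal K (Fin n) p := by
    simpa using Ideal.sub_mem _ hΦ (graphSubst_sub_mem c hΦW F)
  have hdeg (l : Fin n) (i : Fin (n + 1)) :
      degreeOf l ((Fin.cons W fun k => X k + C (c k) : Fin (n + 1) → _) i) ≤ 1 := by
    cases i using Fin.cases with
    | zero => exact hW l
    | succ k =>
      refine (degreeOf_add_le _ _ _).trans ?_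
      rw [degreeOf_C, degreeOf_X]
      split_ifs <;> simp
  have hzero := eq_zero_of_mem_truncationIdeal hmem fun l =>
    (degreeOf_aeval_le l (hdeg l) F).trans_lt hp
  have hcomp : (aeval fun k => X k - C (c k)).comp (graphSubst c W) =
      aeval (Fin.cons (aeval (fun k => X k - C (c k)) W) X) :=
    algHom_ext fun i => by cases i using Fin.cases <;> simp [graphSubst]
  exact ⟨_, (DFunLike.congr_fun hcomp F).symm.trans (by simp [hzero])⟩

theorem Line.meets_of_dvd_borderedHessian {F : MvPolynomial (Fin 3) K} (hF : Irreducible F)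
    (hp : F.totalDegree < p) (hdvd : ∀ k : Fin 2, F ∣ borderedHessian 0 k.succ F) {z : K}
    {c : Fin 2 → K} (hz : eval (Fin.cons z c : Fin 3 → K) F = 0)
    (hz' : eval (Fin.cons z c : Fin 3 → K) (pderiv 0 F) ≠ 0) {ℓ m : Line K}
    (hℓ : ℓ.restrict 0 F = 0) (hm : m.restrict 1 F = 0) : ℓ.Meets m := by
  obtain ⟨W, hW⟩ := exists_aeval_cons_X_eq_zero hp hdvd hz hz'
  have eqℓ := congrArg (Polynomial.eval m.base) (algHom_X_zero_eq_of_aeval_cons_X_eq_zero hF hW hℓ)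
  have eqm := congrArg (Polynomial.eval ℓ.base) (algHom_X_zero_eq_of_aeval_cons_X_eq_zero hF hW hm)
  rw [eval_restrict, eval_restrict, eval_X, Fin.cons_zero, eval_rename, Fin.cons_comp_succ]
    at eqℓ eqm
  rw [Meets, eqℓ, eqm]
  congr 2
  funext i
  fin_cases i <;> rfl

end DoublyRuled

/-! ### Incidences between lines in two directions -/

section Interedges

variable {α β : Type*} {r : α → β → Prop} [∀ a, DecidablePred (r a)] {k : ℕ}

theorem card_interedges_le_mul_card_right {s : Finset α} {t : Finset β}
    (h : ∀ b ∈ t, #{a ∈ s | r a b} ≤ k) : #(Rel.interedges r s t) ≤ k * #t := by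
  classical
  refine card_le_mul_card_image_of_maps_to (f := Prod.snd)
    (fun e he => (Rel.mem_interedges_iff.1 he).2.1) k fun b hb => le_trans ?_ (h b hb)
  refine card_le_card_of_injOn Prod.fst (fun e he => ?_) fun e he e' he' hee' => ?_
  · simp only [coe_filter, Rel.mem_interedges_iff, Set.mem_ofPred_eq] at he ⊢
    exact ⟨he.1.1, he.2 ▸ he.1.2.2⟩
  · exact Prod.ext hee' ((mem_filter.1 he).2.trans (mem_filter.1 he').2.symm)

theorem card_interedges_le_mul_card_left {s : Finset α} {t : Finset β}
    (h : ∀ a ∈ s, #{b ∈ t | r a b} ≤ k) : #(Rel.interedges r s t) ≤ k * #s := by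
  classical
  refine card_le_mul_card_image_of_maps_to (f := Prod.fst)
    (fun e he => (Rel.mem_interedges_iff.1 he).1) k fun a ha => le_trans ?_ (h a ha)
  refine card_le_card_of_injOn Prod.snd (fun e he => ?_) fun e he e' he' hee' => ?_
  · simp only [coe_filter, Rel.mem_interedges_iff, Set.mem_ofPred_eq] at he ⊢
    exact ⟨he.1.2.1, he.2 ▸ he.1.2.2⟩
  · exact Prod.ext ((mem_filter.1 he).2.trans (mem_filter.1 he').2.symm) hee'

theorem card_interedges_le_add_left [DecidableEq α] {s s₁ s₂ : Finset α} (h : s ⊆ s₁ ∪ s₂)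
    (t : Finset β) :
    #(Rel.interedges r s t) ≤ #(Rel.interedges r s₁ t) + #(Rel.interedges r s₂ t) := by
  classical
  refine (card_le_card fun e he => ?_).trans (card_union_le _ _)
  have := h (Rel.mem_interedges_iff.1 he).1
  simp only [mem_union, Rel.mem_interedges_iff] at he this ⊢
  tauto

theorem card_interedges_le_add_right [DecidableEq β] (s : Finset α) {t t₁ t₂ : Finset β}
    (h : t ⊆ t₁ ∪ t₂) :
    #(Rel.interedges r s t) ≤ #(Rel.interedges r s t₁) + #(Rel.interedges r s t₂) := by
  classical
  refine (card_le_card fun e he => ?_).trans (card_union_le _ _)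
  have := h (Rel.mem_interedges_iff.1 he).2.1
  simp only [mem_union, Rel.mem_interedges_iff] at he this ⊢
  tauto

theorem card_mul_card_le_of_pairwise {s : Finset α} {t : Finset β}
    (hr : ∀ a ∈ s, ∀ b ∈ t, r a b)
    (hk : (t : Set β).Pairwise fun b b' => #{a ∈ s | r a b ∧ r a b'} ≤ k) :
    #s * #t ≤ #s + k * #t := by
  obtain ht | ht := le_or_gt #t 1
  · exact (Nat.mul_le_mul_left _ ht).trans (by omega)
  · obtain ⟨b, hb, b', hb', hne⟩ := one_lt_card.1 ht
    have hs := hk hb hb' hne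
    beta_reduce at hs
    rw [filter_true_of_mem fun a ha => ⟨hr a ha b hb, hr a ha b' hb'⟩] at hs
    exact (Nat.mul_le_mul_right _ hs).trans (by omega)

end Interedges

section Incidences

open MvPolynomial

variable {K : Type*} [Field K]

theorem totalDegree_pos_of_irreducible {σ : Type*} {F : MvPolynomial σ K} (hF : Irreducible F) :
    0 < F.totalDegree := by
  refine Nat.pos_of_ne_zero fun h => ?_
  rw [totalDegree_eq_zero_iff_eq_C] at h
  have hc : coeff 0 F ≠ 0 := fun hc => hF.ne_zero (by rw [h, hc, map_zero])
  exact hF.not_isUnit (h ▸ hc.isUnit.map C)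

namespace Line

variable [DecidableEq K]

theorem exists_subset_forall_card_meets_le {F G : MvPolynomial (Fin 3) K} (hF : Irreducible F)
    (hdeg : (finSuccEquiv K 2 F).natDegree ≠ 0) (hFG : ¬ F ∣ G) {I J : Finset (Line K)}
    (hI : Set.InjOn base (I : Set (Line K))) (hJ : Set.InjOn base (J : Set (Line K)))
    (hJF : ∀ m ∈ J, m.restrict 1 F = 0)
    (hG : ∀ ℓ ∈ I, ∀ m ∈ J, ℓ.Meets m → (m.restrict 1 G).eval ℓ.base = 0) :
    ∃ J₀ ⊆ J, #J₀ ≤ 2 * F.totalDegree * G.totalDegree ∧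
      ∀ m ∈ J \ J₀, #{ℓ ∈ I | ℓ.Meets m} ≤ G.totalDegree := by
  refine ⟨{m ∈ J | m.restrict 1 G = 0}, filter_subset _ _,
    card_le_of_restrict_eq_zero hF hdeg hFG (hJ.mono (filter_subset _ _))
      (fun m hm => hJF m (mem_filter.1 hm).1) fun m hm => (mem_filter.1 hm).2, fun m hm => ?_⟩
  rw [← filter_not, mem_filter] at hm
  exact card_le_of_eval_restrict_eq_zero hm.2 (hI.mono (filter_subset _ _)) fun ℓ hℓ =>
    hG ℓ (mem_filter.1 hℓ).1 m hm.1 (mem_filter.1 hℓ).2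

variable {p : ℕ} [CharP K p]

theorem exists_subset_card_meets_le_or_meets {F : MvPolynomial (Fin 3) K} (hF : Irreducible F)
    (hp : F.totalDegree < p) {I J : Finset (Line K)}
    (hI : Set.InjOn base (I : Set (Line K))) (hJ : Set.InjOn base (J : Set (Line K)))
    (hIF : ∀ ℓ ∈ I, ℓ.restrict 0 F = 0) (hJF : ∀ m ∈ J, m.restrict 1 F = 0) :
    ∃ J₀ ⊆ J, #J₀ ≤ 6 * F.totalDegree ^ 2 ∧
      ((∀ m ∈ J \ J₀, #{ℓ ∈ I | ℓ.Meets m} ≤ 3 * F.totalDegree) ∨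
        ∀ ℓ ∈ I, ∀ m ∈ J, ℓ.Meets m) := by
  by_cases hdeg : (finSuccEquiv K 2 F).natDegree = 0
  · exact ⟨J, Subset.rfl, (card_le_of_natDegree_eq_zero hF.ne_zero hdeg hJ hJF).trans
      (by nlinarith), Or.inl (by simp)⟩
  by_cases hdvd : ∀ k : Fin 2, F ∣ borderedHessian 0 k.succ F
  · by_cases hsing : ∀ ℓ ∈ I, ∀ m ∈ J, ℓ.Meets m → (m.restrict 1 (pderiv 0 F)).eval ℓ.base = 0
    · obtain ⟨J₀, hsub, hcard, hJ₀⟩ := exists_subset_forall_card_meets_le hF hdeg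
        (not_dvd_pderiv_zero p hdeg hp) hI hJ hJF hsing
      have := totalDegree_pderiv_le 0 F
      exact ⟨J₀, hsub, hcard.trans (by nlinarith), Or.inl fun m hm => (hJ₀ m hm).trans (by omega)⟩
    · push Not at hsing
      obtain ⟨ℓ, -, m, hm, -, hne⟩ := hsing
      have hzero := congrArg (Polynomial.eval ℓ.base) (hJF m hm)
      rw [eval_restrict, Polynomial.eval_zero] at hzero
      rw [eval_restrict] at hne
      exact ⟨∅, empty_subset _, by simp, Or.inr fun ℓ' hℓ' m' hm' =>
        meets_of_dvd_borderedHessian hF hp hdvd hzero hne (hIF ℓ' hℓ') (hJF m' hm')⟩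
  · push Not at hdvd
    obtain ⟨k, hk⟩ := hdvd
    obtain ⟨J₀, hsub, hcard, hJ₀⟩ := exists_subset_forall_card_meets_le hF hdeg hk hI hJ hJF
      fun ℓ hℓ m hm h => h.eval_restrict_borderedHessian_eq_zero (hIF ℓ hℓ) (hJF m hm) k
    have := totalDegree_borderedHessian_le 0 k.succ F
    exact ⟨J₀, hsub, hcard.trans (by nlinarith), Or.inl fun m hm => (hJ₀ m hm).trans this⟩

theorem exists_subset_card_interedges_le_of_irreducible {F : MvPolynomial (Fin 3) K}
    (hF : Irreducible F) (hp : F.totalDegree < p) {I J : Finset (Line K)}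
    (hI : Set.InjOn base (I : Set (Line K))) (hJ : Set.InjOn base (J : Set (Line K))) {k : ℕ}
    (hk : (J : Set (Line K)).Pairwise fun m m' => #{ℓ ∈ I | ℓ.Meets m ∧ ℓ.Meets m'} ≤ k)
    (hJF : ∀ m ∈ J, m.restrict 1 F = 0) :
    ∃ J₀ ⊆ J, #J₀ ≤ 6 * F.totalDegree ^ 2 ∧ #(Rel.interedges Meets I (J \ J₀)) ≤
      2 * F.totalDegree * #I + 3 * F.totalDegree * #J + k * #J := by
  set e := F.totalDegree
  set IF : Finset (Line K) := {ℓ ∈ I | ℓ.restrict 0 F = 0} with hIF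
  have hIFI : IF ⊆ I := filter_subset _ _
  obtain ⟨J₀, hsub, hcard, hcases⟩ := exists_subset_card_meets_le_or_meets hF hp
    (hI.mono hIFI) hJ (fun ℓ hℓ => (mem_filter.1 hℓ).2) hJF
  have hsdiff : J \ J₀ ⊆ J := sdiff_subset
  have transverse : #(Rel.interedges Meets (I \ IF) (J \ J₀)) ≤ e * #I := by
    refine (card_interedges_le_mul_card_left fun ℓ hℓ => ?_).trans
      (Nat.mul_le_mul_left _ (card_le_card sdiff_subset))
    rw [hIF, ← filter_not, mem_filter] at hℓ
    refine card_le_of_eval_restrict_eq_zero hℓ.2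
      (hJ.mono ((filter_subset _ _).trans hsdiff)) fun m hm => ?_
    have hm := mem_filter.1 hm
    rw [hm.2.eval_restrict_eq, hJF m (hsdiff hm.1), Polynomial.eval_zero]
  have contained : #(Rel.interedges Meets IF (J \ J₀)) ≤ e * #I + 3 * e * #J + k * #J := by
    rcases hcases with hfew | hall
    · have hle := (card_interedges_le_mul_card_right hfew).trans
        (Nat.mul_le_mul_left _ (card_le_card hsdiff))
      linarith [Nat.zero_le (e * #I), Nat.zero_le (k * #J)]
    · have hle := card_mul_card_le_of_pairwise hall fun m hm m' hm' hne =>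
        (card_le_card (filter_subset_filter _ hIFI)).trans (hk hm hm' hne)
      have he : #IF ≤ e * #I := (card_le_card hIFI).trans
        (Nat.le_mul_of_pos_left _ (totalDegree_pos_of_irreducible hF))
      have := (card_le_card (Rel.interedges_mono (r := Meets) Subset.rfl hsdiff)).trans
        (Rel.card_interedges_le_mul Meets IF J)
      linarith [Nat.zero_le (3 * e * #J)]
  refine ⟨J₀, hsub, hcard, (card_interedges_le_add_left
    (sdiff_union_of_subset hIFI).symm.subset _).trans ?_⟩
  linarith

theorem exists_subset_card_interedges_le {I : Finset (Line K)}
    (hI : Set.InjOn base (I : Set (Line K))) (k : ℕ) {F : MvPolynomial (Fin 3) K} (hF : F ≠ 0)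
    (hp : F.totalDegree < p) {J : Finset (Line K)} (hJ : Set.InjOn base (J : Set (Line K)))
    (hk : (J : Set (Line K)).Pairwise fun m m' => #{ℓ ∈ I | ℓ.Meets m ∧ ℓ.Meets m'} ≤ k)
    (hJF : ∀ m ∈ J, m.restrict 1 F = 0) :
    ∃ J₀ ⊆ J, #J₀ ≤ 6 * F.totalDegree ^ 2 ∧ #(Rel.interedges Meets I (J \ J₀)) ≤
      2 * F.totalDegree * #I + 3 * F.totalDegree * #J + k * #J := by
  induction F using WfDvdMonoid.induction_on_irreducible generalizing J with
  | zero => exact absurd rfl hF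
  | unit u hu =>
    obtain rfl : J = ∅ :=
      eq_empty_of_forall_notMem fun m hm => (hu.map (m.restrict 1)).ne_zero (hJF m hm)
    exact ⟨∅, Subset.rfl, by simp, by simp [Rel.interedges]⟩
  | mul F' F₁ hF' hF₁ ih =>
    have hdeg := totalDegree_mul_of_isDomain hF₁.ne_zero hF'
    set J₁ : Finset (Line K) := {m ∈ J | m.restrict 1 F₁ = 0}
    set J' : Finset (Line K) := {m ∈ J | m.restrict 1 F₁ ≠ 0}
    have hJ₁ : J₁ ⊆ J := filter_subset _ _
    have hJ' : J' ⊆ J := filter_subset _ _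
    have hsplit : #J₁ + #J' = #J := card_filter_add_card_filter_not _
    obtain ⟨J₁', hsub₁, hcard₁, hle₁⟩ := exists_subset_card_interedges_le_of_irreducible hF₁
      (by omega) hI (hJ.mono hJ₁) (hk.mono hJ₁) fun m hm => (mem_filter.1 hm).2
    obtain ⟨J'', hsub', hcard', hle'⟩ := ih hF' (by omega) (hJ.mono hJ') (hk.mono hJ') fun m hm =>
      (mul_eq_zero.1 ((map_mul (m.restrict 1) F₁ F').symm.trans
        (hJF m (hJ' hm)))).resolve_left (mem_filter.1 hm).2
    refine ⟨J₁' ∪ J'', union_subset (hsub₁.trans hJ₁) (hsub'.trans hJ'),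
      (card_union_le _ _).trans (by rw [hdeg]; nlinarith), ?_⟩
    have hcover : J \ (J₁' ∪ J'') ⊆ (J₁ \ J₁') ∪ (J' \ J'') := fun m hm => by
      simp only [J₁, J', mem_sdiff, mem_union, mem_filter] at hm ⊢
      tauto
    refine (card_interedges_le_add_right I hcover).trans ((add_le_add hle₁ hle').trans ?_)
    rw [hdeg, ← hsplit]
    nlinarith

theorem exists_subset_card_interedges_le_sqrt {P J : Finset (Line K)}
    (hP : Set.InjOn base (P : Set (Line K))) (hJ : Set.InjOn base (J : Set (Line K))) {k : ℕ}
    (hk : (J : Set (Line K)).Pairwise fun m m' => #{ℓ ∈ P | ℓ.Meets m ∧ ℓ.Meets m'} ≤ k)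
    (hp : 6 * ((#P).sqrt + 1) < p) :
    ∃ J₀ ⊆ J, #J₀ ≤ 864 * #P ∧ #(Rel.interedges Meets P (J \ J₀)) ≤
      12 * ((#P).sqrt + 1) * #P + (24 * ((#P).sqrt + 1) + k) * #J := by
  rcases P.eq_empty_or_nonempty with rfl | hne
  · exact ⟨∅, empty_subset _, by simp, by simp⟩
  set r := (#P).sqrt + 1
  have hlt : #P < r ^ 2 := Nat.lt_succ_sqrt' _
  have hr : r ^ 2 ≤ 4 * #P :=
    calc r ^ 2 ≤ (2 * (#P).sqrt) ^ 2 := by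
          have := Nat.sqrt_pos.2 hne.card_pos
          gcongr
          omega
      _ = 4 * (#P).sqrt ^ 2 := by ring
      _ ≤ 4 * #P := by gcongr; exact Nat.sqrt_le' _
  obtain ⟨F, hF, hdeg, hPF⟩ := exists_ne_zero_restrict_eq_zero 0 P (2 * r) (by nlinarith)
  set JF : Finset (Line K) := {m ∈ J | m.restrict 1 F = 0} with hJF
  have hJFJ : JF ⊆ J := filter_subset _ _
  obtain ⟨J₀, hsub, hcard, hle⟩ := exists_subset_card_interedges_le hP k hF (by omega)
    (hJ.mono hJFJ) (hk.mono hJFJ) fun m hm => (mem_filter.1 hm).2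
  have transverse : #(Rel.interedges Meets P (J \ JF)) ≤ F.totalDegree * #J := by
    refine (card_interedges_le_mul_card_right fun m hm => ?_).trans
      (Nat.mul_le_mul_left _ (card_le_card sdiff_subset))
    rw [hJF, ← filter_not, mem_filter] at hm
    refine card_le_of_eval_restrict_eq_zero hm.2 (hP.mono (filter_subset _ _)) fun ℓ hℓ => ?_
    have hℓ := mem_filter.1 hℓ
    rw [← hℓ.2.eval_restrict_eq, hPF ℓ hℓ.1, Polynomial.eval_zero]
  have hcover : J \ J₀ ⊆ (J \ JF) ∪ (JF \ J₀) := fun m hm => by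
    simp only [mem_union, mem_sdiff] at hm ⊢
    tauto
  refine ⟨J₀, hsub.trans hJFJ, by nlinarith, (card_interedges_le_add_right P hcover).trans ?_⟩
  have hJFc := card_le_card hJFJ
  calc _ ≤ F.totalDegree * #J +
        (2 * F.totalDegree * #P + 3 * F.totalDegree * #J + k * #J) :=
        add_le_add transverse (hle.trans (by gcongr))
    _ = 2 * F.totalDegree * #P + (4 * F.totalDegree + k) * #J := by ring
    _ ≤ 2 * (6 * r) * #P + (4 * (6 * r) + k) * #J := by gcongr <;> omega
    _ = _ := by ring

theorem card_interedges_meets_le {n k : ℕ} (hp : 6 * (n.sqrt + 1) < p) (L : ℕ)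
    {I J : Finset (Line K)} (hI : Set.InjOn base (I : Set (Line K)))
    (hJ : Set.InjOn base (J : Set (Line K)))
    (hk : (J : Set (Line K)).Pairwise fun m m' => #{ℓ ∈ I | ℓ.Meets m ∧ ℓ.Meets m'} ≤ k)
    (hn : #I ≤ n) (hL : #I ≤ 2 ^ L) (hJI : #J ≤ 864 * #I) :
    #(Rel.interedges Meets I J) ≤ 1728 * (25 * (n.sqrt + 1) + k) * (L + 1) * #I := by
  set s := n.sqrt + 1 with hs
  induction L generalizing I J with
  | zero =>
    have hle := Rel.card_interedges_le_mul Meets I J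
    have : #I * #J ≤ 1 * (864 * #I) := Nat.mul_le_mul hL hJI
    nlinarith
  | succ L ih =>
    have half : ∀ P ⊆ I, #P ≤ 2 ^ L → #(Rel.interedges Meets P J) ≤
        1728 * (25 * s + k) * (L + 1) * #P + 12 * s * #P + (24 * s + k) * (864 * #I) := by
      intro P hPI hPL
      have hPn : #P ≤ n := (card_le_card hPI).trans hn
      have hsqrt : (#P).sqrt + 1 ≤ s := Nat.succ_le_succ (Nat.sqrt_le_sqrt hPn)
      have hkP : (J : Set (Line K)).Pairwise fun m m' => #{ℓ ∈ P | ℓ.Meets m ∧ ℓ.Meets m'} ≤ k :=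
        hk.imp fun _ _ h => (card_le_card (filter_subset_filter _ hPI)).trans h
      obtain ⟨J₀, hsub, hcard, hle⟩ :=
        exists_subset_card_interedges_le_sqrt (hI.mono hPI) hJ hkP (by omega)
      have hrec := ih (hI.mono hPI) (hJ.mono hsub) (hkP.mono hsub) hPn hPL hcard
      calc _ ≤ _ := card_interedges_le_add_right P (sdiff_union_of_subset hsub).symm.subset
        _ ≤ 12 * s * #P + (24 * s + k) * (864 * #I) + 1728 * (25 * s + k) * (L + 1) * #P :=
          add_le_add (hle.trans (by gcongr)) hrec
        _ = _ := by ring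
    obtain ⟨P, hPI, hPcard⟩ := exists_subset_card_eq (Nat.div_le_self #I 2)
    have hsum : #(I \ P) + #P = #I := card_sdiff_add_card_eq_card hPI
    rw [pow_succ] at hL
    have h₁ := half P hPI (by omega)
    have h₂ := half (I \ P) sdiff_subset (by omega)
    have hle := card_interedges_le_add_left (r := Meets) (sdiff_union_of_subset hPI).symm.subset J
    calc _ ≤ 1728 * (25 * s + k) * (L + 1) * (#(I \ P) + #P) + 12 * s * (#(I \ P) + #P) +
          1728 * (24 * s + k) * #I := by linarith
      _ = (1728 * (25 * s + k) * (L + 1) + 12 * s + 1728 * (24 * s + k)) * #I := by rw [hsum]; ring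
      _ ≤ _ := by gcongr; nlinarith

end Line

end Incidences

/-! ### Collisions between the values of affine maps -/

section CollisionLine

open Polynomial

variable {F : Type*} [Field F]

/-- A line over `F(X)` encoding the triple `(x, u, v)`, read as the point `x` together with the
affine map `u · + v`. The exponents `i`, `j` keep lines with different codes in different planes;
the sign `ε` tells the two directions apart. -/
noncomputable def collisionLine (ε : F) (i j : ℕ) (q : F × F × F) : Line (FractionRing F[X]) :=
  let φ := algebraMap F[X] (FractionRing F[X])
  { base := φ (C ε * (C q.1 + X * C q.2.1 + X ^ i * C q.2.2)) / φ (1 + X ^ j * C q.2.1)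
    slope := -φ (C ε * C q.2.1) / φ (1 + X ^ j * C q.2.1)
    intercept := φ (C q.2.2) / φ (1 + X ^ j * C q.2.1) }

theorem algebraMap_one_add_X_pow_mul_C_ne_zero {j : ℕ} (hj : j ≠ 0) (u : F) :
    algebraMap F[X] (FractionRing F[X]) (1 + X ^ j * C u) ≠ 0 := by
  rw [Ne, map_eq_zero_iff _ (IsFractionRing.injective _ _)]
  intro h
  simpa [hj.symm] using congrArg (coeff · 0) h

theorem collisionLine_meets_iff (q r : F × F × F) :
    (collisionLine 1 2 3 q).Meets (collisionLine (-1) 3 2 r) ↔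
      r.2.1 * q.1 + r.2.2 = q.2.1 * r.1 + q.2.2 := by
  set φ := algebraMap F[X] (FractionRing F[X]) with hφ
  have hq : φ (1 + X ^ 3 * C q.2.1) ≠ 0 :=
    algebraMap_one_add_X_pow_mul_C_ne_zero three_ne_zero _
  have hr : φ (1 + X ^ 2 * C r.2.1) ≠ 0 :=
    algebraMap_one_add_X_pow_mul_C_ne_zero two_ne_zero _
  have key : (collisionLine (-1) 3 2 r).slope * (collisionLine 1 2 3 q).base +
        (collisionLine (-1) 3 2 r).intercept -
      ((collisionLine 1 2 3 q).slope * (collisionLine (-1) 3 2 r).base +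
        (collisionLine 1 2 3 q).intercept) =
      φ (C (r.2.1 * q.1 + r.2.2 - (q.2.1 * r.1 + q.2.2))) /
        (φ (1 + X ^ 3 * C q.2.1) * φ (1 + X ^ 2 * C r.2.1)) := by
    simp only [collisionLine, ← hφ]
    field_simp
    simp only [map_add, map_mul, map_sub, map_neg, map_one, map_pow]
    ring
  rw [Line.Meets, ← sub_eq_zero, key, div_eq_zero_iff,
    map_eq_zero_iff _ (IsFractionRing.injective _ _), C_eq_zero, sub_eq_zero]
  exact or_iff_left (mul_ne_zero hq hr)

theorem base_collisionLine_injective {ε : F} (hε : ε ≠ 0) {i j : ℕ} (hi : 2 ≤ i) (hj : 2 ≤ j) :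
    Function.Injective fun q => (collisionLine ε i j q).base := by
  rintro ⟨x, u, v⟩ ⟨x', u', v'⟩ h
  have hj₀ : j ≠ 0 := by omega
  simp only [collisionLine] at h
  rw [div_eq_div_iff (algebraMap_one_add_X_pow_mul_C_ne_zero hj₀ _)
    (algebraMap_one_add_X_pow_mul_C_ne_zero hj₀ _), ← map_mul, ← map_mul] at h
  replace h := IsFractionRing.injective _ _ h
  rw [mul_assoc, mul_assoc] at h
  replace h := mul_left_cancel₀ (C_ne_zero.2 hε) h
  obtain ⟨i, rfl⟩ := Nat.exists_eq_add_of_le' hi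
  obtain ⟨j, rfl⟩ := Nat.exists_eq_add_of_le' hj
  have expand (x u v u' : F) :
      (C x + X * C u + X ^ (i + 2) * C v) * (1 + X ^ (j + 2) * C u') = C x + C u * X + X ^ 2 *
        (X ^ i * C v + X ^ j * C u' * (C x + X * C u + X ^ (i + 2) * C v)) := by ring
  have h' := h
  rw [expand, expand] at h'
  have hx : x = x' := by simpa [coeff_X_pow_mul'] using congrArg (coeff · 0) h'
  have hu : u = u' := by simpa [coeff_X_pow_mul', coeff_C] using congrArg (coeff · 1) h'
  subst hx hu
  have hden : (1 : F[X]) + X ^ (j + 2) * C u ≠ 0 := fun h₀ =>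
    algebraMap_one_add_X_pow_mul_C_ne_zero hj₀ u (by rw [h₀, map_zero])
  have hv : v = v' := by
    simpa using mul_right_cancel₀ hden h
  rw [hv]

theorem collisionLine_injective {ε : F} (hε : ε ≠ 0) {i j : ℕ} (hi : 2 ≤ i) (hj : 2 ≤ j) :
    Function.Injective (collisionLine ε i j) :=
  .of_comp (f := Line.base) (base_collisionLine_injective hε hi hj)

end CollisionLine

section Collisions

variable {F : Type*} [Field F] [DecidableEq F]

theorem card_common_collision_le (S : Finset F) (L : Finset (F × F)) {q r : F × F × F}
    (hqr : q ≠ r) :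
    #{w ∈ S ×ˢ L | q.2.1 * w.1 + q.2.2 = w.2.1 * q.1 + w.2.2 ∧
      r.2.1 * w.1 + r.2.2 = w.2.1 * r.1 + w.2.2} ≤ #S + #(L.image Prod.fst) := by
  obtain ⟨x, u, v⟩ := q
  obtain ⟨y, u', v'⟩ := r
  simp only
  by_cases hxy : x = y
  · subst hxy
    refine le_add_left (card_le_card_of_injOn (fun w => w.2.1) (fun w hw => ?_) ?_)
    · exact mem_image_of_mem _ (mem_product.1 (mem_filter.1 hw).1).2
    rintro ⟨s, a, b⟩ hw ⟨t, a', b'⟩ hw' (rfl : a = a')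
    obtain ⟨-, h₁, h₂⟩ := mem_filter.1 hw
    obtain ⟨-, h₃, h₄⟩ := mem_filter.1 hw'
    have hu : u - u' ≠ 0 := fun hu => hqr <| by
      have : v = v' := by linear_combination h₁ - h₂ - s * hu
      rw [sub_eq_zero.1 hu, this]
    have hst : s = t := mul_left_cancel₀ hu (by linear_combination h₁ - h₂ - h₃ + h₄)
    subst hst
    exact congrArg (s, a, ·) (by linear_combination h₃ - h₁)
  · refine le_add_right (card_le_card_of_injOn (fun w => w.1) (fun w hw => ?_) ?_)
    · exact (mem_product.1 (mem_filter.1 hw).1).1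
    rintro ⟨s, a, b⟩ hw ⟨t, a', b'⟩ hw' (rfl : s = t)
    obtain ⟨-, h₁, h₂⟩ := mem_filter.1 hw
    obtain ⟨-, h₃, h₄⟩ := mem_filter.1 hw'
    have ha : a = a' := mul_left_cancel₀ (sub_ne_zero.2 hxy)
      (by linear_combination -h₁ + h₂ + h₃ - h₄)
    subst ha
    exact congrArg (s, a, ·) (by linear_combination h₃ - h₁)

open scoped Classical in
theorem card_collisions_le_card_interedges (S : Finset F) (L : Finset (F × F)) :
    #{w ∈ (S ×ˢ L) ×ˢ (S ×ˢ L) | w.1.2.1 * w.1.1 + w.1.2.2 = w.2.2.1 * w.2.1 + w.2.2.2} ≤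
      #(Rel.interedges Line.Meets ((S ×ˢ L).image (collisionLine 1 2 3))
        ((S ×ˢ L).image (collisionLine (-1) 3 2))) := by
  -- Exchanging the two affine maps turns a collision into an incidence.
  refine card_le_card_of_injOn (fun w => (collisionLine 1 2 3 (w.1.1, w.2.2),
    collisionLine (-1) 3 2 (w.2.1, w.1.2))) (fun w hw => ?_) fun w _ w' _ h => ?_
  · obtain ⟨hw, h⟩ := mem_filter.1 hw
    simp only [mem_product] at hw
    exact Rel.mem_interedges_iff.2 ⟨mem_image_of_mem _ (mem_product.2 ⟨hw.1.1, hw.2.2⟩),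
      mem_image_of_mem _ (mem_product.2 ⟨hw.2.1, hw.1.2⟩), (collisionLine_meets_iff _ _).2 h⟩
  · obtain ⟨h₁, h₂⟩ := Prod.mk.inj h
    obtain ⟨h₁, h₃⟩ := Prod.mk.inj (collisionLine_injective one_ne_zero le_rfl (by simp) h₁)
    obtain ⟨h₂, h₄⟩ := Prod.mk.inj
      (collisionLine_injective (neg_ne_zero.2 one_ne_zero) (by simp) le_rfl h₂)
    exact Prod.ext (Prod.ext h₁ h₄) (Prod.ext h₂ h₃)

theorem card_collisions_le {p : ℕ} [CharP F p] (S : Finset F) (L : Finset (F × F)) (l : ℕ)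
    (hp : 6 * ((#S * #L).sqrt + 1) < p) (hl : #S * #L ≤ 2 ^ l) :
    #{w ∈ (S ×ˢ L) ×ˢ (S ×ˢ L) | w.1.2.1 * w.1.1 + w.1.2.2 = w.2.2.1 * w.2.1 + w.2.2.2} ≤
      1728 * (25 * ((#S * #L).sqrt + 1) + (#S + #(L.image Prod.fst))) * (l + 1) * (#S * #L) := by
  classical
  have : CharP (FractionRing (Polynomial F)) p :=
    charP_of_injective_algebraMap (FaithfulSMul.algebraMap_injective F _) p
  have baseI := base_collisionLine_injective (one_ne_zero (α := F)) (i := 2) (j := 3) le_rfl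
    (by simp)
  have baseJ := base_collisionLine_injective (neg_ne_zero.2 (one_ne_zero (α := F)))
    (i := 3) (j := 2) (by simp) le_rfl
  have injI := collisionLine_injective (one_ne_zero (α := F)) (i := 2) (j := 3) le_rfl (by simp)
  have injJ := collisionLine_injective (neg_ne_zero.2 (one_ne_zero (α := F))) (i := 3) (j := 2)
    (by simp) le_rfl
  set I := (S ×ˢ L).image (collisionLine 1 2 3) with hI
  set J := (S ×ˢ L).image (collisionLine (-1) 3 2) with hJ
  have cardI : #I = #S * #L := by rw [hI, card_image_of_injective _ injI, card_product]
  have cardJ : #J = #S * #L := by rw [hJ, card_image_of_injective _ injJ, card_product]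
  have common : (J : Set (Line _)).Pairwise fun m m' =>
      #{ℓ ∈ I | ℓ.Meets m ∧ ℓ.Meets m'} ≤ #S + #(L.image Prod.fst) := by
    intro m hm m' hm' hne
    obtain ⟨q, -, rfl⟩ := mem_image.1 hm
    obtain ⟨r, -, rfl⟩ := mem_image.1 hm'
    rw [hI, filter_image, card_image_of_injective _ injI]
    simp only [collisionLine_meets_iff]
    exact card_common_collision_le S L (ne_of_apply_ne _ hne)
  have injOnI : Set.InjOn Line.base (I : Set (Line (FractionRing (Polynomial F)))) := by
    rw [hI, coe_image]
    exact .image_of_comp baseI.injOn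
  have injOnJ : Set.InjOn Line.base (J : Set (Line (FractionRing (Polynomial F)))) := by
    rw [hJ, coe_image]
    exact .image_of_comp baseJ.injOn
  have incidences := Line.card_interedges_meets_le hp l injOnI injOnJ common cardI.le
    (cardI.trans_le hl) (by omega)
  rw [cardI] at incidences
  exact (card_collisions_le_card_interedges S L).trans incidences

/-- The number of pairs of a point of `S` and an affine map `u · + v` from `L`, encoded as `(u, v)`,
whose value is `t`. -/
def valueCount (S : Finset F) (L : Finset (F × F)) (t : F) : ℕ :=
  #{w ∈ S ×ˢ L | w.2.1 * w.1 + w.2.2 = t}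

theorem valueCount_eq_sum (S : Finset F) (L : Finset (F × F)) (t : F) :
    valueCount S L t = ∑ x ∈ S, #{w ∈ L | w.1 * x + w.2 = t} := by
  simp only [valueCount, card_filter, sum_product]

theorem sum_card_fiber_sq {α β : Type*} [Fintype β] [DecidableEq β] (T : Finset α) (f : α → β) :
    ∑ t, #{a ∈ T | f a = t} ^ 2 = #{w ∈ T ×ˢ T | f w.1 = f w.2} := by
  rw [card_eq_sum_card_fiberwise (f := fun w => f w.1) (t := univ) fun _ _ =>
    mem_coe.2 (mem_univ _)]
  refine sum_congr rfl fun t _ => ?_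
  rw [sq, ← card_product, filter_filter, ← filter_product]
  exact congrArg card (filter_congr fun w _ =>
    ⟨fun h => ⟨h.1.trans h.2.symm, h.1⟩, fun h => ⟨h.2, h.1.symm.trans h.2⟩⟩)

theorem sum_valueCount_sq_le [Fintype F] {p : ℕ} [CharP F p] (S : Finset F) (L : Finset (F × F))
    {l : ℕ} (hp : 400 * (#S * #L) ≤ p ^ 2) (hl : #S * #L ≤ 2 ^ l) {U : Finset F}
    (hU : ∀ w ∈ L, w.1 ∈ U) :
    ∑ t, (valueCount S L t : ℝ) ^ 2 ≤
      100000 * (l + 1) * (#S * #L) * (√(#S * #L) + #S + #U) := by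
  set n := #S * #L with hn
  rcases n.eq_zero_or_pos with h₀ | hpos
  · have : S ×ˢ L = ∅ := by rw [← card_eq_zero, card_product, ← hn, h₀]
    simp only [valueCount, this, filter_empty, card_empty, Nat.cast_zero, ne_eq,
      OfNat.ofNat_ne_zero, not_false_eq_true, zero_pow, sum_const_zero]
    positivity
  have hsqrt : 1 ≤ n.sqrt := Nat.le_sqrt.2 (by omega)
  have hp' : 6 * (n.sqrt + 1) < p := by
    by_contra! h
    have : p ≤ 12 * n.sqrt := by omega
    nlinarith [n.sqrt_le]
  have hQ : ∑ t, valueCount S L t ^ 2 ≤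
      1728 * (25 * (n.sqrt + 1) + (#S + #U)) * (l + 1) * n := by
    simp only [valueCount]
    rw [sum_card_fiber_sq (S ×ˢ L) fun w => w.2.1 * w.1 + w.2.2]
    refine (card_collisions_le S L l hp' hl).trans ?_
    gcongr
    exact image_subset_iff.2 hU
  have hQ' : ∑ t, (valueCount S L t : ℝ) ^ 2 ≤
      1728 * (25 * (n.sqrt + 1) + (#S + #U)) * (l + 1) * n := by exact_mod_cast hQ
  have hsqrt' : (1 : ℝ) ≤ n.sqrt := by exact_mod_cast hsqrt
  have hle : (n.sqrt : ℝ) ≤ √n := Real.nat_sqrt_le_real_sqrt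
  rw [show (#S : ℝ) * #L = n by rw [hn]; push_cast; rfl]
  calc _ ≤ 1728 * (25 * ((n.sqrt : ℝ) + 1) + (#S + #U)) * (l + 1) * n := hQ'
    _ ≤ 100000 * (√n + #S + #U) * (l + 1) * n := by
      have : 1728 * (25 * ((n.sqrt : ℝ) + 1) + (#S + #U)) ≤ 100000 * (√n + #S + #U) := by
        linarith [Nat.cast_nonneg (α := ℝ) #S, Nat.cast_nonneg (α := ℝ) #U]
      gcongr
    _ = _ := by ring

theorem sum_card_filter_affine_sq_le [Fintype F] (L : Finset (F × F)) :
    ∑ x : F, ∑ t, #{w ∈ L | w.1 * x + w.2 = t} ^ 2 ≤ #L * Fintype.card F + #L * #L := by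
  have h₁ (x : F) : ∑ t, #{w ∈ L | w.1 * x + w.2 = t} ^ 2 =
      ∑ z ∈ L ×ˢ L, if z.1.1 * x + z.1.2 = z.2.1 * x + z.2.2 then 1 else 0 := by
    rw [sum_card_fiber_sq L fun w => w.1 * x + w.2, card_filter]
  have h₂ : ∀ z ∈ L ×ˢ L, #{x : F | z.1.1 * x + z.1.2 = z.2.1 * x + z.2.2} ≤
      (if z.1 = z.2 then Fintype.card F else 0) + 1 := by
    rintro ⟨⟨u, v⟩, u', v'⟩ -
    split_ifs with hz
    · exact le_add_right (card_le_univ _)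
    refine le_add_left (card_le_one.2 fun x hx y hy => ?_)
    have hx := (mem_filter.1 hx).2
    have hy := (mem_filter.1 hy).2
    have hu : u - u' ≠ 0 := fun hu => hz <| by
      have : v = v' := by linear_combination hx - x * hu
      rw [sub_eq_zero.1 hu, this]
    exact mul_left_cancel₀ hu (by linear_combination hx - hy)
  simp only [h₁]
  rw [sum_comm]
  simp only [← card_filter]
  refine (sum_le_sum h₂).trans ?_
  rw [sum_add_distrib, sum_product]
  simp [sum_ite_eq]

theorem sum_valueCount_sub_mean_sq_le [Fintype F] (S : Finset F) (L : Finset (F × F)) :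
    ∑ t, ((valueCount S L t : ℝ) - #S * #L / Fintype.card F) ^ 2 ≤ #S * Fintype.card F * #L := by
  set q := Fintype.card F with hq
  have hq₀ : (q : ℝ) ≠ 0 := by exact_mod_cast Fintype.card_ne_zero
  set N : F → F → ℝ := fun x t => (#{w ∈ L | w.1 * x + w.2 = t} : ℝ) with hN
  have moment : ∑ x, ∑ t, N x t ^ 2 ≤ #L * q + #L * #L := by
    simp only [hN]
    exact_mod_cast sum_card_filter_affine_sq_le L
  have total (x : F) : ∑ t, N x t = #L := by
    simp only [hN]
    rw [← Nat.cast_sum, ← card_eq_sum_card_fiberwise fun _ _ => mem_coe.2 (mem_univ _)]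
  have variance (x : F) : ∑ t, (N x t - #L / q) ^ 2 = ∑ t, N x t ^ 2 - (#L : ℝ) ^ 2 / q := by
    simp only [sub_sq, sum_add_distrib, sum_sub_distrib, ← sum_mul, ← mul_sum, total, sum_const,
      card_univ, ← hq, nsmul_eq_mul]
    field_simp
    ring
  have deviation (t : F) :
      (valueCount S L t : ℝ) - #S * #L / q = ∑ x ∈ S, (N x t - #L / q) := by
    rw [valueCount_eq_sum, sum_sub_distrib, sum_const, nsmul_eq_mul]
    push_cast
    ring
  calc ∑ t, ((valueCount S L t : ℝ) - #S * #L / q) ^ 2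
      = ∑ t, (∑ x ∈ S, (N x t - #L / q)) ^ 2 := by simp only [deviation]
    _ ≤ ∑ t, (#S : ℝ) * ∑ x ∈ S, (N x t - #L / q) ^ 2 :=
      sum_le_sum fun t _ => sq_sum_le_card_mul_sum_sq
    _ = #S * ∑ x ∈ S, ∑ t, (N x t - #L / q) ^ 2 := by rw [← mul_sum, sum_comm]
    _ ≤ #S * ∑ x, ∑ t, (N x t - #L / q) ^ 2 := by
      gcongr
      exact subset_univ _
    _ = #S * (∑ x, ∑ t, N x t ^ 2 - #L * #L) := by
      simp only [variance, sum_sub_distrib, sum_const, card_univ, ← hq, nsmul_eq_mul]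
      field_simp
    _ ≤ #S * (#L * q) := by
      gcongr
      linarith
    _ = _ := by ring

end Collisions

/-! ### Additive energy bounds -/

section Energy

open scoped Combinatorics.Additive

theorem sum_addConvolution {G : Type*} [AddGroup G] [DecidableEq G] [Fintype G] (A B : Finset G) :
    ∑ t, A.addConvolution B t = #A * #B := by
  simp only [addConvolution]
  rw [← card_eq_sum_card_fiberwise fun _ _ => mem_coe.2 (mem_univ _), card_product]

theorem addEnergy_eq_sum_addConvolution_sq {G : Type*} [AddCommGroup G] [DecidableEq G]
    [Fintype G] (A B : Finset G) : E[A, B] = ∑ t, A.addConvolution B t ^ 2 :=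
  addEnergy_eq_sum_sq A B

variable {F : Type*} [Field F] [DecidableEq F] {A B S : Finset F} {g h : F → F}

omit [DecidableEq F] in
theorem card_le_card_of_mul_add_mem (hg : ∀ a ∈ A, g a ≠ 0)
    (hS : ∀ a ∈ A, ∀ b ∈ B, g a * (h a + b) ∈ S) (hA : A.Nonempty) : #B ≤ #S := by
  obtain ⟨a, ha⟩ := hA
  exact card_le_card_of_injOn (fun b => g a * (h a + b)) (fun b hb => hS a ha b hb)
    fun b _ b' _ heq => add_left_cancel (mul_left_cancel₀ (hg a ha) heq)

/-- The affine maps `y ↦ (g a)⁻¹ y - h a + x` for `a ∈ A` and `x ∈ X`, which take the value `b + x`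
at `y = g a * (h a + b)`. -/
def inverseMaps (A X : Finset F) (g h : F → F) : Finset (F × F) :=
  (A ×ˢ X).image fun z => ((g z.1)⁻¹, z.2 - h z.1)

theorem card_inverseMaps_le (A X : Finset F) (g h : F → F) :
    #(inverseMaps A X g h) ≤ #A * #X :=
  card_image_le.trans_eq (card_product _ _)

theorem card_mul_addConvolution_le_valueCount (hg : ∀ a ∈ A, g a ≠ 0) (hinj : Set.InjOn g A)
    (hS : ∀ a ∈ A, ∀ b ∈ B, g a * (h a + b) ∈ S) (X : Finset F) (t : F) :
    #A * B.addConvolution X t ≤ valueCount S (inverseMaps A X g h) t := by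
  rw [addConvolution, valueCount, ← card_product]
  refine card_le_card_of_injOn
    (fun z => (g z.1 * (h z.1 + z.2.1), ((g z.1)⁻¹, z.2.2 - h z.1))) ?_ ?_
  · rintro ⟨a, b, x⟩ hz
    simp only [coe_product, Set.mem_prod, mem_coe, mem_filter, mem_product] at hz
    obtain ⟨ha, ⟨hb, hx⟩, rfl⟩ := hz
    refine mem_coe.2 (mem_filter.2 ⟨mem_product.2 ⟨hS a ha b hb,
      mem_image.2 ⟨(a, x), mem_product.2 ⟨ha, hx⟩, rfl⟩⟩, ?_⟩)
    have := hg a ha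
    field_simp
    ring
  · rintro ⟨a, b, x⟩ hz ⟨a', b', x'⟩ hz' he
    have ha := (mem_product.1 (mem_coe.1 hz)).1
    simp only [Prod.mk.injEq] at he
    obtain rfl : a = a' :=
      hinj ha (mem_product.1 (mem_coe.1 hz')).1 (inv_injective he.2.1)
    obtain rfl : x = x' := sub_left_injective he.2.2
    obtain rfl : b = b' := add_left_cancel (mul_left_cancel₀ (hg a ha) he.1)
    rfl

theorem card_sq_mul_addEnergy_le [Fintype F] (hg : ∀ a ∈ A, g a ≠ 0) (hinj : Set.InjOn g A)
    (hS : ∀ a ∈ A, ∀ b ∈ B, g a * (h a + b) ∈ S) (X : Finset F) :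
    #A ^ 2 * E[B, X] ≤ ∑ t, valueCount S (inverseMaps A X g h) t ^ 2 := by
  rw [addEnergy_eq_sum_addConvolution_sq, mul_sum]
  refine sum_le_sum fun t _ => ?_
  rw [← mul_pow]
  exact Nat.pow_le_pow_left (card_mul_addConvolution_le_valueCount hg hinj hS X t) 2

theorem addEnergy_le_of_four_hundred_mul_le {p k : ℕ} [Finite F] [CharP F p] {X : Finset F}
    (hg : ∀ a ∈ A, g a ≠ 0) (hinj : Set.InjOn g A)
    (hS : ∀ a ∈ A, ∀ b ∈ B, g a * (h a + b) ∈ S) (hA : A.Nonempty) (hAS : #A ≤ #S)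
    (hSAX : #S ≤ #A * #X) (hp : 400 * (#S * (#A * #X)) ≤ p ^ 2)
    (hk : #S * (#A * #X) ≤ 2 ^ k) :
    (E[B, X] : ℝ) ≤ 300000 * (k + 1) * (√(#S : ℝ) ^ 3 / √(#A : ℝ)) * √(#X : ℝ) ^ 3 := by
  cases nonempty_fintype F
  set L := inverseMaps A X g h with hL
  set a := √(#A : ℝ) with ha
  set s := √(#S : ℝ) with hs
  set x := √(#X : ℝ) with hx
  have ha₀ : 0 < a := Real.sqrt_pos.2 (by exact_mod_cast hA.card_pos)
  have ha₂ : a ^ 2 = #A := Real.sq_sqrt (Nat.cast_nonneg _)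
  have hs₂ : s ^ 2 = #S := Real.sq_sqrt (Nat.cast_nonneg _)
  have hx₂ : x ^ 2 = #X := Real.sq_sqrt (Nat.cast_nonneg _)
  have has : a ≤ s := Real.sqrt_le_sqrt (by exact_mod_cast hAS)
  have hsax : s ≤ a * x := by
    rw [ha, hx, ← Real.sqrt_mul (Nat.cast_nonneg _)]
    exact Real.sqrt_le_sqrt (by exact_mod_cast hSAX)
  have hSL : #S * #L ≤ #S * (#A * #X) := Nat.mul_le_mul_left _ (card_inverseMaps_le A X g h)
  have hSL' : (#S * #L : ℝ) ≤ (s * (a * x)) ^ 2 := by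
    rw [mul_pow, mul_pow, hs₂, ha₂, hx₂]
    exact_mod_cast hSL
  have collisions := sum_valueCount_sq_le S L ((Nat.mul_le_mul_left _ hSL).trans hp)
    (hSL.trans hk) (U := A.image fun a => (g a)⁻¹) fun w hw => by
      obtain ⟨z, hz, rfl⟩ := mem_image.1 hw
      exact mem_image_of_mem _ (mem_product.1 hz).1
  have energy : (a ^ 2) ^ 2 * (E[B, X] : ℝ) ≤ ∑ t, (valueCount S L t : ℝ) ^ 2 := by
    rw [ha₂]
    exact_mod_cast card_sq_mul_addEnergy_le hg hinj hS X
  have hU : (#(A.image fun a => (g a)⁻¹) : ℝ) ≤ s * (a * x) :=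
    calc (#(A.image fun a => (g a)⁻¹) : ℝ) ≤ a * a := by
          rw [← sq, ha₂]
          exact_mod_cast card_image_le
      _ ≤ s * (a * x) := mul_le_mul has (has.trans hsax) ha₀.le (Real.sqrt_nonneg _)
  have main : (a ^ 2) ^ 2 * (E[B, X] : ℝ) ≤ 100000 * (k + 1) * (s * (a * x)) ^ 2 *
      (s * (a * x) + s * (a * x) + s * (a * x)) := by
    refine (energy.trans collisions).trans ?_
    gcongr
    · exact Real.sqrt_le_iff.2 ⟨by positivity, hSL'⟩
    · rw [← hs₂, sq]
      gcongr
  refine le_of_mul_le_mul_left (main.trans_eq ?_) (by positivity : 0 < (a ^ 2) ^ 2)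
  field_simp
  ring

theorem addEnergy_le_card_mul_card_sq {G : Type*} [AddGroup G] [DecidableEq G]
    (s t : Finset G) : E[s, t] ≤ #s * #t ^ 2 := by
  rw [sq, ← card_product, ← card_product, addEnergy]
  refine card_le_card_of_injOn (fun w => (w.1.1, w.2)) (fun w hw => ?_) ?_
  · have := mem_filter.1 hw
    simp only [mem_product] at this
    exact mem_product.2 ⟨this.1.1.1, mem_product.2 this.1.2⟩
  · rintro ⟨⟨b, b'⟩, z⟩ hw ⟨⟨c, c'⟩, z'⟩ hw' h
    obtain ⟨rfl : b = c, rfl : z = z'⟩ := Prod.mk.inj h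
    obtain rfl : b' = c' :=
      add_right_cancel ((mem_filter.1 hw).2.symm.trans (mem_filter.1 hw').2)
    rfl

theorem addEnergy_le_of_card_mul_le {G : Type*} [AddGroup G] [DecidableEq G]
    {B X : Finset G} {a s : ℕ} (ha : a ≠ 0) (hBs : #B ≤ s) (haX : a * #X ≤ s) :
    (E[B, X] : ℝ) ≤ √s ^ 3 / √a * √(#X : ℝ) ^ 3 := by
  have ha₀ : 0 < √(a : ℝ) := Real.sqrt_pos.2 (by exact_mod_cast ha.bot_lt)
  have hX : √(#X : ℝ) ^ 2 = #X := Real.sq_sqrt (Nat.cast_nonneg _)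
  have hs : √(s : ℝ) ^ 2 = s := Real.sq_sqrt (Nat.cast_nonneg _)
  have hax : √a * √(#X : ℝ) ≤ √s := by
    rw [← Real.sqrt_mul (Nat.cast_nonneg _)]
    exact Real.sqrt_le_sqrt (by exact_mod_cast haX)
  rw [div_mul_eq_mul_div, le_div_iff₀ ha₀]
  calc (E[B, X] : ℝ) * √a ≤ #B * (√(#X : ℝ) ^ 2) ^ 2 * √a := by
        rw [hX]
        gcongr
        exact_mod_cast addEnergy_le_card_mul_card_sq B X
    _ = √a * √(#X : ℝ) * #B * √(#X : ℝ) ^ 3 := by ring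
    _ ≤ √s * √s ^ 2 * √(#X : ℝ) ^ 3 := by rw [hs]; gcongr
    _ = _ := by ring

theorem sq_le_add_mul_of_mul_le {c d e m r R : ℝ} (hc : 0 < c) (hd : 0 ≤ d) (hr : 0 ≤ r)
    (hR : c * r ≤ R) (hm : m ≤ c * e) (hrd : r < 2 * e → r ≤ d) :
    r ^ 2 ≤ 4 / c ^ 2 * (R - m) ^ 2 + d * r := by
  rcases le_or_gt (2 * e) r with h | h
  · have half : c * r / 2 ≤ R - m := by nlinarith
    calc r ^ 2 = 4 / c ^ 2 * (c * r / 2) ^ 2 := by field_simp; ring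
      _ ≤ 4 / c ^ 2 * (R - m) ^ 2 := by gcongr
      _ ≤ _ := le_add_of_nonneg_right (by positivity)
  · calc r ^ 2 = r * r := sq r
      _ ≤ d * r := by gcongr; exact hrd h
      _ ≤ _ := le_add_of_nonneg_left (by positivity)

theorem addConvolution_sq_le [Fintype F] (hg : ∀ a ∈ A, g a ≠ 0) (hinj : Set.InjOn g A)
    (hS : ∀ a ∈ A, ∀ b ∈ B, g a * (h a + b) ∈ S) (hA : A.Nonempty) (X : Finset F) (t : F) :
    (B.addConvolution X t : ℝ) ^ 2 ≤
      4 / #A ^ 2 * ((valueCount S (inverseMaps A X g h) t : ℝ) -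
        #S * #(inverseMaps A X g h) / Fintype.card F) ^ 2 +
      2 * √(#B * #S * #X / Fintype.card F) * B.addConvolution X t := by
  have : (0 : ℝ) < #A := Nat.cast_pos.2 hA.card_pos
  have : (0 : ℝ) < Fintype.card F := Nat.cast_pos.2 Fintype.card_pos
  refine sq_le_add_mul_of_mul_le (e := #S * #X / Fintype.card F) (by positivity) (by positivity)
    (Nat.cast_nonneg _) ?_ ?_ fun hlt => ?_
  · exact_mod_cast card_mul_addConvolution_le_valueCount hg hinj hS X t
  · have hL : (#(inverseMaps A X g h) : ℝ) ≤ #A * #X := by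
      exact_mod_cast card_inverseMaps_le A X g h
    calc (#S * #(inverseMaps A X g h) / Fintype.card F : ℝ)
        ≤ #S * (#A * #X) / Fintype.card F := by gcongr
      _ = _ := by ring
  · have hle : (B.addConvolution X t : ℝ) ≤ #B := by exact_mod_cast addConvolution_le_card_left
    refine le_of_sq_le_sq ?_ (by positivity)
    calc (B.addConvolution X t : ℝ) ^ 2 ≤ #B * (2 * (#S * #X / Fintype.card F)) := by
          rw [sq]
          gcongr
      _ ≤ #B * (4 * (#S * #X / Fintype.card F)) := by gcongr; norm_num
      _ = (2 * √(#B * #S * #X / Fintype.card F)) ^ 2 := by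
          rw [mul_pow, Real.sq_sqrt (by positivity)]
          ring

theorem addEnergy_le_of_card_sq_le [Fintype F] {X : Finset F} (hg : ∀ a ∈ A, g a ≠ 0)
    (hinj : Set.InjOn g A) (hS : ∀ a ∈ A, ∀ b ∈ B, g a * (h a + b) ∈ S) (hA : A.Nonempty)
    (hq : Fintype.card F ^ 2 ≤ 400 * (#S * (#A * #X))) :
    (E[B, X] : ℝ) ≤ 80 * (√(#S : ℝ) ^ 3 / √(#A : ℝ)) * √(#X : ℝ) ^ 3 +
      2 * (√(#B : ℝ) ^ 3 * √(#S : ℝ) / √(Fintype.card F : ℝ)) * √(#X : ℝ) ^ 3 := by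
  have pointwise := addConvolution_sq_le hg hinj hS hA X
  have variance := sum_valueCount_sub_mean_sq_le S (inverseMaps A X g h)
  have total : ∑ t, (B.addConvolution X t : ℝ) = #B * #X := by
    exact_mod_cast sum_addConvolution B X
  have hL : (#(inverseMaps A X g h) : ℝ) ≤ #A * #X := by
    exact_mod_cast card_inverseMaps_le A X g h
  have hsqrt : √(#B * #S * #X / Fintype.card F : ℝ) =
      √(#B : ℝ) * √(#S : ℝ) * √(#X : ℝ) / √(Fintype.card F : ℝ) := by
    rw [Real.sqrt_div' _ (Nat.cast_nonneg _), Real.sqrt_mul' _ (Nat.cast_nonneg _),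
      Real.sqrt_mul' _ (Nat.cast_nonneg _)]
  have hcard : (Fintype.card F : ℝ) ≤ 20 * (√(#S : ℝ) * √(#A : ℝ) * √(#X : ℝ)) := by
    refine le_of_sq_le_sq ?_ (by positivity)
    simp only [mul_pow, Real.sq_sqrt (Nat.cast_nonneg _)]
    norm_num only
    rw [mul_assoc (#S : ℝ)]
    exact_mod_cast hq
  have : 0 < √(#A : ℝ) := Real.sqrt_pos.2 (Nat.cast_pos.2 hA.card_pos)
  have : 0 < √(Fintype.card F : ℝ) := Real.sqrt_pos.2 (Nat.cast_pos.2 Fintype.card_pos)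
  calc (E[B, X] : ℝ) = ∑ t, (B.addConvolution X t : ℝ) ^ 2 := by
        rw [addEnergy_eq_sum_addConvolution_sq]
        push_cast
        rfl
    _ ≤ 4 / #A ^ 2 * (#S * Fintype.card F * #(inverseMaps A X g h)) +
          2 * √(#B * #S * #X / Fintype.card F) * (#B * #X) := by
        refine (sum_le_sum fun t _ => pointwise t).trans ?_
        rw [sum_add_distrib, ← mul_sum, ← mul_sum, total]
        gcongr
    _ ≤ 4 / (√(#A : ℝ) ^ 2) ^ 2 * (√(#S : ℝ) ^ 2 *
            (20 * (√(#S : ℝ) * √(#A : ℝ) * √(#X : ℝ))) * (√(#A : ℝ) ^ 2 * √(#X : ℝ) ^ 2)) +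
          2 * (√(#B : ℝ) * √(#S : ℝ) * √(#X : ℝ) / √(Fintype.card F : ℝ)) *
            (√(#B : ℝ) ^ 2 * √(#X : ℝ) ^ 2) := by
        rw [hsqrt]
        simp only [Real.sq_sqrt (Nat.cast_nonneg _)]
        gcongr
    _ = _ := by field_simp; ring

/-- The coefficient `M^{3/2} A^{-1/2} + B^{3/2} M^{1/2} q^{-1/2}` of `|X|^{3/2}` in the bound for
`E[B, X]`, where `A`, `B`, `M`, `q` are the cardinalities of `A`, `B`, of a set containing
`{g a * (h a + b)}`, and of the field. -/
noncomputable def energyCoeff (M A B q : ℝ) : ℝ :=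
  √M ^ 3 / √A + √B ^ 3 * √M / √q

theorem addEnergy_le_energyCoeff {p : ℕ} [Fact p.Prime] {A B S : Finset (ZMod p)}
    {g h : ZMod p → ZMod p} (hg : ∀ a ∈ A, g a ≠ 0) (hinj : Set.InjOn g A)
    (hS : ∀ a ∈ A, ∀ b ∈ B, g a * (h a + b) ∈ S) (hA : A.Nonempty) (hAB : #A ≤ #B)
    {l : ℕ} (hSl : #S ≤ 2 ^ l) {X : Finset (ZMod p)} (hXl : #X ≤ 2 ^ (2 * l)) :
    (E[B, X] : ℝ) ≤ 300000 * (4 * l + 1) * energyCoeff #S #A #B p * √(#X : ℝ) ^ 3 := by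
  have hBS := card_le_card_of_mul_add_mem hg hS hA
  set u := √(#S : ℝ) ^ 3 / √(#A : ℝ) with hu
  set v := √(#B : ℝ) ^ 3 * √(#S : ℝ) / √(p : ℝ) with hv
  have hu₀ : 0 ≤ u := by positivity
  have hv₀ : 0 ≤ v := by positivity
  have hl : (1 : ℝ) ≤ 4 * l + 1 := by linarith [Nat.cast_nonneg (α := ℝ) l]
  suffices (E[B, X] : ℝ) ≤ 300000 * (4 * l + 1) * u * √(#X : ℝ) ^ 3 + 2 * v * √(#X : ℝ) ^ 3 by
    refine this.trans ?_
    rw [energyCoeff, ← add_mul]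
    gcongr
    nlinarith
  have hv₁ : 0 ≤ 2 * v * √(#X : ℝ) ^ 3 := by positivity
  rcases le_or_gt (400 * (#S * (#A * #X))) (p ^ 2) with hp | hp
  · refine le_add_of_le_of_nonneg ?_ hv₁
    rcases le_total #S (#A * #X) with hSAX | hSAX
    · have hk : #S * (#A * #X) ≤ 2 ^ (4 * l) :=
        calc #S * (#A * #X) ≤ 2 ^ l * (2 ^ l * 2 ^ (2 * l)) := by
              gcongr
              exact (hAB.trans hBS).trans hSl
          _ = _ := by ring
      exact_mod_cast addEnergy_le_of_four_hundred_mul_le hg hinj hS hA (hAB.trans hBS) hSAX hp hk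
    · refine (addEnergy_le_of_card_mul_le hA.card_ne_zero hBS hSAX).trans ?_
      gcongr
      exact le_mul_of_one_le_left hu₀ (by linarith)
  · have := addEnergy_le_of_card_sq_le (X := X) hg hinj hS hA (by rw [ZMod.card]; exact hp.le)
    rw [ZMod.card] at this
    refine this.trans ?_
    gcongr
    linarith

end Energy

/-! ### Representations as a difference -/

section DiffCount

variable {G : Type*} [AddCommGroup G] [DecidableEq G] {B C : Finset G}

/-- The number of representations of `t` as a difference of two elements of `B`. -/
def diffCount (B : Finset G) (t : G) : ℕ := B.addConvolution (-B) t

theorem diffCount_eq_card_filter (B : Finset G) (t : G) : diffCount B t = #{b ∈ B | b - t ∈ B} := by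
  rw [diffCount, ← card_inter_vadd]
  congr 1
  ext b
  rw [mem_inter, mem_filter, ← neg_vadd_mem_iff, vadd_eq_add, neg_add_eq_sub]

theorem diffCount_zero (B : Finset G) : diffCount B 0 = #B := by
  simp [diffCount_eq_card_filter]

theorem diffCount_le_card (B : Finset G) (t : G) : diffCount B t ≤ #B :=
  addConvolution_le_card_left

theorem diffCount_mono (h : B ⊆ C) (t : G) : diffCount B t ≤ diffCount C t := by
  simp only [diffCount_eq_card_filter]
  exact card_le_card fun b hb => by
    rw [mem_filter] at hb ⊢
    exact hb.imp (fun h₁ => h h₁) fun h₁ => h h₁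

variable [Fintype G]

theorem sum_diffCount (B : Finset G) : ∑ t, diffCount B t = #B ^ 2 := by
  simp only [diffCount]
  rw [sum_addConvolution, card_neg, sq]

/-- The elements with at least `τ` representations as a difference of two elements of `B`. -/
def popularDiffs (B : Finset G) (τ : ℕ) : Finset G := {t | τ ≤ diffCount B t}

theorem mem_popularDiffs {τ : ℕ} {t : G} : t ∈ popularDiffs B τ ↔ τ ≤ diffCount B t :=
  mem_filter_univ t

theorem mul_card_popularDiffs_le (B : Finset G) (τ : ℕ) : τ * #(popularDiffs B τ) ≤ #B ^ 2 :=
  calc τ * #(popularDiffs B τ) ≤ ∑ t ∈ popularDiffs B τ, diffCount B t := by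
        rw [mul_comm, ← smul_eq_mul]
        exact card_nsmul_le_sum _ _ _ fun t ht => mem_popularDiffs.1 ht
    _ ≤ ∑ t, diffCount B t := sum_le_sum_of_subset (subset_univ _)
    _ = #B ^ 2 := sum_diffCount B

theorem mul_pow_four_mul_card_popularDiffs_le {a y : ℝ} {τ : ℕ} (hy : 0 ≤ y)
    (h : a * τ ^ 3 ≤ y * #B) :
    a * τ ^ 4 * #(popularDiffs B τ) ≤ y * #B ^ 3 := by
  have hmarkov : (τ : ℝ) * #(popularDiffs B τ) ≤ #B ^ 2 := by
    exact_mod_cast mul_card_popularDiffs_le B τ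
  calc a * τ ^ 4 * #(popularDiffs B τ) = a * τ ^ 3 * (τ * #(popularDiffs B τ)) := by ring
    _ ≤ y * #B * (τ * #(popularDiffs B τ)) := by gcongr
    _ ≤ y * #B * #B ^ 2 := by gcongr
    _ = y * #B ^ 3 := by ring

theorem card_popularDiffs_le {τ l : ℕ} (hτ : 1 ≤ τ) (hl : #B ≤ 2 ^ l) :
    #(popularDiffs B τ) ≤ 2 ^ (2 * l) :=
  calc #(popularDiffs B τ) ≤ τ * #(popularDiffs B τ) := Nat.le_mul_of_pos_left _ hτ
    _ ≤ #B ^ 2 := mul_card_popularDiffs_le B τ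
    _ ≤ (2 ^ l) ^ 2 := by gcongr
    _ = 2 ^ (2 * l) := by ring

theorem pow_le_sum_range_ite {f l q : ℕ} (hq : q ≠ 0) (hf : f ≤ 2 ^ l) :
    f ^ q ≤ ∑ k ∈ range (l + 1), if 2 ^ k ≤ f then (2 * 2 ^ k) ^ q else 0 := by
  rcases f.eq_zero_or_pos with rfl | hpos
  · rw [zero_pow hq]
    exact Nat.zero_le _
  have hlog : Nat.log 2 f ∈ range (l + 1) :=
    mem_range.2 (Nat.lt_succ_of_le ((Nat.log_mono_right hf).trans_eq (Nat.log_pow one_lt_two l)))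
  refine le_trans ?_ (single_le_sum (fun _ _ => Nat.zero_le _) hlog)
  rw [if_pos (Nat.pow_log_le_self 2 hpos.ne'), ← pow_succ']
  exact Nat.pow_le_pow_left (Nat.lt_pow_succ_log_self one_lt_two f).le q

theorem sum_diffCount_pow_mul_le {l q : ℕ} (hq : q ≠ 0) (hl : #B ≤ 2 ^ l) (w : G → ℕ) :
    ∑ t, diffCount B t ^ q * w t ≤
      ∑ k ∈ range (l + 1), (2 * 2 ^ k) ^ q * ∑ t ∈ popularDiffs B (2 ^ k), w t := by
  simp only [popularDiffs, sum_filter, mul_sum]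
  rw [sum_comm]
  refine sum_le_sum fun t _ => ?_
  refine (Nat.mul_le_mul_right _
    (pow_le_sum_range_ite hq ((diffCount_le_card B t).trans hl))).trans_eq ?_
  rw [sum_mul]
  exact sum_congr rfl fun k _ => by split_ifs <;> simp only [zero_mul, mul_zero]

/-- The mixed fourth moment of the difference counts of `B` and `C`. -/
def mixedFourthMoment (B C : Finset G) : ℕ := ∑ t, diffCount B t ^ 2 * diffCount C t ^ 2

theorem mixedFourthMoment_mono (h : B ⊆ C) (X : Finset G) :
    mixedFourthMoment X B ≤ mixedFourthMoment X C := by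
  refine sum_le_sum fun t _ => ?_
  gcongr
  exact diffCount_mono h t

theorem mixedFourthMoment_sq_le (B C : Finset G) :
    mixedFourthMoment B C ^ 2 ≤ (∑ t, diffCount B t ^ 4) * ∑ t, diffCount C t ^ 4 := by
  refine (sum_mul_sq_le_sq_mul_sq univ _ _).trans_eq ?_
  simp only [← pow_mul, Nat.reduceMul]

end DiffCount

/-! ### Fourth moments -/

section FourthMoment

variable {F : Type*} [Field F] [DecidableEq F] [Fintype F] {A B S T : Finset F} {g h : F → F}

/-- The affine maps `t ↦ g a * t + g a * (h a + b)` for `a ∈ A` and `b ∈ B`, which take the value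
`g a * (h a + b')` at `t = b' - b`. -/
def translateMaps (A B : Finset F) (g h : F → F) : Finset (F × F) :=
  (A ×ˢ B).image fun z => (g z.1, g z.1 * (h z.1 + z.2))

omit [Fintype F] in
theorem card_mul_diffCount_le (hg : ∀ a ∈ A, g a ≠ 0) (hinj : Set.InjOn g A)
    (hS : ∀ a ∈ A, ∀ b ∈ B, g a * (h a + b) ∈ S) (t : F) :
    #A * diffCount B t ≤ #{w ∈ translateMaps A B g h | w.1 * t + w.2 ∈ S} := by
  rw [diffCount_eq_card_filter, ← card_product]
  refine card_le_card_of_injOn (fun z => (g z.1, g z.1 * (h z.1 + (z.2 - t)))) ?_ ?_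
  · rintro ⟨a, b⟩ hz
    simp only [coe_product, Set.mem_prod, mem_coe, mem_filter] at hz
    obtain ⟨ha, hb, hbt⟩ := hz
    refine mem_coe.2 (mem_filter.2
      ⟨mem_image.2 ⟨(a, b - t), mem_product.2 ⟨ha, hbt⟩, rfl⟩, ?_⟩)
    convert hS a ha b hb using 1
    ring
  · rintro ⟨a, b⟩ hz ⟨a', b'⟩ hz' he
    have ha := (mem_product.1 (mem_coe.1 hz)).1
    simp only [Prod.mk.injEq] at he
    obtain rfl : a = a' := hinj ha (mem_product.1 (mem_coe.1 hz')).1 he.1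
    obtain rfl : b = b' := sub_left_injective (add_left_cancel (mul_left_cancel₀ (hg a ha) he.2))
    rfl

theorem sq_card_mul_le_card_mul_sum_valueCount_sq (hg : ∀ a ∈ A, g a ≠ 0) (hinj : Set.InjOn g A)
    (hS : ∀ a ∈ A, ∀ b ∈ B, g a * (h a + b) ∈ S) {τ : ℕ} (hT : T ⊆ popularDiffs B τ) :
    (#A * τ * #T) ^ 2 ≤ #S * ∑ t, valueCount T (translateMaps A B g h) t ^ 2 := by
  have hle : #A * τ * #T ≤ ∑ s ∈ S, valueCount T (translateMaps A B g h) s := by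
    simp only [valueCount_eq_sum]
    rw [sum_comm, mul_comm, ← smul_eq_mul]
    refine card_nsmul_le_sum _ _ _ fun t ht => ?_
    rw [sum_card_fiberwise_eq_card_filter]
    exact (Nat.mul_le_mul_left _ (mem_popularDiffs.1 (hT ht))).trans
      (card_mul_diffCount_le hg hinj hS t)
  calc (#A * τ * #T) ^ 2 ≤ (∑ s ∈ S, valueCount T (translateMaps A B g h) s) ^ 2 := by gcongr
    _ ≤ #S * ∑ s ∈ S, valueCount T (translateMaps A B g h) s ^ 2 := sq_sum_le_card_mul_sum_sq
    _ ≤ _ := by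
      gcongr
      exact subset_univ _

theorem sq_card_mul_le_of_subset_popularDiffs {p l τ : ℕ} [CharP F p] (hg : ∀ a ∈ A, g a ≠ 0)
    (hinj : Set.InjOn g A) (hS : ∀ a ∈ A, ∀ b ∈ B, g a * (h a + b) ∈ S) (hT : T ⊆ popularDiffs B τ)
    (hp : 400 * (#T * (#A * #B)) ≤ p ^ 2) (hl : #T * (#A * #B) ≤ 2 ^ l) :
    ((#A : ℝ) * τ * #T) ^ 2 ≤
      #S * (100000 * (l + 1) * (#T * (#A * #B)) * (√(#T * (#A * #B)) + #T + #A)) := by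
  set L := translateMaps A B g h with hLdef
  have hL : #L ≤ #A * #B := card_image_le.trans_eq (card_product A B)
  have hslope : ∀ w ∈ L, w.1 ∈ A.image g := fun w hw => by
    obtain ⟨z, hz, rfl⟩ := mem_image.1 hw
    exact mem_image_of_mem g (mem_product.1 hz).1
  have hle := Nat.mul_le_mul_left #T hL
  have hQ := sum_valueCount_sq_le T L (le_trans (by gcongr) hp) (hle.trans hl) hslope
  calc ((#A : ℝ) * τ * #T) ^ 2 ≤ #S * ∑ t, (valueCount T L t : ℝ) ^ 2 := by
        exact_mod_cast sq_card_mul_le_card_mul_sum_valueCount_sq hg hinj hS hT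
    _ ≤ #S * (100000 * (l + 1) * (#T * #L) * (√(#T * #L) + #T + #(A.image g))) := by gcongr
    _ ≤ _ := by
      have hL' : (#L : ℝ) ≤ #A * #B := by exact_mod_cast hL
      have hslopes : (#(A.image g) : ℝ) ≤ #A := by exact_mod_cast card_image_le
      gcongr

theorem mul_pow_four_mul_le_of_sq_le {a b s τ x k : ℝ} (ha : 0 < a) (hs : 0 ≤ s) (hk : 0 ≤ k)
    (hx : 1 ≤ x) (hab : a ≤ b)
    (h : (a * τ * x) ^ 2 ≤ s * (k * (x * (a * b)) * (√(x * (a * b)) + x + a)))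
    (hτ : 4 * k * (s * b) ≤ τ ^ 2 * a) : a * τ ^ 4 * x ≤ (4 * k * s) ^ 2 * b ^ 3 := by
  have hb : 0 < b := ha.trans_le hab
  set r := √(x * (a * b))
  have hr₂ : r ^ 2 = x * (a * b) := Real.sq_sqrt (by positivity)
  have har : a ≤ r := Real.le_sqrt_of_sq_le (by nlinarith [mul_pos ha hb])
  have hax : 0 < a * x := by positivity
  have hsum : a * τ ^ 2 * x ≤ k * s * b * (2 * r + x) := by
    refine le_of_mul_le_mul_left (a := a * x) ?_ hax
    calc a * x * (a * τ ^ 2 * x) = (a * τ * x) ^ 2 := by ring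
      _ ≤ s * (k * (x * (a * b)) * (r + x + r)) := h.trans (by gcongr)
      _ = a * x * (k * s * b * (2 * r + x)) := by ring
  have habsorbed : a * τ ^ 2 * x ≤ 4 * k * s * b * r := by
    have : 4 * k * (s * b) * x ≤ τ ^ 2 * a * x := by gcongr
    have : 0 ≤ k * s * b * r := by positivity
    linarith
  refine le_of_mul_le_mul_left (a := a * x) ?_ hax
  calc a * x * (a * τ ^ 4 * x) = (a * τ ^ 2 * x) ^ 2 := by ring
    _ ≤ (4 * k * s * b * r) ^ 2 := by gcongr
    _ = (4 * k * s * b) ^ 2 * r ^ 2 := by ring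
    _ = a * x * ((4 * k * s) ^ 2 * b ^ 3) := by rw [hr₂]; ring

theorem card_mul_pow_four_mul_card_le_of_subset {p l τ : ℕ} [CharP F p] (hg : ∀ a ∈ A, g a ≠ 0)
    (hinj : Set.InjOn g A) (hS : ∀ a ∈ A, ∀ b ∈ B, g a * (h a + b) ∈ S) (hA : A.Nonempty)
    (hAB : #A ≤ #B) (hBl : #B ≤ 2 ^ l) (hTl : #T ≤ 2 ^ (2 * l)) (hT : T ⊆ popularDiffs B τ)
    (hp : 400 * (#T * (#A * #B)) ≤ p ^ 2)
    (hτ : 400000 * (4 * l + 1) * (#S * #B) ≤ (τ : ℝ) ^ 2 * #A) :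
    (#A : ℝ) * τ ^ 4 * #T ≤ (400000 * (4 * l + 1) * #S) ^ 2 * #B ^ 3 := by
  rcases T.eq_empty_or_nonempty with rfl | hT₀
  · simp only [card_empty, Nat.cast_zero, mul_zero]
    positivity
  have hl : #T * (#A * #B) ≤ 2 ^ (4 * l) :=
    calc #T * (#A * #B) ≤ 2 ^ (2 * l) * (2 ^ l * 2 ^ l) := by
          gcongr
          exact hAB.trans hBl
      _ = 2 ^ (4 * l) := by ring
  have hsq := sq_card_mul_le_of_subset_popularDiffs hg hinj hS hT hp hl
  push_cast at hsq
  have := mul_pow_four_mul_le_of_sq_le (k := 100000 * (4 * l + 1)) (Nat.cast_pos.2 hA.card_pos)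
    (Nat.cast_nonneg _) (by positivity) (by exact_mod_cast hT₀.card_pos) (Nat.cast_le.2 hAB) hsq
    (by linarith)
  refine this.trans_eq ?_
  ring

theorem exists_subset_card_mul_le {α : Type*} {T : Finset α} {m n : ℕ} (hmn : m ≤ n) (hm : 0 < m)
    (hT : n < #T * m) : ∃ T' ⊆ T, #T' * m ≤ n ∧ n ≤ 2 * #T' * m := by
  obtain ⟨T', hT', hcard⟩ :=
    exists_subset_card_eq ((Nat.div_lt_iff_lt_mul hm).2 hT).le
  have hpos : 1 ≤ n / m := (Nat.one_le_div_iff hm).2 hmn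
  refine ⟨T', hT', hcard ▸ Nat.div_mul_le_self n m, ?_⟩
  calc n ≤ (n / m + 1) * m := by
        rw [mul_comm]
        exact (Nat.lt_mul_div_succ n hm).le
    _ ≤ 2 * #T' * m := by
      rw [hcard]
      gcongr
      omega

theorem mul_pow_three_le_of_sq_mul_le {a b s τ k : ℝ} (hb : 0 ≤ b) (hτ : 0 ≤ τ) (hk : 1 ≤ k)
    (hs : 0 ≤ s) (hτs : τ ≤ s) (h : τ ^ 2 * a ≤ k * (s * b)) : a * τ ^ 3 ≤ (k * s) ^ 2 * b :=
  calc a * τ ^ 3 = τ ^ 2 * a * τ := by ring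
    _ ≤ k * (s * b) * s := by gcongr
    _ = k * s ^ 2 * b := by ring
    _ ≤ k ^ 2 * s ^ 2 * b := by
      gcongr
      exact le_self_pow₀ hk two_ne_zero
    _ = (k * s) ^ 2 * b := by ring

theorem mul_pow_three_le_of_sq_le {a b s τ p k : ℝ} (hb : 1 ≤ b) (hτ : 0 ≤ τ)
    (hk : 100 ≤ k) (hab : a ≤ b) (hbs : b ≤ s) (hτb : τ ≤ b) (hp : b ^ 5 ≤ p ^ 3)
    (h : p ^ 2 ≤ 400 * (a * b)) : a * τ ^ 3 ≤ (k * s) ^ 2 * b := by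
  have hb₂ : b ^ 2 ≤ 8000 := by
    have : b ^ 6 * (b ^ 2) ^ 2 ≤ b ^ 6 * 8000 ^ 2 :=
      calc b ^ 6 * (b ^ 2) ^ 2 = (b ^ 5) ^ 2 := by ring
        _ ≤ (p ^ 3) ^ 2 := by gcongr
        _ = (p ^ 2) ^ 3 := by ring
        _ ≤ (400 * (b * b)) ^ 3 := pow_le_pow_left₀ (sq_nonneg p) (h.trans (by gcongr)) 3
        _ = b ^ 6 * 8000 ^ 2 := by ring
    exact le_of_sq_le_sq (le_of_mul_le_mul_left this (by positivity)) (by norm_num)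
  calc a * τ ^ 3 ≤ b * b ^ 3 := by gcongr
    _ = b ^ 2 * b ^ 2 := by ring
    _ ≤ 8000 * s ^ 2 * 1 := by
      rw [mul_one]
      gcongr
    _ ≤ k ^ 2 * s ^ 2 * b := by
      gcongr
      nlinarith
    _ = (k * s) ^ 2 * b := by ring

theorem mul_pow_three_le_of_mul_pow_four_mul_le {a b s τ p k x : ℝ} (ha : 0 ≤ a) (hb : 0 < b)
    (hτ : 0 ≤ τ) (hk : 400000 ≤ k) (hab : a ≤ b) (hbs : b ≤ s) (hp : b ^ 5 ≤ p ^ 3)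
    (hpx : p ^ 2 ≤ 800 * (x * (a * b))) (h : a * τ ^ 4 * x ≤ (k * s) ^ 2 * b ^ 3) :
    a * τ ^ 3 ≤ (k * s) ^ 2 * b := by
  have hmul : τ ^ 4 * p ^ 2 ≤ 800 * (k * s) ^ 2 * b ^ 4 :=
    calc τ ^ 4 * p ^ 2 ≤ τ ^ 4 * (800 * (x * (a * b))) := by gcongr
      _ = 800 * b * (a * τ ^ 4 * x) := by ring
      _ ≤ 800 * b * ((k * s) ^ 2 * b ^ 3) := by gcongr
      _ = _ := by ring
  have hτ₁₂ : τ ^ 12 ≤ 800 ^ 3 * (k * s) ^ 6 * b ^ 2 := by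
    refine le_of_mul_le_mul_left (a := b ^ 10) ?_ (by positivity)
    calc b ^ 10 * τ ^ 12 = (b ^ 5) ^ 2 * τ ^ 12 := by ring
      _ ≤ (p ^ 3) ^ 2 * τ ^ 12 := by gcongr
      _ = (τ ^ 4 * p ^ 2) ^ 3 := by ring
      _ ≤ (800 * (k * s) ^ 2 * b ^ 4) ^ 3 := pow_le_pow_left₀ (by positivity) hmul 3
      _ = _ := by ring
  have hks : 800 ^ 3 * b ^ 2 ≤ (k * s) ^ 2 :=
    calc 800 ^ 3 * b ^ 2 ≤ 400000 ^ 2 * s ^ 2 := by gcongr; norm_num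
      _ ≤ k ^ 2 * s ^ 2 := by gcongr
      _ = (k * s) ^ 2 := by ring
  refine (pow_le_pow_iff_left₀ (by positivity) (by positivity) four_ne_zero).1 ?_
  calc (a * τ ^ 3) ^ 4 = a ^ 4 * τ ^ 12 := by ring
    _ ≤ b ^ 4 * (800 ^ 3 * (k * s) ^ 6 * b ^ 2) := by gcongr
    _ = b ^ 4 * (k * s) ^ 6 * (800 ^ 3 * b ^ 2) := by ring
    _ ≤ b ^ 4 * (k * s) ^ 6 * (k * s) ^ 2 := by gcongr
    _ = ((k * s) ^ 2 * b) ^ 4 := by ring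

theorem card_mul_pow_three_le_of_sq_lt {p l τ : ℕ} [CharP F p] (hg : ∀ a ∈ A, g a ≠ 0)
    (hinj : Set.InjOn g A) (hS : ∀ a ∈ A, ∀ b ∈ B, g a * (h a + b) ∈ S) (hA : A.Nonempty)
    (hAB : #A ≤ #B) (hBS : #B ≤ #S) (hp : #B ^ 5 ≤ p ^ 3) (hBl : #B ≤ 2 ^ l) (hτ : 1 ≤ τ)
    (hτB : τ ≤ #B) (hbig : 400000 * (4 * l + 1) * (#S * #B) ≤ (τ : ℝ) ^ 2 * #A)
    (hlarge : p ^ 2 < 400 * (#(popularDiffs B τ) * (#A * #B))) :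
    (#A : ℝ) * τ ^ 3 ≤ (400000 * (4 * l + 1) * #S) ^ 2 * #B := by
  have hk : (400000 : ℝ) ≤ 400000 * (4 * l + 1) := by linarith [Nat.cast_nonneg (α := ℝ) l]
  have hab : (#A : ℝ) ≤ #B := Nat.cast_le.2 hAB
  have hbs : (#B : ℝ) ≤ #S := Nat.cast_le.2 hBS
  have hτb : (τ : ℝ) ≤ #B := Nat.cast_le.2 hτB
  have hb : (1 : ℝ) ≤ #B := Nat.one_le_cast.2 (hA.card_pos.trans_le hAB)
  have hp' : (#B : ℝ) ^ 5 ≤ (p : ℝ) ^ 3 := by exact_mod_cast hp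
  rcases lt_or_ge (p ^ 2) (400 * (#A * #B)) with hpAB | hpAB
  · refine mul_pow_three_le_of_sq_le hb (Nat.cast_nonneg _) (by linarith) hab
      hbs hτb hp' ?_
    exact_mod_cast hpAB.le
  · have hm : 0 < 400 * (#A * #B) :=
      Nat.mul_pos (by norm_num) (Nat.mul_pos hA.card_pos (hA.card_pos.trans_le hAB))
    obtain ⟨T, hT, hT₁, hT₂⟩ := exists_subset_card_mul_le (T := popularDiffs B τ) hpAB hm
      (by linarith)
    refine mul_pow_three_le_of_mul_pow_four_mul_le (x := #T) (Nat.cast_nonneg _) (by linarith)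
      (Nat.cast_nonneg _) hk hab hbs hp' ?_ (card_mul_pow_four_mul_card_le_of_subset hg hinj hS hA
        hAB hBl ((card_le_card hT).trans (card_popularDiffs_le hτ hBl)) hT (by linarith) hbig)
    have : (p : ℝ) ^ 2 ≤ 2 * #T * (400 * (#A * #B)) := by exact_mod_cast hT₂
    linarith

theorem card_mul_pow_four_mul_card_popularDiffs_le {p l τ : ℕ} [CharP F p]
    (hg : ∀ a ∈ A, g a ≠ 0) (hinj : Set.InjOn g A) (hS : ∀ a ∈ A, ∀ b ∈ B, g a * (h a + b) ∈ S)
    (hA : A.Nonempty) (hAB : #A ≤ #B) (hBS : #B ≤ #S) (hp : #B ^ 5 ≤ p ^ 3) (hBl : #B ≤ 2 ^ l)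
    (hτ : 1 ≤ τ) :
    (#A : ℝ) * τ ^ 4 * #(popularDiffs B τ) ≤ (400000 * (4 * l + 1) * #S) ^ 2 * #B ^ 3 := by
  rcases (popularDiffs B τ).eq_empty_or_nonempty with hempty | ⟨t, ht⟩
  · rw [hempty, card_empty, Nat.cast_zero, mul_zero]
    positivity
  have hτB : τ ≤ #B := (mem_popularDiffs.1 ht).trans (diffCount_le_card B t)
  rcases le_total ((τ : ℝ) ^ 2 * #A) (400000 * (4 * l + 1) * (#S * #B)) with hsmall | hbig
  · have hk : (1 : ℝ) ≤ 400000 * (4 * l + 1) := by linarith [Nat.cast_nonneg (α := ℝ) l]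
    exact mul_pow_four_mul_card_popularDiffs_le (sq_nonneg _)
      (mul_pow_three_le_of_sq_mul_le (Nat.cast_nonneg _) (Nat.cast_nonneg _) hk (Nat.cast_nonneg _)
        (Nat.cast_le.2 (hτB.trans hBS)) hsmall)
  rcases lt_or_ge (p ^ 2) (400 * (#(popularDiffs B τ) * (#A * #B))) with hlarge | hlarge
  · exact mul_pow_four_mul_card_popularDiffs_le (sq_nonneg _)
      (card_mul_pow_three_le_of_sq_lt hg hinj hS hA hAB hBS hp hBl hτ hτB hbig hlarge)
  · exact card_mul_pow_four_mul_card_le_of_subset hg hinj hS hA hAB hBl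
      (card_popularDiffs_le hτ hBl) Subset.rfl hlarge hbig

theorem card_mul_sum_diffCount_pow_four_le {p l : ℕ} [CharP F p]
    (hg : ∀ a ∈ A, g a ≠ 0) (hinj : Set.InjOn g A) (hS : ∀ a ∈ A, ∀ b ∈ B, g a * (h a + b) ∈ S)
    (hA : A.Nonempty) (hAB : #A ≤ #B) (hp : #B ^ 5 ≤ p ^ 3) (hBl : #B ≤ 2 ^ l) :
    (#A : ℝ) * ∑ t, (diffCount B t : ℝ) ^ 4 ≤
      16 * 400000 ^ 2 * (4 * l + 1) ^ 3 * #S ^ 2 * #B ^ 3 := by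
  have hBS := card_le_card_of_mul_add_mem hg hS hA
  have hdyadic : ∑ t, (diffCount B t : ℝ) ^ 4 ≤
      ∑ k ∈ range (l + 1), (2 * 2 ^ k) ^ 4 * (#(popularDiffs B (2 ^ k)) : ℝ) := by
    have := sum_diffCount_pow_mul_le four_ne_zero hBl 1
    simp only [Pi.one_apply, mul_one, sum_const, smul_eq_mul] at this
    exact_mod_cast this
  calc (#A : ℝ) * ∑ t, (diffCount B t : ℝ) ^ 4
      ≤ #A * ∑ k ∈ range (l + 1), (2 * 2 ^ k) ^ 4 * (#(popularDiffs B (2 ^ k)) : ℝ) := by gcongr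
    _ = ∑ k ∈ range (l + 1), 16 * (#A * (2 ^ k : ℕ) ^ 4 * #(popularDiffs B (2 ^ k)) : ℝ) := by
      rw [mul_sum]
      refine sum_congr rfl fun k _ => ?_
      push_cast
      ring
    _ ≤ ∑ k ∈ range (l + 1), 16 * ((400000 * (4 * l + 1) * #S) ^ 2 * (#B : ℝ) ^ 3) := by
      refine sum_le_sum fun k _ => mul_le_mul_of_nonneg_left ?_ (by norm_num)
      exact card_mul_pow_four_mul_card_popularDiffs_le hg hinj hS hA hAB hBS hp hBl
        Nat.one_le_two_pow
    _ = 16 * 400000 ^ 2 * ((l + 1) * (4 * l + 1) ^ 2) * #S ^ 2 * #B ^ 3 := by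
      rw [sum_const, card_range, nsmul_eq_mul]
      push_cast
      ring
    _ ≤ 16 * 400000 ^ 2 * ((4 * l + 1) * (4 * l + 1) ^ 2) * #S ^ 2 * #B ^ 3 := by
      gcongr
      linarith [Nat.cast_nonneg (α := ℝ) l]
    _ = _ := by ring

end FourthMoment

/-! ### Sums and differences in a finite abelian group -/

section PopularSums

open scoped Combinatorics.Additive

variable {G : Type*} [AddCommGroup G] [DecidableEq G] {B C P U V : Finset G}

theorem diffCount_neg (B : Finset G) (t : G) : diffCount B (-t) = diffCount B t := by
  rw [diffCount, addConvolution_neg, neg_neg, diffCount]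

theorem addConvolution_eq_card_filter (B X : Finset G) (t : G) :
    B.addConvolution X t = #{x ∈ X | t - x ∈ B} := by
  refine card_nbij' Prod.snd (fun x => (t - x, x)) ?_ ?_ ?_ ?_
  · rintro ⟨b, x⟩ hw
    simp only [coe_filter, mem_product, Set.mem_ofPred_eq] at hw ⊢
    exact ⟨hw.1.2, by rw [← hw.2, add_sub_cancel_right]; exact hw.1.1⟩
  · intro x hx
    simp only [coe_filter, mem_product, Set.mem_ofPred_eq] at hx ⊢
    exact ⟨⟨hx.2, hx.1⟩, sub_add_cancel t x⟩
  · rintro ⟨b, x⟩ hw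
    simp only [coe_filter, mem_product, Set.mem_ofPred_eq] at hw
    simp only [← hw.2, add_sub_cancel_right]
  · exact fun _ _ => rfl

theorem sum_card_filter_add_mem (B C V : Finset G) :
    ∑ c ∈ C, #{b ∈ B | b + c ∈ V} = ∑ t ∈ V, B.addConvolution C t := by
  simp only [addConvolution]
  rw [sum_card_fiberwise_eq_card_filter]
  simp only [card_filter, sum_product_right]

theorem card_filter_sub_mem_and_sub_mem [Fintype G] (B : Finset G) (x y : G) :
    #{t | t - x ∈ B ∧ t - y ∈ B} = diffCount B (y - x) := by
  rw [diffCount_eq_card_filter]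
  refine card_nbij' (· - x) (· + x) ?_ ?_ (fun t _ => sub_add_cancel t x)
    fun b _ => add_sub_cancel_right b x
  · intro t ht
    simp only [coe_filter, mem_univ, true_and, Set.mem_ofPred_eq] at ht ⊢
    rwa [sub_sub_sub_cancel_right]
  · intro b hb
    simp only [coe_filter, mem_univ, true_and, Set.mem_ofPred_eq] at hb ⊢
    rwa [add_sub_cancel_right, add_sub_assoc, ← neg_sub y x, ← sub_eq_add_neg]

theorem sum_addConvolution_mul_addConvolution_sub [Fintype G] (B X Y : Finset G) (s : G) :
    ∑ t, B.addConvolution X t * B.addConvolution Y (t - s) =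
      ∑ x ∈ X, ∑ y ∈ Y, diffCount B (s - (x - y)) := by
  have hcount (x y : G) : diffCount B (s - (x - y)) =
      ∑ t, (if t - x ∈ B then 1 else 0) * if t - s - y ∈ B then 1 else 0 := by
    rw [← sub_add, add_comm, ← add_sub_assoc, add_comm, ← card_filter_sub_mem_and_sub_mem,
      card_filter]
    simp only [ite_and, ite_mul, one_mul, zero_mul, sub_sub]
  simp only [addConvolution_eq_card_filter, card_filter, sum_mul_sum, hcount]
  rw [sum_comm]
  exact sum_congr rfl fun x _ => sum_comm

theorem sum_sum_sub [Fintype G] (X : Finset G) (f : G → ℕ) :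
    ∑ x ∈ X, ∑ y ∈ X, f (x - y) = ∑ t, diffCount X t * f t := by
  rw [← sum_product', ← sum_fiberwise (X ×ˢ X) fun z => z.1 - z.2]
  refine sum_congr rfl fun t _ => ?_
  rw [diffCount, ← card_sub_eq, ← smul_eq_mul, ← sum_const]
  exact sum_congr rfl fun z hz => by rw [(mem_filter.1 hz).2]

theorem sq_sum_sum_diffCount_sub_le [Finite G] (B X Y : Finset G) :
    (∑ x ∈ X, ∑ y ∈ Y, diffCount B (x - y)) ^ 2 ≤ E[B, X] * E[B, Y] := by
  cases nonempty_fintype G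
  have hsum := sum_addConvolution_mul_addConvolution_sub B X Y 0
  simp only [sub_zero, zero_sub, diffCount_neg] at hsum
  rw [← hsum, addEnergy_eq_sum_addConvolution_sq, addEnergy_eq_sum_addConvolution_sq]
  exact sum_mul_sq_le_sq_mul_sq _ _ _

/-- The first terms of the representations of `x` as a difference of two elements of `C`. -/
def diffReps (C : Finset G) (x : G) : Finset G := {c ∈ C | c - x ∈ C}

theorem card_diffReps (C : Finset G) (x : G) : #(diffReps C x) = diffCount C x :=
  (diffCount_eq_card_filter C x).symm

theorem sum_sum_sum_diffReps_sub [Fintype G] (C : Finset G) (f : G → ℕ) :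
    ∑ x, ∑ u ∈ diffReps C x, ∑ v ∈ diffReps C x, f (u - v) =
      ∑ t, diffCount C t ^ 2 * f t := by
  have hcount (u v : G) : ∑ x, (if u - x ∈ C then if v - x ∈ C then f (u - v) else 0 else 0) =
      diffCount C (u - v) * f (u - v) := by
    simp only [← ite_and]
    rw [← sum_filter, sum_const, smul_eq_mul, diffCount_eq_card_filter]
    congr 1
    refine card_nbij' (u - ·) (u - ·) ?_ ?_ (fun x _ => sub_sub_cancel u x)
      fun c _ => sub_sub_cancel u c
    · intro x hx
      simp only [coe_filter, mem_univ, true_and, Set.mem_ofPred_eq] at hx ⊢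
      rwa [sub_sub_sub_cancel_left]
    · intro c hc
      simp only [coe_filter, mem_univ, true_and, Set.mem_ofPred_eq] at hc ⊢
      rwa [sub_sub_cancel, sub_sub_eq_add_sub, add_comm, add_sub_assoc, ← neg_sub u v,
        ← sub_eq_add_neg]
  calc ∑ x, ∑ u ∈ diffReps C x, ∑ v ∈ diffReps C x, f (u - v)
      = ∑ u ∈ C, ∑ v ∈ C, diffCount C (u - v) * f (u - v) := by
        simp only [diffReps, sum_filter, ← hcount]
        rw [sum_comm]
        refine sum_congr rfl fun u _ => ?_
        rw [sum_comm]
        refine sum_congr rfl fun x _ => ?_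
        split_ifs <;> simp only [sum_const_zero]
    _ = ∑ t, diffCount C t * (diffCount C t * f t) := sum_sum_sub C fun t => diffCount C t * f t
    _ = _ := by simp only [sq, mul_assoc]

theorem card_le_two_mul_card_filter_add_mem_diffReps
    (hC : ∀ c ∈ C, 4 * #{b ∈ B | b + c ∉ P} ≤ #B) {x u : G} (hu : u ∈ diffReps C x) :
    #B ≤ 2 * #{b ∈ B | b + u ∈ diffReps P x} := by
  have hu' := mem_filter.1 hu
  have hsub : B ⊆ {b ∈ B | b + u ∈ diffReps P x} ∪
      ({b ∈ B | b + u ∉ P} ∪ {b ∈ B | b + (u - x) ∉ P}) := by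
    intro b hb
    simp only [diffReps, mem_union, mem_filter, add_sub_assoc]
    tauto
  have hcard := (card_le_card hsub).trans ((card_union_le _ _).trans
    (Nat.add_le_add_left (card_union_le _ _) _))
  have := hC u hu'.1
  have := hC (u - x) hu'.2
  omega

theorem sq_card_mul_pow_four_card_le [Finite G] (h : ∀ u ∈ U, #B ≤ 2 * #{b ∈ B | b + u ∈ V}) :
    #U ^ 2 * #B ^ 4 ≤ 16 * #V ^ 2 * ∑ u ∈ U, ∑ v ∈ U, diffCount B (u - v) ^ 2 := by
  rcases U.eq_empty_or_nonempty with rfl | hU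
  · simp only [card_empty, ne_eq, OfNat.ofNat_ne_zero, not_false_eq_true, zero_pow, zero_mul,
      Nat.zero_le]
  cases nonempty_fintype G
  set N := ∑ t ∈ V, B.addConvolution U t with hN
  have hcard : #U * #B ≤ 2 * N := by
    rw [hN, ← sum_card_filter_add_mem, mul_sum, ← smul_eq_mul]
    exact card_nsmul_le_sum _ _ _ h
  have hN₂ : N ^ 2 ≤ #V * ∑ u ∈ U, ∑ v ∈ U, diffCount B (u - v) := by
    have hsum := sum_addConvolution_mul_addConvolution_sub B U U 0
    simp only [sub_zero, zero_sub, diffCount_neg, ← sq] at hsum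
    rw [← hsum]
    exact sq_sum_le_card_mul_sum_sq.trans
      (Nat.mul_le_mul_left _ (sum_le_sum_of_subset (subset_univ V)))
  have hcs : (∑ u ∈ U, ∑ v ∈ U, diffCount B (u - v)) ^ 2 ≤
      #U ^ 2 * ∑ u ∈ U, ∑ v ∈ U, diffCount B (u - v) ^ 2 := by
    rw [← sum_product', ← sum_product', sq #U, ← card_product]
    exact sq_sum_le_card_mul_sum_sq
  refine Nat.le_of_mul_le_mul_left ?_ (pow_pos hU.card_pos 2)
  calc #U ^ 2 * (#U ^ 2 * #B ^ 4) = (#U * #B) ^ 4 := by ring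
    _ ≤ (2 * N) ^ 4 := by gcongr
    _ = 16 * (N ^ 2) ^ 2 := by ring
    _ ≤ 16 * (#V * ∑ u ∈ U, ∑ v ∈ U, diffCount B (u - v)) ^ 2 := by gcongr
    _ = 16 * #V ^ 2 * (∑ u ∈ U, ∑ v ∈ U, diffCount B (u - v)) ^ 2 := by ring
    _ ≤ 16 * #V ^ 2 * (#U ^ 2 * ∑ u ∈ U, ∑ v ∈ U, diffCount B (u - v) ^ 2) := by gcongr
    _ = _ := by ring

theorem sq_diffCount_mul_pow_four_card_le [Finite G]
    (hC : ∀ c ∈ C, 4 * #{b ∈ B | b + c ∉ P} ≤ #B) (x : G) :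
    diffCount C x ^ 2 * #B ^ 4 ≤ 16 * diffCount P x ^ 2 *
      ∑ u ∈ diffReps C x, ∑ v ∈ diffReps C x, diffCount B (u - v) ^ 2 := by
  rw [← card_diffReps, ← card_diffReps]
  exact sq_card_mul_pow_four_card_le fun u hu =>
    card_le_two_mul_card_filter_add_mem_diffReps hC hu

theorem sq_mul_diffCount_le [Fintype G] {q : ℝ} (hq : 0 ≤ q)
    (hP : ∀ t ∈ P, q ≤ B.addConvolution C t) (x : G) :
    q ^ 2 * diffCount P x ≤ (∑ y, diffCount C y * diffCount B (x - y) : ℕ) := by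
  rw [← sum_sum_sub C fun y => diffCount B (x - y), ← sum_addConvolution_mul_addConvolution_sub,
    ← card_diffReps]
  push_cast
  calc q ^ 2 * (#(diffReps P x) : ℝ) = ∑ _t ∈ diffReps P x, q * q := by
        rw [sum_const, nsmul_eq_mul]
        ring
    _ ≤ ∑ t ∈ diffReps P x, (B.addConvolution C t : ℝ) * B.addConvolution C (t - x) :=
        sum_le_sum fun t ht => mul_le_mul (hP _ (mem_filter.1 ht).1) (hP _ (mem_filter.1 ht).2) hq
          (Nat.cast_nonneg _)
    _ ≤ _ := sum_le_sum_of_subset_of_nonneg (subset_univ _) fun _ _ _ => by positivity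

end PopularSums

/-! ### The weak difference moment -/

theorem sq_mul_le_pow_three {x y : ℝ} (hx : 0 ≤ x) (hy : 0 ≤ y) :
    27 * (x ^ 2 * y) ≤ (2 * x + y) ^ 3 := by
  have : 0 ≤ (x - y) ^ 2 * (8 * x + y) := by positivity
  linarith

theorem three_mul_lt_of_lt_pow_three_mul {n R S c x y : ℝ} (hn : 0 ≤ n) (hR : 0 < R) (hS : 0 < S)
    (hx : 0 ≤ x) (hy : 0 ≤ y) (hc : c ≤ x ^ 2 * y) (hlt : R ^ 2 * S < n ^ 3 * c) :
    3 * R * S < n * (2 * (S * x) + R * y) := by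
  refine lt_of_pow_lt_pow_left₀ 3 (by positivity) ?_
  calc (3 * R * S) ^ 3 = 27 * R * S ^ 2 * (R ^ 2 * S) := by ring
    _ < 27 * R * S ^ 2 * (n ^ 3 * c) := by gcongr
    _ ≤ 27 * R * S ^ 2 * (n ^ 3 * (x ^ 2 * y)) := by gcongr
    _ = n ^ 3 * (27 * ((S * x) ^ 2 * (R * y))) := by ring
    _ ≤ n ^ 3 * (2 * (S * x) + R * y) ^ 3 := by
      gcongr
      exact sq_mul_le_pow_three (by positivity) (by positivity)
    _ = (n * (2 * (S * x) + R * y)) ^ 3 := by ring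

theorem card_pow_three_mul_le {ι : Type*} {s : Finset ι} {ρ γ : ι → ℝ} {c : ℝ} (hc : 0 < c)
    (hρ : ∀ x ∈ s, 0 ≤ ρ x) (h : ∀ x ∈ s, c ≤ ρ x ^ 2 * γ x) :
    (#s : ℝ) ^ 3 * c ≤ (∑ x ∈ s, ρ x) ^ 2 * ∑ x ∈ s, γ x := by
  rcases s.eq_empty_or_nonempty with rfl | hs
  · simp only [card_empty, Nat.cast_zero, ne_eq, OfNat.ofNat_ne_zero, not_false_eq_true, zero_pow,
      zero_mul, sum_empty, le_refl]
  have hγ : ∀ x ∈ s, 0 < γ x := fun x hx =>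
    pos_of_mul_pos_right (hc.trans_le (h x hx)) (sq_nonneg _)
  have hρ' : ∀ x ∈ s, 0 < ρ x := fun x hx => (hρ x hx).lt_of_ne' fun h₀ => by
    have := hc.trans_le (h x hx)
    rw [h₀, zero_pow two_ne_zero, zero_mul] at this
    exact this.false
  by_contra! hlt
  have hsum := sum_lt_sum_of_nonempty hs fun x hx => three_mul_lt_of_lt_pow_three_mul
    (Nat.cast_nonneg _) (sum_pos hρ' hs) (sum_pos hγ hs) (hρ x hx) (hγ x hx).le (h x hx) hlt
  rw [sum_const, nsmul_eq_mul, ← mul_sum, sum_add_distrib, ← mul_sum, ← mul_sum, ← mul_sum]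
    at hsum
  linarith

theorem exists_subset_mul_card_pow_le {α : Type*} {W : Finset α → ℕ} {C : Finset α} {n : ℕ}
    (hW : ∀ X : Finset α, X.Nonempty → 1 ≤ W X) (hC : C.Nonempty) (hn : n ≠ 0)
    (hWC : W C ≤ 2 ^ n) :
    ∃ C₀ ⊆ C, C₀.Nonempty ∧ #C ≤ 2 * #C₀ ∧
      ∀ C' ⊆ C₀, C'.Nonempty → W C₀ * #C' ^ n ≤ W C' * #C₀ ^ n := by
  classical
  obtain ⟨C₀, hC₀, hmin⟩ := exists_min_image {X ∈ C.powerset | X.Nonempty}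
    (fun X => (W X : ℝ) / (#X : ℝ) ^ n) ⟨C, mem_filter.2 ⟨mem_powerset_self C, hC⟩⟩
  obtain ⟨hsub, hne⟩ := mem_filter.1 hC₀
  have hmin' : ∀ X ⊆ C, X.Nonempty → W C₀ * #X ^ n ≤ W X * #C₀ ^ n := fun X hX hXne => by
    have hle := hmin X (mem_filter.2 ⟨mem_powerset.2 hX, hXne⟩)
    have hX₀ : (0 : ℝ) < #X := Nat.cast_pos.2 hXne.card_pos
    have hC₀ : (0 : ℝ) < #C₀ := Nat.cast_pos.2 hne.card_pos
    rw [div_le_div_iff₀ (by positivity) (by positivity)] at hle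
    exact_mod_cast hle
  rw [mem_powerset] at hsub
  refine ⟨C₀, hsub, hne, ?_, fun C' hC' => hmin' C' (hC'.trans hsub)⟩
  refine (Nat.pow_le_pow_iff_left hn).1 ?_
  calc #C ^ n ≤ W C₀ * #C ^ n := Nat.le_mul_of_pos_left _ (hW C₀ hne)
    _ ≤ W C * #C₀ ^ n := hmin' C subset_rfl hC
    _ ≤ 2 ^ n * #C₀ ^ n := by gcongr
    _ = (2 * #C₀) ^ n := (mul_pow _ _ _).symm

theorem pow_le_two_mul_pow {a b n : ℕ} (hn : n ≠ 0) (h : (2 * n - 1) * a ≤ 2 * n * b) :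
    a ^ n ≤ 2 * b ^ n := by
  have hn₁ : (1 : ℝ) ≤ n := Nat.one_le_cast.2 (Nat.one_le_iff_ne_zero.2 hn)
  have hbase : (1 + -(1 / (2 * n)) : ℝ) * a ≤ b := by
    have : ((2 * n - 1 : ℕ) : ℝ) * a ≤ 2 * n * b := by exact_mod_cast h
    rw [Nat.cast_sub (by omega)] at this
    push_cast at this
    rw [← mul_le_mul_iff_right₀ (by positivity : (0 : ℝ) < 2 * n), ← mul_assoc]
    refine le_trans (le_of_eq ?_) this
    field_simp
    ring
  have hinv : (1 : ℝ) / (2 * n) ≤ 1 := (div_le_one (by positivity)).2 (by linarith)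
  have hbernoulli := one_add_mul_le_pow (a := -(1 / (2 * (n : ℝ)))) (by linarith) n
  have hhalf : 1 + (n : ℝ) * -(1 / (2 * n)) = 1 / 2 := by
    field_simp
    norm_num
  rw [hhalf] at hbernoulli
  suffices (a : ℝ) ^ n ≤ 2 * b ^ n by exact_mod_cast this
  calc (a : ℝ) ^ n = 2 * (1 / 2 * a ^ n) := by ring
    _ ≤ 2 * ((1 + -(1 / (2 * n))) ^ n * a ^ n) := by gcongr
    _ = 2 * ((1 + -(1 / (2 * n))) * a) ^ n := by rw [mul_pow]
    _ ≤ 2 * b ^ n := by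
      gcongr
      exact mul_nonneg (by linarith) (Nat.cast_nonneg a)

theorem exists_subset_stable {α : Type*} [DecidableEq α] {W : Finset α → ℕ} {C : Finset α} {n : ℕ}
    (hW : ∀ X : Finset α, X.Nonempty → 1 ≤ W X) (hC : C.Nonempty) (hn : n ≠ 0)
    (hWC : W C ≤ 2 ^ n) :
    ∃ C₀ ⊆ C, #C ≤ 2 * #C₀ ∧
      ∀ C' ⊆ C₀, 2 * n * #(C₀ \ C') ≤ #C₀ → C'.Nonempty ∧ W C₀ ≤ 2 * W C' := by
  obtain ⟨C₀, hsub, hne, hcard, hmin⟩ := exists_subset_mul_card_pow_le hW hC hn hWC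
  refine ⟨C₀, hsub, hcard, fun C' hC' hsmall => ?_⟩
  have hpos := hne.card_pos
  have hsum := card_sdiff_add_card_eq_card hC'
  have hne' : C'.Nonempty := by
    rw [nonempty_iff_ne_empty]
    rintro rfl
    rw [sdiff_empty] at hsmall
    nlinarith [Nat.one_le_iff_ne_zero.2 hn]
  refine ⟨hne', Nat.le_of_mul_le_mul_left (?_ : #C₀ ^ n * W C₀ ≤ _) (pow_pos hpos n)⟩
  have hpow : #C₀ ^ n ≤ 2 * #C' ^ n := pow_le_two_mul_pow hn (by
    rw [Nat.sub_mul, one_mul, tsub_le_iff_right, ← hsum, mul_add, add_comm]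
    gcongr
    rwa [hsum])
  calc #C₀ ^ n * W C₀ ≤ 2 * #C' ^ n * W C₀ := by gcongr
    _ = 2 * (W C₀ * #C' ^ n) := by ring
    _ ≤ 2 * (W C' * #C₀ ^ n) := Nat.mul_le_mul_left 2 (hmin C' hC' hne')
    _ = #C₀ ^ n * (2 * W C') := by ring

section WeakMoment

variable {G : Type*} [AddCommGroup G] [DecidableEq G] [Fintype G] {C : Finset G}

/-- The maximum of `τ ^ 4 * #(popularDiffs C τ) ^ 3` over all `τ`, that is, the fourth power of the
weak `ℓ^(4/3)` quasinorm of `diffCount C`. Only thresholds `τ ≤ #C` have popular differences. -/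
def weakDiffMoment (C : Finset G) : ℕ :=
  (range (#C + 1)).sup fun τ => τ ^ 4 * #(popularDiffs C τ) ^ 3

theorem le_weakDiffMoment (C : Finset G) (τ : ℕ) :
    τ ^ 4 * #(popularDiffs C τ) ^ 3 ≤ weakDiffMoment C := by
  rcases (popularDiffs C τ).eq_empty_or_nonempty with hempty | ⟨t, ht⟩
  · rw [hempty, card_empty, zero_pow three_ne_zero, mul_zero]
    exact Nat.zero_le _
  · exact le_sup (f := fun τ => τ ^ 4 * #(popularDiffs C τ) ^ 3)
      (mem_range_succ_iff.2 ((mem_popularDiffs.1 ht).trans (diffCount_le_card C t)))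

theorem one_le_weakDiffMoment (hC : C.Nonempty) : 1 ≤ weakDiffMoment C := by
  have hpos : 0 < #(popularDiffs C 1) :=
    card_pos.2 ⟨0, mem_popularDiffs.2 (by rw [diffCount_zero]; exact hC.card_pos)⟩
  refine le_trans ?_ (le_weakDiffMoment C 1)
  rw [one_pow, one_mul]
  exact Nat.one_le_pow _ _ hpos

theorem weakDiffMoment_le (C : Finset G) : weakDiffMoment C ≤ #C ^ 7 := by
  refine Finset.sup_le fun τ hτ => ?_
  calc τ ^ 4 * #(popularDiffs C τ) ^ 3 = τ * (τ * #(popularDiffs C τ)) ^ 3 := by ring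
    _ ≤ #C * (#C ^ 2) ^ 3 := by
      gcongr
      · exact mem_range_succ_iff.1 hτ
      · exact mul_card_popularDiffs_le C τ
    _ = #C ^ 7 := by ring

theorem exists_weakDiffMoment_eq (hC : C.Nonempty) :
    ∃ τ, 1 ≤ τ ∧ (popularDiffs C τ).Nonempty ∧
      weakDiffMoment C = τ ^ 4 * #(popularDiffs C τ) ^ 3 := by
  obtain ⟨τ, -, hτ⟩ := exists_mem_eq_sup (range (#C + 1)) nonempty_range_add_one
    fun τ => τ ^ 4 * #(popularDiffs C τ) ^ 3
  have hne : τ ^ 4 * #(popularDiffs C τ) ^ 3 ≠ 0 := by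
    rw [← hτ]
    exact Nat.one_le_iff_ne_zero.1 (one_le_weakDiffMoment hC)
  exact ⟨τ, Nat.one_le_iff_ne_zero.2 fun h => hne (by rw [h]; ring),
    card_ne_zero.1 fun h => hne (by rw [h]; ring), hτ⟩

end WeakMoment

/-! ### Combining energies and fourth moments -/

section Combination

open scoped Combinatorics.Additive

variable {G : Type*} [AddCommGroup G] [DecidableEq G] [Fintype G] {B C P X Y : Finset G}

omit [Fintype G] in
theorem mul_sum_sum_diffCount_sub_le [Finite G] {κ s t : ℝ} (hκ : 0 ≤ κ) (hs : 0 ≤ s) (ht : 0 ≤ t)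
    (hX : (E[B, X] : ℝ) ≤ κ * √(#X : ℝ) ^ 3) (hY : (E[B, Y] : ℝ) ≤ κ * √(#Y : ℝ) ^ 3)
    (hXY : s ^ 4 * #Y ^ 3 ≤ 2 * (t ^ 4 * #X ^ 3)) :
    s * (∑ x ∈ X, ∑ y ∈ Y, diffCount B (x - y) : ℕ) ≤ 2 * κ * t * √(#X : ℝ) ^ 3 := by
  set N := ∑ x ∈ X, ∑ y ∈ Y, diffCount B (x - y)
  have hx : √(#X : ℝ) ^ 2 = #X := Real.sq_sqrt (Nat.cast_nonneg _)
  have hy : √(#Y : ℝ) ^ 2 = #Y := Real.sq_sqrt (Nat.cast_nonneg _)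
  rw [← hx, ← hy] at hXY
  set x := √(#X : ℝ)
  set y := √(#Y : ℝ)
  have hN : (N : ℝ) ^ 2 ≤ κ * x ^ 3 * (κ * y ^ 3) := by
    have : (N : ℝ) ^ 2 ≤ E[B, X] * E[B, Y] := by exact_mod_cast sq_sum_sum_diffCount_sub_le B X Y
    exact this.trans (by gcongr)
  refine (pow_le_pow_iff_left₀ (by positivity) (by positivity) four_ne_zero).1 ?_
  calc (s * N) ^ 4 = s ^ 4 * (N ^ 2) ^ 2 := by ring
    _ ≤ s ^ 4 * (κ * x ^ 3 * (κ * y ^ 3)) ^ 2 := by gcongr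
    _ = κ ^ 4 * x ^ 6 * (s ^ 4 * (y ^ 2) ^ 3) := by ring
    _ ≤ κ ^ 4 * x ^ 6 * (2 * (t ^ 4 * (x ^ 2) ^ 3)) := by gcongr
    _ ≤ κ ^ 4 * x ^ 6 * (16 * (t ^ 4 * (x ^ 2) ^ 3)) := by
      gcongr
      norm_num
    _ = (2 * κ * t * x ^ 3) ^ 4 := by ring

theorem sum_sum_diffCount_mul_diffCount_sub_le {l : ℕ} (hl : #C ≤ 2 ^ l) (X : Finset G) :
    ∑ x ∈ X, ∑ y, diffCount C y * diffCount B (x - y) ≤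
      ∑ k ∈ range (l + 1), 2 * 2 ^ k *
        ∑ x ∈ X, ∑ y ∈ popularDiffs C (2 ^ k), diffCount B (x - y) := by
  simp only [mul_sum (s := X)]
  rw [sum_comm (s := range (l + 1))]
  refine sum_le_sum fun x _ => ?_
  simpa only [pow_one] using sum_diffCount_pow_mul_le one_ne_zero hl fun y => diffCount B (x - y)

theorem sq_mul_sum_diffCount_le {l τ : ℕ} {q κ : ℝ} (hq : 0 ≤ q) (hκ : 0 ≤ κ)
    (hP : ∀ t ∈ P, q ≤ B.addConvolution C t) (hl : #C ≤ 2 ^ l)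
    (hE : ∀ X : Finset G, #X ≤ 2 ^ (2 * l) → (E[B, X] : ℝ) ≤ κ * √(#X : ℝ) ^ 3)
    (hX : #X ≤ 2 ^ (2 * l)) (hC : weakDiffMoment C ≤ 2 * (τ ^ 4 * #X ^ 3)) :
    q ^ 2 * ∑ x ∈ X, (diffCount P x : ℝ) ≤ 4 * (l + 1) * κ * τ * √(#X : ℝ) ^ 3 := by
  have hlevel (k : ℕ) : (2 : ℝ) ^ k *
      (∑ x ∈ X, ∑ y ∈ popularDiffs C (2 ^ k), diffCount B (x - y) : ℕ) ≤
        2 * κ * τ * √(#X : ℝ) ^ 3 :=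
    mul_sum_sum_diffCount_sub_le hκ (by positivity) (Nat.cast_nonneg _) (hE X hX)
      (hE _ (card_popularDiffs_le Nat.one_le_two_pow hl))
      (by exact_mod_cast (le_weakDiffMoment C (2 ^ k)).trans hC)
  calc q ^ 2 * ∑ x ∈ X, (diffCount P x : ℝ) = ∑ x ∈ X, q ^ 2 * (diffCount P x : ℝ) := mul_sum ..
    _ ≤ ∑ x ∈ X, ((∑ y, diffCount C y * diffCount B (x - y) : ℕ) : ℝ) :=
        sum_le_sum fun x _ => sq_mul_diffCount_le hq hP x
    _ = (∑ x ∈ X, ∑ y, diffCount C y * diffCount B (x - y) : ℕ) := (Nat.cast_sum _ _).symm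
    _ ≤ (∑ k ∈ range (l + 1), 2 * 2 ^ k *
        ∑ x ∈ X, ∑ y ∈ popularDiffs C (2 ^ k), diffCount B (x - y) : ℕ) :=
        Nat.cast_le.2 (sum_sum_diffCount_mul_diffCount_sub_le hl X)
    _ = ∑ k ∈ range (l + 1), 2 * ((2 : ℝ) ^ k *
        (∑ x ∈ X, ∑ y ∈ popularDiffs C (2 ^ k), diffCount B (x - y) : ℕ)) := by
        rw [Nat.cast_sum]
        refine sum_congr rfl fun k _ => ?_
        rw [Nat.cast_mul, Nat.cast_mul, Nat.cast_pow, Nat.cast_ofNat, mul_assoc]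
    _ ≤ ∑ _k ∈ range (l + 1), 2 * (2 * κ * τ * √(#X : ℝ) ^ 3) :=
        sum_le_sum fun k _ => by linarith [hlevel k]
    _ = 4 * (l + 1) * κ * τ * √(#X : ℝ) ^ 3 := by
        rw [sum_const, card_range, nsmul_eq_mul]
        push_cast
        ring

omit [Fintype G] in
theorem sum_card_filter_add_notMem_le {q : ℝ} (hq : 0 ≤ q)
    (hP : ∀ t ∉ P, (B.addConvolution C t : ℝ) ≤ q) :
    ((∑ c ∈ C, #{b ∈ B | b + c ∉ P} : ℕ) : ℝ) ≤ #(B + C) * q := by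
  have hmem : ∑ c ∈ C, #{b ∈ B | b + c ∉ P} = ∑ c ∈ C, #{b ∈ B | b + c ∈ (B + C) \ P} := by
    refine sum_congr rfl fun c hc => congrArg card (filter_congr fun b hb => ?_)
    rw [mem_sdiff, and_iff_right (add_mem_add hb hc)]
  rw [hmem, sum_card_filter_add_mem, Nat.cast_sum]
  calc ∑ t ∈ (B + C) \ P, (B.addConvolution C t : ℝ) ≤ #((B + C) \ P) • q :=
        sum_le_card_nsmul _ _ _ fun t ht => hP t (mem_sdiff.1 ht).2
    _ ≤ #(B + C) * q := by
      rw [nsmul_eq_mul]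
      gcongr
      exact sdiff_subset

/-- The `c ∈ C` for which `b + c ∈ P` for at least three quarters of the `b ∈ B`. -/
def goodTranslates (B C P : Finset G) : Finset G := {c ∈ C | 4 * #{b ∈ B | b + c ∉ P} ≤ #B}

omit [Fintype G] in
theorem card_sdiff_goodTranslates_mul_le {q : ℝ} (hq : 0 ≤ q)
    (hP : ∀ t ∉ P, (B.addConvolution C t : ℝ) ≤ q) :
    (#(C \ goodTranslates B C P) : ℝ) * #B ≤ 4 * (#(B + C) * q) := by
  have hle : #(C \ goodTranslates B C P) * #B ≤ 4 * ∑ c ∈ C, #{b ∈ B | b + c ∉ P} := by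
    rw [mul_sum, ← smul_eq_mul]
    refine (card_nsmul_le_sum _ _ _ fun c hc => ?_).trans
      (sum_le_sum_of_subset (sdiff_subset (s := C) (t := goodTranslates B C P)))
    rw [mem_sdiff, goodTranslates, mem_filter] at hc
    exact (not_le.1 fun h => hc.2 ⟨hc.1, h⟩).le
  calc (#(C \ goodTranslates B C P) : ℝ) * #B
      ≤ 4 * (∑ c ∈ C, #{b ∈ B | b + c ∉ P} : ℕ) := by exact_mod_cast hle
    _ ≤ 4 * (#(B + C) * q) := by
      gcongr
      exact sum_card_filter_add_notMem_le hq hP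

omit [Fintype G] in
theorem mul_card_sdiff_goodTranslates_le {r M : ℝ} (hr : 0 < r) (hM : 0 < M) (hB : B.Nonempty)
    (hBC : #(B + C) ≤ M) (hP : ∀ t ∉ P, (B.addConvolution C t : ℝ) ≤ #B * #C / (4 * r * M)) :
    r * #(C \ goodTranslates B C P) ≤ #C := by
  refine le_of_mul_le_mul_right ?_ (Nat.cast_pos (α := ℝ).2 hB.card_pos)
  calc r * #(C \ goodTranslates B C P) * #B = r * (#(C \ goodTranslates B C P) * #B) := by ring
    _ ≤ r * (4 * (#(B + C) * (#B * #C / (4 * r * M)))) := by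
        exact mul_le_mul_of_nonneg_left (card_sdiff_goodTranslates_mul_le (by positivity) hP) hr.le
    _ ≤ r * (4 * (M * (#B * #C / (4 * r * M)))) := by gcongr
    _ = #C * #B := by field_simp

theorem card_pow_three_mul_sq_mul_le {τ : ℕ} (hτ : 1 ≤ τ) (hB : B.Nonempty)
    (hC : ∀ c ∈ C, 4 * #{b ∈ B | b + c ∉ P} ≤ #B) :
    (#(popularDiffs C τ) : ℝ) ^ 3 * (τ ^ 2 * #B ^ 4) ≤
      16 * (∑ x ∈ popularDiffs C τ, (diffCount P x : ℝ)) ^ 2 * mixedFourthMoment B C := by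
  set γ : G → ℕ := fun x => ∑ u ∈ diffReps C x, ∑ v ∈ diffReps C x, diffCount B (u - v) ^ 2
    with hγ
  have hpointwise : ∀ x ∈ popularDiffs C τ,
      (τ : ℝ) ^ 2 * #B ^ 4 ≤ (diffCount P x : ℝ) ^ 2 * (16 * γ x : ℕ) := fun x hx => by
    have hτx := mem_popularDiffs.1 hx
    have hle : τ ^ 2 * #B ^ 4 ≤ diffCount P x ^ 2 * (16 * γ x) :=
      calc τ ^ 2 * #B ^ 4 ≤ diffCount C x ^ 2 * #B ^ 4 := by gcongr
        _ ≤ 16 * diffCount P x ^ 2 * γ x := sq_diffCount_mul_pow_four_card_le hC x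
        _ = _ := by ring
    exact_mod_cast hle
  have hmoment : ∑ x ∈ popularDiffs C τ, 16 * γ x ≤ 16 * mixedFourthMoment B C := by
    rw [← mul_sum]
    refine Nat.mul_le_mul_left 16 ((sum_le_sum_of_subset (subset_univ _)).trans_eq ?_)
    simp only [hγ, sum_sum_sum_diffReps_sub C fun t => diffCount B t ^ 2, mixedFourthMoment,
      mul_comm]
  have : (0 : ℝ) < #B := Nat.cast_pos.2 hB.card_pos
  have : (0 : ℝ) < τ := Nat.cast_pos.2 hτ
  calc (#(popularDiffs C τ) : ℝ) ^ 3 * (τ ^ 2 * #B ^ 4)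
      ≤ (∑ x ∈ popularDiffs C τ, (diffCount P x : ℝ)) ^ 2 *
          ∑ x ∈ popularDiffs C τ, ((16 * γ x : ℕ) : ℝ) :=
        card_pow_three_mul_le (by positivity) (fun _ _ => Nat.cast_nonneg _) hpointwise
    _ ≤ (∑ x ∈ popularDiffs C τ, (diffCount P x : ℝ)) ^ 2 * (16 * mixedFourthMoment B C) := by
        gcongr
        exact_mod_cast hmoment
    _ = _ := by ring

theorem pow_four_mul_card_pow_four_le {C' : Finset G} {l : ℕ} {q κ : ℝ} (hq : 0 ≤ q) (hκ : 0 ≤ κ)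
    (hB : B.Nonempty) (hC' : C' ⊆ C) (hC'₀ : C'.Nonempty) (hP : ∀ t ∈ P, q ≤ B.addConvolution C t)
    (hl : #C ≤ 2 ^ l)
    (hE : ∀ X : Finset G, #X ≤ 2 ^ (2 * l) → (E[B, X] : ℝ) ≤ κ * √(#X : ℝ) ^ 3)
    (hgood : ∀ c ∈ C', 4 * #{b ∈ B | b + c ∉ P} ≤ #B)
    (hW : weakDiffMoment C ≤ 2 * weakDiffMoment C') :
    q ^ 4 * (#B : ℝ) ^ 4 ≤ 256 * (l + 1) ^ 2 * κ ^ 2 * mixedFourthMoment B C' := by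
  obtain ⟨τ, hτ, hne, hattained⟩ := exists_weakDiffMoment_eq hC'₀
  rw [hattained] at hW
  have hupper := sq_mul_sum_diffCount_le hq hκ hP hl hE
    (card_popularDiffs_le hτ ((card_le_card hC').trans hl)) hW
  have hlower := card_pow_three_mul_sq_mul_le hτ hB hgood
  rw [← Real.sq_sqrt (Nat.cast_nonneg (α := ℝ) #(popularDiffs C' τ))] at hlower
  set R := ∑ x ∈ popularDiffs C' τ, (diffCount P x : ℝ)
  have hd₀ : 0 < √(#(popularDiffs C' τ) : ℝ) := Real.sqrt_pos.2 (Nat.cast_pos.2 hne.card_pos)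
  set d := √(#(popularDiffs C' τ) : ℝ)
  have : 0 ≤ R := sum_nonneg fun _ _ => Nat.cast_nonneg _
  have : (0 : ℝ) < τ := Nat.cast_pos.2 hτ
  refine le_of_mul_le_mul_left ?_ (by positivity : 0 < d ^ 6 * τ ^ 2)
  calc d ^ 6 * τ ^ 2 * (q ^ 4 * (#B : ℝ) ^ 4) = q ^ 4 * ((d ^ 2) ^ 3 * (τ ^ 2 * #B ^ 4)) := by ring
    _ ≤ q ^ 4 * (16 * R ^ 2 * mixedFourthMoment B C') := by gcongr
    _ = 16 * (q ^ 2 * R) ^ 2 * mixedFourthMoment B C' := by ring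
    _ ≤ 16 * (4 * (l + 1) * κ * τ * d ^ 3) ^ 2 * mixedFourthMoment B C' := by gcongr
    _ = _ := by ring

theorem exists_subset_weakDiffMoment_stable {l : ℕ} (hC : C.Nonempty) (hl : #C ≤ 2 ^ l) :
    ∃ C₀ ⊆ C, #C ≤ 2 * #C₀ ∧ ∀ C' ⊆ C₀, 2 * (8 * (l + 1)) * #(C₀ \ C') ≤ #C₀ →
      C'.Nonempty ∧ weakDiffMoment C₀ ≤ 2 * weakDiffMoment C' := by
  refine exists_subset_stable (n := 8 * (l + 1)) (fun _ => one_le_weakDiffMoment) hC (by omega) ?_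
  calc weakDiffMoment C ≤ #C ^ 7 := weakDiffMoment_le C
    _ ≤ (2 ^ l) ^ 7 := by gcongr
    _ ≤ 2 ^ (8 * (l + 1)) := by
      rw [← pow_mul]
      exact Nat.pow_le_pow_right two_pos (by omega)

theorem card_pow_eight_mul_card_pow_four_le {l : ℕ} {κ : ℝ} (hκ : 0 ≤ κ) (hB : B.Nonempty)
    (hC : C.Nonempty) (hl : #C ≤ 2 ^ l)
    (hE : ∀ X : Finset G, #X ≤ 2 ^ (2 * l) → (E[B, X] : ℝ) ≤ κ * √(#X : ℝ) ^ 3) :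
    (#B : ℝ) ^ 8 * #C ^ 4 ≤
      2 ^ 36 * (l + 1) ^ 6 * #(B + C) ^ 4 * κ ^ 2 * mixedFourthMoment B C := by
  obtain ⟨C₀, hC₀, hhalf, hstable⟩ := exists_subset_weakDiffMoment_stable hC hl
  have hM : (0 : ℝ) < #(B + C) := Nat.cast_pos.2 (hB.add hC).card_pos
  set q : ℝ := #B * #C₀ / (4 * (16 * (l + 1)) * #(B + C)) with hq
  set P : Finset G := {t | q ≤ B.addConvolution C₀ t}
  have hP : ∀ t, t ∈ P ↔ q ≤ B.addConvolution C₀ t := mem_filter_univ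
  set C' := goodTranslates B C₀ P
  have hC' : C' ⊆ C₀ := filter_subset _ _
  have hbad : (16 * (l + 1) : ℝ) * #(C₀ \ C') ≤ #C₀ :=
    mul_card_sdiff_goodTranslates_le (by positivity) hM hB
      (Nat.cast_le.2 (card_le_card (add_subset_add_left hC₀)))
      fun t ht => (not_le.1 fun h => ht ((hP t).2 h)).le
  obtain ⟨hne, hW⟩ := hstable C' hC' (by rw [← mul_assoc]; exact_mod_cast hbad)
  have hmoment : q ^ 4 * (#B : ℝ) ^ 4 ≤ 256 * (l + 1) ^ 2 * κ ^ 2 * mixedFourthMoment B C :=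
    (pow_four_mul_card_pow_four_le (by positivity) hκ hB hC' hne (fun t => (hP t).1)
      ((card_le_card hC₀).trans hl) hE (fun c hc => (mem_filter.1 hc).2) hW).trans <|
        mul_le_mul_of_nonneg_left (Nat.cast_le.2 (mixedFourthMoment_mono (hC'.trans hC₀) B))
          (by positivity)
  have hBC : (#B : ℝ) * #C ≤ 128 * (l + 1) * #(B + C) * q := by
    have : (#C : ℝ) ≤ 2 * #C₀ := by exact_mod_cast hhalf
    calc (#B : ℝ) * #C ≤ #B * (2 * #C₀) := by gcongr
      _ = _ := by
        rw [hq]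
        field_simp
        ring
  calc (#B : ℝ) ^ 8 * #C ^ 4 = (#B * #C) ^ 4 * (#B : ℝ) ^ 4 := by ring
    _ ≤ (128 * (l + 1) * #(B + C) * q) ^ 4 * (#B : ℝ) ^ 4 := by gcongr
    _ = (128 * (l + 1) * #(B + C)) ^ 4 * (q ^ 4 * (#B : ℝ) ^ 4) := by ring
    _ ≤ (128 * (l + 1) * #(B + C)) ^ 4 *
        (256 * (l + 1) ^ 2 * κ ^ 2 * mixedFourthMoment B C) := by gcongr
    _ = _ := by ring

end Combination

/-! ### The two-function bound -/

section Sums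

open scoped Combinatorics.Additive

theorem energyCoeff_mono {M M' : ℝ} (h : M ≤ M') (A B q : ℝ) :
    energyCoeff M A B q ≤ energyCoeff M' A B q := by
  have := Real.sqrt_le_sqrt h
  unfold energyCoeff
  gcongr

section AddCommGroup

variable {G : Type*} [AddCommGroup G] [DecidableEq G] {B C : Finset G} {M κ : ℝ}

theorem sqrt_card_mul_sqrt_card_mul_sqrt_le {q : ℝ} (hq : 0 < q) (hB : B.Nonempty)
    (hC : C.Nonempty) (hM : #(B + C) ≤ M)
    (hE : (E[B, C] : ℝ) ≤ κ * (√(#B : ℝ) ^ 3 * √M / √q) * √(#C : ℝ) ^ 3) :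
    √(#B : ℝ) * √(#C : ℝ) * √q ≤ κ * √M ^ 3 := by
  have hM₀ : 0 ≤ M := (Nat.cast_nonneg _).trans hM
  have henergy : (#B : ℝ) ^ 2 * #C ^ 2 ≤ #(B + C) * E[B, C] := by
    exact_mod_cast le_card_add_mul_addEnergy B C
  have hb := Real.sq_sqrt (Nat.cast_nonneg (α := ℝ) #B)
  have hc := Real.sq_sqrt (Nat.cast_nonneg (α := ℝ) #C)
  have : 0 < √(#B : ℝ) := Real.sqrt_pos.2 (Nat.cast_pos.2 hB.card_pos)
  have : 0 < √(#C : ℝ) := Real.sqrt_pos.2 (Nat.cast_pos.2 hC.card_pos)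
  have : 0 < √q := Real.sqrt_pos.2 hq
  set b := √(#B : ℝ)
  set c := √(#C : ℝ)
  refine le_of_mul_le_mul_left ?_ (by positivity : 0 < b ^ 3 * c ^ 3 / √q)
  calc b ^ 3 * c ^ 3 / √q * (b * c * √q) = (b ^ 2) ^ 2 * (c ^ 2) ^ 2 := by field_simp
    _ ≤ (#(B + C) * E[B, C] : ℝ) := by rwa [hb, hc]
    _ ≤ M * (κ * (b ^ 3 * √M / √q) * c ^ 3) := by gcongr
    _ = √M ^ 2 * (κ * (b ^ 3 * √M / √q) * c ^ 3) := by rw [Real.sq_sqrt hM₀]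
    _ = b ^ 3 * c ^ 3 / √q * (κ * √M ^ 3) := by ring

theorem mul_mul_sq_mixedFourthMoment_le [Fintype G] {a d k : ℝ} (ha : 0 ≤ a) (hd : 0 ≤ d)
    (hB : a * ∑ t, (diffCount B t : ℝ) ^ 4 ≤ k * #B ^ 3)
    (hC : d * ∑ t, (diffCount C t : ℝ) ^ 4 ≤ k * #C ^ 3) :
    a * d * (mixedFourthMoment B C : ℝ) ^ 2 ≤ k ^ 2 * #B ^ 3 * #C ^ 3 := by
  have hmixed : (mixedFourthMoment B C : ℝ) ^ 2 ≤
      (∑ t, (diffCount B t : ℝ) ^ 4) * ∑ t, (diffCount C t : ℝ) ^ 4 := by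
    exact_mod_cast mixedFourthMoment_sq_le B C
  calc a * d * (mixedFourthMoment B C : ℝ) ^ 2
      ≤ a * d * ((∑ t, (diffCount B t : ℝ) ^ 4) * ∑ t, (diffCount C t : ℝ) ^ 4) := by gcongr
    _ = (a * ∑ t, (diffCount B t : ℝ) ^ 4) * (d * ∑ t, (diffCount C t : ℝ) ^ 4) := by ring
    _ ≤ (k * #B ^ 3) * (k * #C ^ 3) := by
        gcongr
        exact (by positivity : 0 ≤ a * ∑ t, (diffCount B t : ℝ) ^ 4).trans hB
    _ = _ := by ring

theorem mul_card_pow_eight_mul_card_pow_four_le [Fintype G] {a : ℝ} {l : ℕ} (ha : 0 < a)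
    (hκ : 0 ≤ κ) (hB : B.Nonempty) (hC : C.Nonempty) (hl : #C ≤ 2 ^ l) (hM : #(B + C) ≤ M)
    (hE : ∀ X : Finset G, #X ≤ 2 ^ (2 * l) →
      (E[B, X] : ℝ) ≤ κ * (√M ^ 3 / √a) * √(#X : ℝ) ^ 3) :
    a * ((#B : ℝ) ^ 8 * #C ^ 4) ≤
      2 ^ 36 * (l + 1) ^ 6 * κ ^ 2 * M ^ 7 * mixedFourthMoment B C := by
  have hM₀ : 0 ≤ M := (Nat.cast_nonneg _).trans hM
  have hsq : a * (√M ^ 3 / √a) ^ 2 = M ^ 3 := by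
    rw [div_pow, Real.sq_sqrt ha.le, mul_div_cancel₀ _ ha.ne', ← pow_mul, mul_comm 3, pow_mul,
      Real.sq_sqrt hM₀]
  calc a * ((#B : ℝ) ^ 8 * #C ^ 4)
      ≤ a * (2 ^ 36 * (l + 1) ^ 6 * #(B + C) ^ 4 * (κ * (√M ^ 3 / √a)) ^ 2 *
          mixedFourthMoment B C) :=
        mul_le_mul_of_nonneg_left
          (card_pow_eight_mul_card_pow_four_le (by positivity) hB hC hl hE) ha.le
    _ ≤ a * (2 ^ 36 * (l + 1) ^ 6 * M ^ 4 * (κ * (√M ^ 3 / √a)) ^ 2 *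
          mixedFourthMoment B C) := by gcongr
    _ = 2 ^ 36 * (l + 1) ^ 6 * M ^ 4 * κ ^ 2 * (a * (√M ^ 3 / √a) ^ 2) *
          mixedFourthMoment B C := by ring
    _ = _ := by
        rw [hsq]
        ring

end AddCommGroup

theorem pow_thirteen_mul_le_of_sqrt_le {a b c d k M q : ℝ} (ha : 0 ≤ a) (hd : 0 ≤ d)
    (hM : 0 ≤ M) (hq : 0 ≤ q) (hab : a ≤ b) (hdc : d ≤ c) (hbq : b ^ 5 ≤ q ^ 3)
    (h : √b * √c * √q ≤ k * √M ^ 3) : b ^ 13 * c ^ 5 * a ^ 3 * d ≤ k ^ 12 * M ^ 18 := by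
  have hb : 0 ≤ b := ha.trans hab
  have hc : 0 ≤ c := hd.trans hdc
  have htwelve {x : ℝ} (hx : 0 ≤ x) : √x ^ 12 = x ^ 6 := by
    rw [pow_mul _ 2 6, Real.sq_sqrt hx]
  calc b ^ 13 * c ^ 5 * a ^ 3 * d ≤ b ^ 13 * c ^ 5 * b ^ 3 * c := by gcongr
    _ = b ^ 6 * c ^ 6 * (b ^ 5) ^ 2 := by ring
    _ ≤ b ^ 6 * c ^ 6 * (q ^ 3) ^ 2 := by gcongr
    _ = (√b * √c * √q) ^ 12 := by
        rw [mul_pow, mul_pow, htwelve hb, htwelve hc, htwelve hq]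
        ring
    _ ≤ (k * √M ^ 3) ^ 12 := by gcongr
    _ = k ^ 12 * (√M ^ 2) ^ 18 := by ring
    _ = k ^ 12 * M ^ 18 := by rw [Real.sq_sqrt hM]

theorem pow_thirteen_mul_le_of_moment_le {a b c d e k₁ k₂ M : ℝ} (hb : 0 < b) (hc : 0 < c)
    (ha : 0 ≤ a) (hd : 0 ≤ d) (h₁ : a * (b ^ 8 * c ^ 4) ≤ k₁ * M ^ 7 * e)
    (h₂ : a * d * e ^ 2 ≤ (k₂ * M ^ 2) ^ 2 * b ^ 3 * c ^ 3) :
    b ^ 13 * c ^ 5 * a ^ 3 * d ≤ (k₁ * k₂) ^ 2 * M ^ 18 := by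
  refine le_of_mul_le_mul_left ?_ (by positivity : 0 < b ^ 3 * c ^ 3)
  calc b ^ 3 * c ^ 3 * (b ^ 13 * c ^ 5 * a ^ 3 * d)
      = (a * (b ^ 8 * c ^ 4)) ^ 2 * (a * d) := by ring
    _ ≤ (k₁ * M ^ 7 * e) ^ 2 * (a * d) := by gcongr
    _ = k₁ ^ 2 * M ^ 14 * (a * d * e ^ 2) := by ring
    _ ≤ k₁ ^ 2 * M ^ 14 * ((k₂ * M ^ 2) ^ 2 * b ^ 3 * c ^ 3) := by gcongr
    _ = _ := by ring

variable {p l : ℕ} [Fact p.Prime] {A B C D S T : Finset (ZMod p)} {g₁ h₁ g₂ h₂ : ZMod p → ZMod p}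
  {M : ℝ}

theorem addEnergy_le_of_energyCoeff_le (hg₁ : ∀ a ∈ A, g₁ a ≠ 0) (hinj₁ : Set.InjOn g₁ A)
    (hS : ∀ a ∈ A, ∀ b ∈ B, g₁ a * (h₁ a + b) ∈ S) (hA : A.Nonempty) (hAB : #A ≤ #B)
    (hSM : #S ≤ M) (hM : M ≤ 2 ^ l) {u : ℝ} (hu : energyCoeff M #A #B p ≤ 2 * u)
    {X : Finset (ZMod p)} (hX : #X ≤ 2 ^ (2 * l)) :
    (E[B, X] : ℝ) ≤ 600000 * (4 * l + 1) * u * √(#X : ℝ) ^ 3 :=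
  calc (E[B, X] : ℝ) ≤ 300000 * (4 * l + 1) * energyCoeff #S #A #B p * √(#X : ℝ) ^ 3 :=
        addEnergy_le_energyCoeff hg₁ hinj₁ hS hA hAB (by exact_mod_cast hSM.trans hM) hX
    _ ≤ 300000 * (4 * l + 1) * (2 * u) * √(#X : ℝ) ^ 3 := by
        gcongr
        exact (energyCoeff_mono hSM ..).trans hu
    _ = _ := by ring

theorem card_mul_sum_diffCount_pow_four_le_of_card_le (hg₁ : ∀ a ∈ A, g₁ a ≠ 0)
    (hinj₁ : Set.InjOn g₁ A) (hS : ∀ a ∈ A, ∀ b ∈ B, g₁ a * (h₁ a + b) ∈ S) (hA : A.Nonempty)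
    (hAB : #A ≤ #B) (hB : #B ^ 5 ≤ p ^ 3) (hSM : #S ≤ M) (hM : M ≤ 2 ^ l) :
    (#A : ℝ) * ∑ t, (diffCount B t : ℝ) ^ 4 ≤
      16 * 400000 ^ 2 * (4 * l + 1) ^ 3 * M ^ 2 * #B ^ 3 := by
  have hBl : #B ≤ 2 ^ l := by
    exact_mod_cast (Nat.cast_le.2 (card_le_card_of_mul_add_mem hg₁ hS hA)).trans (hSM.trans hM)
  exact (card_mul_sum_diffCount_pow_four_le hg₁ hinj₁ hS hA hAB hB hBl).trans (by gcongr)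

theorem card_pow_thirteen_mul_le (hg₁ : ∀ a ∈ A, g₁ a ≠ 0) (hinj₁ : Set.InjOn g₁ A)
    (hS : ∀ a ∈ A, ∀ b ∈ B, g₁ a * (h₁ a + b) ∈ S) (hg₂ : ∀ d ∈ D, g₂ d ≠ 0)
    (hinj₂ : Set.InjOn g₂ D) (hT : ∀ d ∈ D, ∀ c ∈ C, g₂ d * (h₂ d + c) ∈ T) (hA : A.Nonempty)
    (hD : D.Nonempty) (hAB : #A ≤ #B) (hDC : #D ≤ #C) (hB : #B ^ 5 ≤ p ^ 3) (hC : #C ^ 5 ≤ p ^ 3)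
    (hSM : #S ≤ M) (hTM : #T ≤ M) (hBCM : #(B + C) ≤ M) (hM : M ≤ 2 ^ l) :
    (#B : ℝ) ^ 13 * #C ^ 5 * #A ^ 3 * #D ≤ 10 ^ 70 * (4 * l + 1) ^ 22 * M ^ 18 := by
  have hM₀ : 0 ≤ M := (Nat.cast_nonneg _).trans hSM
  have hB₀ : B.Nonempty := card_pos.1 (hA.card_pos.trans_le hAB)
  have hC₀ : C.Nonempty := card_pos.1 (hD.card_pos.trans_le hDC)
  have hCl : #C ≤ 2 ^ l := by
    exact_mod_cast (Nat.cast_le.2 (card_le_card_of_mul_add_mem hg₂ hT hD)).trans (hTM.trans hM)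
  have hΛ : (l + 1 : ℝ) ≤ 4 * l + 1 := by linarith [Nat.cast_nonneg (α := ℝ) l]
  have hΛ₁ : (1 : ℝ) ≤ 4 * l + 1 := by linarith [Nat.cast_nonneg (α := ℝ) l]
  have henergy {u : ℝ} (hu : energyCoeff M #A #B p ≤ 2 * u) (X : Finset (ZMod p))
      (hX : #X ≤ 2 ^ (2 * l)) : (E[B, X] : ℝ) ≤ 600000 * (4 * l + 1) * u * √(#X : ℝ) ^ 3 :=
    addEnergy_le_of_energyCoeff_le hg₁ hinj₁ hS hA hAB hSM hM hu hX
  rcases le_total (√M ^ 3 / √(#A : ℝ)) (√(#B : ℝ) ^ 3 * √M / √(p : ℝ)) with hle | hle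
  · have hsqrt := sqrt_card_mul_sqrt_card_mul_sqrt_le
      (Nat.cast_pos.2 (Fact.out : p.Prime).pos) hB₀ hC₀ hBCM
      (henergy (by unfold energyCoeff; linarith) C
        (hCl.trans (Nat.pow_le_pow_right two_pos (by omega))))
    calc _ ≤ (600000 * (4 * l + 1)) ^ 12 * M ^ 18 :=
          pow_thirteen_mul_le_of_sqrt_le (Nat.cast_nonneg _) (Nat.cast_nonneg _) hM₀
            (Nat.cast_nonneg _) (Nat.cast_le.2 hAB) (Nat.cast_le.2 hDC) (by exact_mod_cast hB)
            hsqrt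
      _ = 600000 ^ 12 * (4 * l + 1) ^ 12 * M ^ 18 := by rw [mul_pow]
      _ ≤ 10 ^ 70 * (4 * l + 1) ^ 22 * M ^ 18 := by
          gcongr ?_ * ?_ * _
          · norm_num
          · exact pow_le_pow_right₀ hΛ₁ (by norm_num)
  · have hfour := mul_card_pow_eight_mul_card_pow_four_le (Nat.cast_pos.2 hA.card_pos)
      (by positivity) hB₀ hC₀ hCl hBCM (henergy (by unfold energyCoeff; linarith))
    have hmixed := mul_mul_sq_mixedFourthMoment_le (Nat.cast_nonneg #A) (Nat.cast_nonneg #D)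
      (card_mul_sum_diffCount_pow_four_le_of_card_le hg₁ hinj₁ hS hA hAB hB hSM hM)
      (card_mul_sum_diffCount_pow_four_le_of_card_le hg₂ hinj₂ hT hD hDC hC hTM hM)
    calc _ ≤ (2 ^ 36 * (l + 1) ^ 6 * (600000 * (4 * l + 1)) ^ 2 *
          (16 * 400000 ^ 2 * (4 * l + 1) ^ 3)) ^ 2 * M ^ 18 :=
          pow_thirteen_mul_le_of_moment_le (Nat.cast_pos.2 hB₀.card_pos)
            (Nat.cast_pos.2 hC₀.card_pos) (Nat.cast_nonneg _) (Nat.cast_nonneg _) hfour hmixed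
      _ ≤ (2 ^ 36 * (4 * l + 1) ^ 6 * (600000 * (4 * l + 1)) ^ 2 *
          (16 * 400000 ^ 2 * (4 * l + 1) ^ 3)) ^ 2 * M ^ 18 := by gcongr
      _ = (2 ^ 36 * 600000 ^ 2 * (16 * 400000 ^ 2)) ^ 2 * (4 * l + 1) ^ 22 * M ^ 18 := by ring
      _ ≤ 10 ^ 70 * (4 * l + 1) ^ 22 * M ^ 18 := by
          gcongr ?_ * _ * _
          norm_num

end Sums

theorem exists_subset_injOn_card_le {α β : Type*} [DecidableEq β] {f : α → β} {A : Finset α}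
    {m : ℕ} (hm : ∀ t, #{a ∈ A | f a = t} ≤ m) :
    ∃ A' ⊆ A, Set.InjOn f A' ∧ #A ≤ m * #A' := by
  obtain ⟨A', hA', hinj, himage⟩ := exists_subset_injOn_image_eq_of_surjOn (f := f) (A : Set α)
    (A.image f) (by rw [coe_image]; exact Set.surjOn_image f A)
  refine ⟨A', coe_subset.1 hA', hinj, ?_⟩
  rw [← card_image_of_injOn hinj, himage]
  exact card_le_mul_card_image A m fun t _ => hm t

theorem pos_of_card_fiber_le {α β : Type*} [DecidableEq β] {f : α → β} {A : Finset α} {m : ℕ}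
    (hA : A.Nonempty) (hm : ∀ t, #{a ∈ A | f a = t} ≤ m) : 0 < m := by
  obtain ⟨a, ha⟩ := hA
  have hmem : a ∈ {x ∈ A | f x = f a} := mem_filter.2 ⟨ha, rfl⟩
  exact (card_pos.2 ⟨a, hmem⟩).trans_le (hm (f a))

theorem pow_five_le_of_le_rpow {b n : ℕ} (h : (b : ℝ) ≤ (n : ℝ) ^ (3 / 5 : ℝ)) :
    b ^ 5 ≤ n ^ 3 := by
  suffices (b : ℝ) ^ 5 ≤ (n : ℝ) ^ 3 by exact_mod_cast this
  calc (b : ℝ) ^ 5 ≤ ((n : ℝ) ^ (3 / 5 : ℝ)) ^ 5 := by gcongr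
    _ = (n : ℝ) ^ 3 := by
        rw [← Real.rpow_mul_natCast n.cast_nonneg]
        norm_num

theorem rpow_pow_eighteen {z e : ℝ} {n : ℕ} (hz : 0 ≤ z) (he : e * 18 = n) :
    (z ^ e) ^ 18 = z ^ n := by
  rw [← Real.rpow_mul_natCast hz, Nat.cast_ofNat, he, Real.rpow_natCast]

theorem rpow_mul_div_le_of_pow_le {a b c d L m₁ m₂ M : ℝ} (ha : 0 ≤ a) (hb : 0 ≤ b) (hc : 0 ≤ c)
    (hd : 0 ≤ d) (hL : 0 < L) (hm₁ : 0 < m₁) (hm₂ : 0 < m₂) (hM : 0 ≤ M)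
    (h : b ^ 13 * c ^ 5 * a ^ 3 * d ≤ 10 ^ 108 * L ^ 22 * (m₁ ^ 3 * m₂) * M ^ 18) :
    1 / 10 ^ 6 * L ^ (-(11 / 9) : ℝ) *
        (c ^ (5 / 18 : ℝ) * b ^ (13 / 18 : ℝ) * a ^ (1 / 6 : ℝ) * d ^ (1 / 18 : ℝ)) /
      (m₁ ^ (1 / 6 : ℝ) * m₂ ^ (1 / 18 : ℝ)) ≤ M := by
  rw [div_le_iff₀ (by positivity), Real.rpow_neg hL.le, one_div, ← mul_inv,
    inv_mul_le_iff₀ (by positivity)]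
  refine le_of_pow_le_pow_left₀ (n := 18) (by norm_num) (by positivity) ?_
  simp only [mul_pow]
  rw [rpow_pow_eighteen (n := 5) hc (by norm_num), rpow_pow_eighteen (n := 13) hb (by norm_num),
    rpow_pow_eighteen (n := 3) ha (by norm_num), rpow_pow_eighteen (n := 1) hd (by norm_num),
    rpow_pow_eighteen (n := 22) hL.le (by norm_num),
    rpow_pow_eighteen (n := 3) hm₁.le (by norm_num),
    rpow_pow_eighteen (n := 1) hm₂.le (by norm_num)]
  linarith

theorem natLog_le_log_two_mul {b : ℕ} (hb : 1 ≤ b) :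
    8 * (Nat.log 2 b : ℝ) + 9 ≤ 18 * Real.log (2 * b) := by
  have : (1 : ℝ) ≤ b := Nat.one_le_cast.2 hb
  have hlog : (Nat.log 2 b : ℝ) * Real.log 2 ≤ Real.log b := by
    rw [← Real.log_pow]
    exact Real.log_le_log (by positivity) (by exact_mod_cast Nat.pow_log_le_self 2 (by omega))
  rw [Real.log_mul two_ne_zero (by positivity)]
  nlinarith [Real.log_two_gt_d9, Nat.cast_nonneg (α := ℝ) (Nat.log 2 b)]

theorem log_two_mul_pos {b : ℕ} (hb : 1 ≤ b) : 0 < Real.log (2 * b) := by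
  have : (1 : ℝ) ≤ b := Nat.one_le_cast.2 hb
  exact Real.log_pos (by linarith)

theorem pow_thirteen_mul_le_of_sq_le {a b c d M : ℝ} (ha : 0 ≤ a) (hd : 0 ≤ d) (hab : a ≤ b)
    (hdc : d ≤ c) (hbM : b ^ 2 ≤ M) (hcM : c ≤ M) (hM : 1 ≤ M) :
    b ^ 13 * c ^ 5 * a ^ 3 * d ≤ M ^ 18 := by
  have hb : 0 ≤ b := ha.trans hab
  have hc : 0 ≤ c := hd.trans hdc
  calc b ^ 13 * c ^ 5 * a ^ 3 * d ≤ b ^ 13 * c ^ 5 * b ^ 3 * c := by gcongr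
    _ = (b ^ 2) ^ 8 * c ^ 6 := by ring
    _ ≤ M ^ 8 * M ^ 6 := by gcongr
    _ = M ^ 14 := by ring
    _ ≤ M ^ 18 := pow_le_pow_right₀ hM (by norm_num)

section ZMod

variable {p : ℕ} [Fact p.Prime] {A B C D S T : Finset (ZMod p)} {g₁ h₁ g₂ h₂ : ZMod p → ZMod p}
  {M : ℝ}

theorem card_pow_thirteen_mul_le_log (hg₁ : ∀ a ∈ A, g₁ a ≠ 0) (hinj₁ : Set.InjOn g₁ A)
    (hS : ∀ a ∈ A, ∀ b ∈ B, g₁ a * (h₁ a + b) ∈ S) (hg₂ : ∀ d ∈ D, g₂ d ≠ 0)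
    (hinj₂ : Set.InjOn g₂ D) (hT : ∀ d ∈ D, ∀ c ∈ C, g₂ d * (h₂ d + c) ∈ T) (hA : A.Nonempty)
    (hD : D.Nonempty) (hAB : #A ≤ #B) (hDC : #D ≤ #C) (hB : #B ^ 5 ≤ p ^ 3) (hC : #C ^ 5 ≤ p ^ 3)
    (hSM : #S ≤ M) (hTM : #T ≤ M) (hBCM : #(B + C) ≤ M) :
    (#B : ℝ) ^ 13 * #C ^ 5 * #A ^ 3 * #D ≤ 10 ^ 70 * (18 * Real.log (2 * #B)) ^ 22 * M ^ 18 := by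
  have hB₀ : 0 < #B := hA.card_pos.trans_le hAB
  have hlog := natLog_le_log_two_mul hB₀
  rcases le_or_gt ((#B : ℝ) ^ 2) M with hle | hlt
  · have hCM : (#C : ℝ) ≤ M :=
      (Nat.cast_le.2 (card_le_card_add_left (card_pos.1 hB₀))).trans hBCM
    have hM : (1 : ℝ) ≤ M :=
      (Nat.one_le_cast.2 (hD.card_pos.trans_le hDC)).trans hCM
    have hL : (1 : ℝ) ≤ 18 * Real.log (2 * #B) := by
      linarith [Nat.cast_nonneg (α := ℝ) (Nat.log 2 #B)]
    calc _ ≤ M ^ 18 := pow_thirteen_mul_le_of_sq_le (Nat.cast_nonneg _) (Nat.cast_nonneg _)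
          (Nat.cast_le.2 hAB) (Nat.cast_le.2 hDC) hle hCM hM
      _ ≤ 10 ^ 70 * (18 * Real.log (2 * #B)) ^ 22 * M ^ 18 :=
          le_mul_of_one_le_left (by positivity)
            (one_le_mul_of_one_le_of_one_le (by norm_num) (one_le_pow₀ hL))
  · have hM : M ≤ 2 ^ (2 * (Nat.log 2 #B + 1)) := by
      rw [mul_comm, pow_mul]
      refine hlt.le.trans (pow_le_pow_left₀ (Nat.cast_nonneg _) ?_ 2)
      exact_mod_cast (Nat.lt_pow_succ_log_self one_lt_two #B).le
    refine (card_pow_thirteen_mul_le hg₁ hinj₁ hS hg₂ hinj₂ hT hA hD hAB hDC hB hC hSM hTM hBCM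
      hM).trans ?_
    have : 0 ≤ M := (Nat.cast_nonneg _).trans hSM
    gcongr
    push_cast
    linarith

theorem card_pow_thirteen_mul_le_of_card_fiber_le {m₁ m₂ : ℕ} (hg₁ : ∀ a ∈ A, g₁ a ≠ 0)
    (hm₁ : ∀ t, #{a ∈ A | g₁ a = t} ≤ m₁) (hS : ∀ a ∈ A, ∀ b ∈ B, g₁ a * (h₁ a + b) ∈ S)
    (hg₂ : ∀ d ∈ D, g₂ d ≠ 0) (hm₂ : ∀ t, #{d ∈ D | g₂ d = t} ≤ m₂)
    (hT : ∀ d ∈ D, ∀ c ∈ C, g₂ d * (h₂ d + c) ∈ T) (hA : A.Nonempty) (hD : D.Nonempty)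
    (hAB : #A ≤ #B) (hDC : #D ≤ #C) (hB : #B ^ 5 ≤ p ^ 3) (hC : #C ^ 5 ≤ p ^ 3)
    (hSM : #S ≤ M) (hTM : #T ≤ M) (hBCM : #(B + C) ≤ M) :
    (#B : ℝ) ^ 13 * #C ^ 5 * #A ^ 3 * #D ≤
      10 ^ 70 * (18 * Real.log (2 * #B)) ^ 22 * (m₁ ^ 3 * m₂) * M ^ 18 := by
  obtain ⟨A', hA', hinj₁, hcard₁⟩ := exists_subset_injOn_card_le hm₁
  obtain ⟨D', hD', hinj₂, hcard₂⟩ := exists_subset_injOn_card_le hm₂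
  have hA'₀ : A'.Nonempty :=
    card_pos.1 (pos_of_mul_pos_right (hA.card_pos.trans_le hcard₁) m₁.zero_le)
  have hD'₀ : D'.Nonempty :=
    card_pos.1 (pos_of_mul_pos_right (hD.card_pos.trans_le hcard₂) m₂.zero_le)
  have hinjective := card_pow_thirteen_mul_le_log (fun a ha => hg₁ a (hA' ha)) hinj₁
    (fun a ha => hS a (hA' ha)) (fun d hd => hg₂ d (hD' hd)) hinj₂ (fun d hd => hT d (hD' hd))
    hA'₀ hD'₀ ((card_le_card hA').trans hAB) ((card_le_card hD').trans hDC) hB hC hSM hTM hBCM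
  have : (#A : ℝ) ≤ m₁ * #A' := by exact_mod_cast hcard₁
  have : (#D : ℝ) ≤ m₂ * #D' := by exact_mod_cast hcard₂
  calc (#B : ℝ) ^ 13 * #C ^ 5 * #A ^ 3 * #D
      ≤ (#B : ℝ) ^ 13 * #C ^ 5 * (m₁ * #A') ^ 3 * (m₂ * #D') := by gcongr
    _ = m₁ ^ 3 * m₂ * ((#B : ℝ) ^ 13 * #C ^ 5 * #A' ^ 3 * #D') := by ring
    _ ≤ m₁ ^ 3 * m₂ * (10 ^ 70 * (18 * Real.log (2 * #B)) ^ 22 * M ^ 18) := by gcongr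
    _ = _ := by ring

theorem card_filter_le_mu {g : ZMod p → ZMod p} (hg : ∀ x, x ≠ 0 → g x ≠ 0) (hA : 0 ∉ A)
    (t : ZMod p) : #{a ∈ A | g a = t} ≤ mu g := by
  have hne : ∀ a ∈ A, a ≠ 0 := fun a ha h => hA (h ▸ ha)
  rcases eq_or_ne t 0 with rfl | ht
  · rw [filter_false_of_mem fun a ha => hg a (hne a ha), card_empty]
    exact Nat.zero_le _
  calc #{a ∈ A | g a = t} ≤ #{x | x ≠ 0 ∧ g x = t} := card_le_card fun a ha => by
        rw [mem_filter] at ha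
        exact mem_filter_univ _ |>.2 ⟨hne a ha.1, ha.2⟩
    _ ≤ mu g := le_sup (f := fun t => #{x | x ≠ 0 ∧ g x = t}) ((mem_filter_univ t).2 ht)

end ZMod

end TwoFunctionSum

theorem two_function_sum_bound_general {p : ℕ} [Fact p.Prime] {g₁ h₁ g₂ h₂ : ZMod p → ZMod p}
    {A B C D : Finset (ZMod p)} {m₁ m₂ : ℕ} (hA : A.Nonempty) (hD : D.Nonempty)
    (hg₁ : ∀ a ∈ A, g₁ a ≠ 0) (hg₂ : ∀ d ∈ D, g₂ d ≠ 0) (hm₁ : ∀ t, #{a ∈ A | g₁ a = t} ≤ m₁)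
    (hm₂ : ∀ t, #{d ∈ D | g₂ d = t} ≤ m₂) (hAB : #A ≤ #B) (hB : (#B : ℝ) ≤ (p : ℝ) ^ (3 / 5 : ℝ))
    (hDC : #D ≤ #C) (hC : (#C : ℝ) ≤ (p : ℝ) ^ (3 / 5 : ℝ)) :
    1 / 10 ^ 6 * Real.log (2 * #B) ^ (-(11 / 9) : ℝ) *
        ((#C : ℝ) ^ (5 / 18 : ℝ) * (#B : ℝ) ^ (13 / 18 : ℝ) * (#A : ℝ) ^ (1 / 6 : ℝ) *
          (#D : ℝ) ^ (1 / 18 : ℝ)) /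
      ((m₁ : ℝ) ^ (1 / 6 : ℝ) * (m₂ : ℝ) ^ (1 / 18 : ℝ)) ≤
    max (#(image₂ (fun x y => g₁ x * (h₁ x + y)) A B) : ℝ)
      (max #(image₂ (fun x y => g₂ x * (h₂ x + y)) D C) #(B + C)) := by
  have hL : 0 < Real.log (2 * #B) :=
    TwoFunctionSum.log_two_mul_pos (hA.card_pos.trans_le hAB)
  refine TwoFunctionSum.rpow_mul_div_le_of_pow_le (Nat.cast_nonneg _) (Nat.cast_nonneg _)
    (Nat.cast_nonneg _) (Nat.cast_nonneg _) hL
    (Nat.cast_pos.2 (TwoFunctionSum.pos_of_card_fiber_le hA hm₁))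
    (Nat.cast_pos.2 (TwoFunctionSum.pos_of_card_fiber_le hD hm₂))
    (le_max_of_le_left (Nat.cast_nonneg _)) ?_
  refine (TwoFunctionSum.card_pow_thirteen_mul_le_of_card_fiber_le hg₁ hm₁
    (fun a ha b hb => mem_image₂_of_mem (f := fun x y => g₁ x * (h₁ x + y)) ha hb) hg₂ hm₂
    (fun d hd c hc => mem_image₂_of_mem (f := fun x y => g₂ x * (h₂ x + y)) hd hc) hA hD hAB hDC
    (TwoFunctionSum.pow_five_le_of_le_rpow hB) (TwoFunctionSum.pow_five_le_of_le_rpow hC)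
    (le_max_left _ _) ((le_max_left _ _).trans (le_max_right _ _))
    ((le_max_right _ _).trans (le_max_right _ _))).trans ?_
  have hconst : 10 ^ 70 * (18 * Real.log (2 * #B)) ^ 22 ≤ 10 ^ 108 * Real.log (2 * #B) ^ 22 := by
    rw [mul_pow, ← mul_assoc]
    gcongr
    norm_num
  gcongr

theorem two_function_sum_bound :
    ∃ C > (0:ℝ), ∃ c ≥ (0:ℝ),
      ∀ (p : ℕ) [Fact p.Prime], p ≠ 2 →
      ∀ g₁ h₁ g₂ h₂ : ZMod p → ZMod p,
      (∀ x : ZMod p, x ≠ 0 → g₁ x ≠ 0) → (∀ x : ZMod p, x ≠ 0 → h₁ x ≠ 0) →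
      (∀ x : ZMod p, x ≠ 0 → g₂ x ≠ 0) → (∀ x : ZMod p, x ≠ 0 → h₂ x ≠ 0) →
      mu g₁ = mu g₂ →
      ∀ A B Cs D : Finset (ZMod p),
      A.Nonempty → B.Nonempty → Cs.Nonempty → D.Nonempty →
      (0:ZMod p) ∉ A → (0:ZMod p) ∉ B → (0:ZMod p) ∉ Cs → (0:ZMod p) ∉ D →
      A.card ≤ B.card → (B.card : ℝ) ≤ (p:ℝ) ^ ((3:ℝ)/5) →
      D.card ≤ Cs.card → (Cs.card : ℝ) ≤ (p:ℝ) ^ ((3:ℝ)/5) →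
      C * (Real.log (2 * (B.card:ℝ))) ^ (-c) *
          ((Cs.card:ℝ) ^ ((5:ℝ)/18) * (B.card:ℝ) ^ ((13:ℝ)/18) *
           (A.card:ℝ) ^ ((1:ℝ)/6) * (D.card:ℝ) ^ ((1:ℝ)/18)) /
          ((mu g₁ : ℕ) : ℝ) ^ ((8:ℝ)/9) ≤
        max ((Finset.image₂ (fun x y => g₁ x * (h₁ x + y)) A B).card : ℝ)
          (max ((Finset.image₂ (fun x y => g₂ x * (h₂ x + y)) D Cs).card : ℝ)
            ((B + Cs).card : ℝ)) := by
  refine ⟨1 / 10 ^ 6, by norm_num, 11 / 9, by norm_num, ?_⟩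
  intro p _ _ g₁ h₁ g₂ h₂ hg₁ _ hg₂ _ hmu A B Cs D hA hB _ hD hA₀ _ _ hD₀ hAB hBp hDC hCp
  have hfiber₁ := TwoFunctionSum.card_filter_le_mu hg₁ hA₀
  have hfiber₂ := TwoFunctionSum.card_filter_le_mu hg₂ hD₀
  have hbound := two_function_sum_bound_general (h₁ := h₁) (h₂ := h₂) (m₁ := mu g₁) (m₂ := mu g₁)
    hA hD (fun a ha => hg₁ a (ne_of_mem_of_not_mem ha hA₀))
    (fun d hd => hg₂ d (ne_of_mem_of_not_mem hd hD₀)) hfiber₁ (hmu ▸ hfiber₂) hAB hBp hDC hCp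
  refine le_trans ?_ hbound
  have hm : (1 : ℝ) ≤ mu g₁ := Nat.one_le_cast.2 (TwoFunctionSum.pos_of_card_fiber_le hA hfiber₁)
  have : 0 < Real.log (2 * #B) := TwoFunctionSum.log_two_mul_pos hB.card_pos
  gcongr
  rw [← Real.rpow_add (by positivity)]
  exact Real.rpow_le_rpow_of_exponent_le hm (by norm_num)
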